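/- arXiv:math/9805081 — 4 statements merged into one kernel-verified Lean document; each statement's English description precedes it below -/
import Mathlib

section
/- Let g, h : (0,∞) → [0,ω₁) be left-continuous non-increasing functions whose ranges are finite sets of ordinals, such that there exists A < ∞ with g(t) = h(t) = 0 for all t > A, and g(t) ≤ h(t) for all t. Let ε > 0 and let γ be an ordinal with 0 < γ ≤ g(ε). If G and H are the non-increasing left-continuous rearrangements of g − γ·1_{(0,ε]} and h − γ·1_{(0,ε]} respectively, then G(t) ≤ H(t) for all t > 0, and λ({t : g(t)+1 ≤ h(t)}) ≤ λ({t : G(t)+1 ≤ H(t)}). -/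
open MeasureTheory Set Ordinal Filter
open scoped Classical

/-- `g` is non-increasing on `(0,∞)`. -/
def NonIncr (g : ℝ → Ordinal) : Prop := ∀ s t : ℝ, 0 < s → s ≤ t → g t ≤ g s

/-- `g` is left continuous on `(0,∞)`; for non-increasing ordinal-valued
functions this is equivalent to being locally constant from the left. -/
def LeftCont (g : ℝ → Ordinal) : Prop :=
  ∀ t : ℝ, 0 < t → ∃ δ > 0, ∀ s : ℝ, t - δ < s → s ≤ t → g s = g t

/-- `g` has finite range on `(0,∞)`. -/
def FiniteRange (g : ℝ → Ordinal) : Prop := (g '' Set.Ioi (0:ℝ)).Finite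

/-- `g` takes values in `[0,ω₁)`, the countable ordinals. -/
def CountableValued (g : ℝ → Ordinal) : Prop := ∀ t : ℝ, 0 < t → g t < ω₁

/-- `g` vanishes beyond `A`. -/
def VanishesBeyond (g : ℝ → Ordinal) (A : ℝ) : Prop := ∀ t : ℝ, A < t → g t = 0

/-- The level set `{t ∈ (0,∞) : g t = α}`. -/
def lev (g : ℝ → Ordinal) (α : Ordinal) : Set ℝ := {t | 0 < t ∧ g t = α}

/-- `G` is the non-increasing left-continuous rearrangement of `u`: it is
non-increasing, left continuous, and each nonzero level set has the same
Lebesgue measure as that of `u`. -/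
def IsRearrangement (G u : ℝ → Ordinal) : Prop :=
  NonIncr G ∧ LeftCont G ∧ ∀ α : Ordinal, 0 < α → volume (lev G α) = volume (lev u α)

/-- The function `g − γ·1_I` (pointwise ordinal subtraction on `I`). -/
noncomputable def subInd (g : ℝ → Ordinal) (γ : Ordinal) (I : Set ℝ) : ℝ → Ordinal :=
  fun t => if t ∈ I then g t - γ else g t

/-- Level sets measurable and finite range. -/
def GoodF (u : ℝ → Ordinal) : Prop := (∀ α, MeasurableSet (lev u α)) ∧ FiniteRange u

/-- The finite set of values. -/
noncomputable def valsF {u : ℝ → Ordinal} (hu : GoodF u) : Finset Ordinal :=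
  Set.Finite.toFinset (s := u '' Set.Ioi (0:ℝ)) hu.2

theorem mem_valsF {u : ℝ → Ordinal} (hu : GoodF u) (x : Ordinal) :
    x ∈ valsF hu ↔ x ∈ u '' Set.Ioi (0:ℝ) := Set.Finite.mem_toFinset _

theorem lev_meas_of_nonIncr {g : ℝ → Ordinal} (hg : NonIncr g) (α : Ordinal) :
    MeasurableSet (lev g α) := by
  apply Set.OrdConnected.measurableSet
  constructor
  rintro x ⟨hx, hxa⟩ y ⟨hy, hya⟩ z ⟨hz1, hz2⟩
  have hz : 0 < z := lt_of_lt_of_le hx hz1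
  refine ⟨hz, le_antisymm ?_ ?_⟩
  · rw [← hxa]; exact hg _ _ hx hz1
  · rw [← hya]; exact hg _ _ hz hz2

theorem good_union {u : ℝ → Ordinal} (hu : GoodF u) (P : Ordinal → Prop) :
    {t : ℝ | 0 < t ∧ P (u t)} = ⋃ β ∈ (valsF hu).filter P, lev u β := by
  ext t
  simp only [mem_ofPred_eq, mem_iUnion, Finset.mem_filter, mem_valsF, lev,
    exists_prop]
  constructor
  · rintro ⟨h0, hp⟩
    exact ⟨u t, ⟨⟨t, h0, rfl⟩, hp⟩, h0, rfl⟩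
  · rintro ⟨β, ⟨_, hp⟩, h0, rfl⟩
    exact ⟨h0, hp⟩

theorem good_meas {u : ℝ → Ordinal} (hu : GoodF u) (P : Ordinal → Prop) :
    MeasurableSet {t : ℝ | 0 < t ∧ P (u t)} := by
  rw [good_union hu]
  exact Finset.measurableSet_biUnion _ (fun β _ => hu.1 β)

theorem lev_disj (u : ℝ → Ordinal) {α β : Ordinal} (h : α ≠ β) :
    Disjoint (lev u α) (lev u β) := by
  rw [Set.disjoint_left]
  rintro t ⟨_, h1⟩ ⟨_, h2⟩
  exact h (h1.symm.trans h2)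

theorem good_vol {u : ℝ → Ordinal} (hu : GoodF u) (P : Ordinal → Prop) (R : Finset Ordinal)
    (hR : (valsF hu) ⊆ R) :
    volume {t : ℝ | 0 < t ∧ P (u t)} = ∑ β ∈ R.filter P, volume (lev u β) := by
  rw [good_union hu, measure_biUnion_finset (fun a _ b _ hab => lev_disj u hab)
    (fun β _ => hu.1 β)]
  apply Finset.sum_subset (Finset.filter_subset_filter _ hR)
  intro β hβ hn
  have : lev u β = ∅ := by
    rw [Set.eq_empty_iff_forall_notMem]
    rintro t ⟨h0, rfl⟩
    apply hn
    rw [Finset.mem_filter] at hβ ⊢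
    exact ⟨by rw [mem_valsF]; exact ⟨t, h0, rfl⟩, hβ.2⟩
  rw [this]; simp

theorem rearr_good {G u : ℝ → Ordinal} (hu : GoodF u) (hG : IsRearrangement G u) : GoodF G := by
  refine ⟨lev_meas_of_nonIncr hG.1, ?_⟩
  apply Set.Finite.subset (hu.2.insert 0)
  rintro _ ⟨t, ht, rfl⟩
  by_cases h0 : G t = 0
  · left; exact h0
  right
  have hpos : 0 < G t := pos_iff_ne_zero.mpr h0
  obtain ⟨δ, hδ, hs⟩ := hG.2.1 t ht
  have hsub : Ioc (max (t - δ) 0) t ⊆ lev G (G t) := by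
    rintro s ⟨h1, h2⟩
    exact ⟨lt_of_le_of_lt (le_max_right _ _) h1,
      hs s (lt_of_le_of_lt (le_max_left _ _) h1) h2⟩
  have hv : 0 < volume (lev u (G t)) := by
    rw [← hG.2.2 _ hpos]
    refine lt_of_lt_of_le ?_ (measure_mono hsub)
    rw [Real.volume_Ioc, ENNReal.ofReal_pos]
    have : max (t - δ) 0 < t := max_lt (by linarith) ht
    linarith
  obtain ⟨s, hs0, hs1⟩ := nonempty_of_measure_ne_zero hv.ne'
  exact ⟨s, hs0, hs1⟩

theorem rearr_vol {G u : ℝ → Ordinal} (hu : GoodF u) (hG : IsRearrangement G u)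
    (P : Ordinal → Prop) (hP : ¬ P 0) :
    volume {t : ℝ | 0 < t ∧ P (G t)} = volume {t : ℝ | 0 < t ∧ P (u t)} := by
  have hGG := rearr_good hu hG
  rw [good_vol hu P ((valsF hu) ∪ (valsF hGG)) Finset.subset_union_left,
    good_vol hGG P ((valsF hu) ∪ (valsF hGG)) Finset.subset_union_right]
  apply Finset.sum_congr rfl
  intro β hβ
  apply hG.2.2
  rw [pos_iff_ne_zero]
  rintro rfl
  exact hP (Finset.mem_filter.mp hβ).2

theorem rearr_le {u v G H : ℝ → Ordinal} (hu : GoodF u) (hv : GoodF v)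
    (hle : ∀ t : ℝ, 0 < t → u t ≤ v t) (hG : IsRearrangement G u) (hH : IsRearrangement H v)
    (t : ℝ) (ht : 0 < t) : G t ≤ H t := by
  by_contra hlt
  rw [not_le] at hlt
  have hpos : ¬ (G t ≤ 0) := not_le.mpr (lt_of_le_of_lt (zero_le) hlt)
  have e1 := rearr_vol hu hG (fun x => G t ≤ x) hpos
  have e2 := rearr_vol hv hH (fun x => G t ≤ x) hpos
  have e3 : volume {s : ℝ | 0 < s ∧ G t ≤ u s} ≤ volume {s : ℝ | 0 < s ∧ G t ≤ v s} :=
    measure_mono (fun s hs => ⟨hs.1, hs.2.trans (hle s hs.1)⟩)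
  have e4 : ENNReal.ofReal t ≤ volume {s : ℝ | 0 < s ∧ G t ≤ G s} := by
    have : volume (Ioc 0 t) = ENNReal.ofReal t := by rw [Real.volume_Ioc, _root_.sub_zero]
    rw [← this]
    exact measure_mono (fun s hs => ⟨hs.1, hG.1 _ _ hs.1 hs.2⟩)
  obtain ⟨δ, hδ, hs⟩ := hH.2.1 t ht
  have e5 : volume {s : ℝ | 0 < s ∧ G t ≤ H s} ≤ ENNReal.ofReal (t - δ) := by
    have : volume (Ioc 0 (t - δ)) = ENNReal.ofReal (t - δ) := by rw [Real.volume_Ioc, _root_.sub_zero]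
    rw [← this]
    refine measure_mono (fun s hs' => ⟨hs'.1, ?_⟩)
    by_contra hc
    rw [not_le] at hc
    have hHs : H s ≤ H t := by
      rcases le_total s t with h | h
      · exact (hs s hc h).le
      · exact hH.1 _ _ ht h
    exact absurd (hs'.2.trans hHs) (not_le.mpr hlt)
  have e6 : ENNReal.ofReal (t - δ) < ENNReal.ofReal t :=
    (ENNReal.ofReal_lt_ofReal_iff ht).mpr (by linarith)
  exact absurd (e4.trans (e1.le.trans (e3.trans (e2.ge.trans e5)))) (not_le.mpr e6)

theorem rearr_lev {u v G H : ℝ → Ordinal} (hu : GoodF u) (hv : GoodF v)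
    (hle : ∀ t : ℝ, 0 < t → u t ≤ v t) (hG : IsRearrangement G u) (hH : IsRearrangement H v)
    (hfin : volume {t : ℝ | 0 < t ∧ 0 < v t} ≠ ⊤) (α : Ordinal) (hα : 0 < α) :
    volume (lev G α ∩ lev H α) ≤ volume (lev u α ∩ lev v α) := by
  rcases (lev G α ∩ lev H α).eq_empty_or_nonempty with he | ⟨t, ⟨ht, hGt⟩, _, hHt⟩
  · rw [he]; simp
  have e1 := rearr_vol hu hG (fun x => α ≤ x) (not_le.mpr hα)
  have e2 := rearr_vol hv hH (fun x => α < x) (not_lt.mpr (zero_le))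
  have m2 := good_meas (rearr_good hv hH) (fun x => α < x)
  have hsub : {s : ℝ | 0 < s ∧ α < H s} ⊆ {s : ℝ | 0 < s ∧ α ≤ G s} := by
    rintro s ⟨hs, hs2⟩
    refine ⟨hs, ?_⟩
    rcases le_total s t with h | h
    · rw [← hGt]; exact hG.1 _ _ hs h
    · exact absurd (lt_of_lt_of_le hs2 (hH.1 _ _ ht h)) (by rw [hHt]; exact lt_irrefl _)
  have hf : volume {s : ℝ | 0 < s ∧ α < H s} ≠ ⊤ := by
    rw [e2]
    exact ne_top_of_le_ne_top hfin (measure_mono (fun s hs => ⟨hs.1, hα.trans hs.2⟩))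
  have h1 : lev G α ∩ lev H α ⊆ {s : ℝ | 0 < s ∧ α ≤ G s} \ {s : ℝ | 0 < s ∧ α < H s} := by
    rintro s ⟨⟨hs, hg⟩, _, hh⟩
    exact ⟨⟨hs, hg.ge⟩, fun hc => (hc.2.trans_eq hh).false⟩
  have h2 : {s : ℝ | 0 < s ∧ α ≤ u s} \ {s : ℝ | 0 < s ∧ α < v s} ⊆ lev u α ∩ lev v α := by
    rintro s ⟨⟨hs, hg⟩, hn⟩
    have hva : v s ≤ α := by
      by_contra hc
      exact hn ⟨hs, not_le.mp hc⟩
    have := hle s hs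
    exact ⟨⟨hs, le_antisymm (this.trans hva) hg⟩, hs, le_antisymm hva (hg.trans this)⟩
  calc volume (lev G α ∩ lev H α) ≤ _ := measure_mono h1
    _ = _ := measure_diff hsub m2.nullMeasurableSet hf
    _ = volume {s : ℝ | 0 < s ∧ α ≤ u s} - volume {s : ℝ | 0 < s ∧ α < v s} := by rw [e1, e2]
    _ ≤ _ := le_measure_diff
    _ ≤ _ := measure_mono h2

theorem eq_union {u v : ℝ → Ordinal} (R : Finset Ordinal) (hv : GoodF v)
    (hR : (valsF hv) ⊆ R) :
    {t : ℝ | 0 < t ∧ 0 < v t ∧ u t = v t} =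
      ⋃ β ∈ R.filter (fun x => 0 < x), (lev u β ∩ lev v β) := by
  ext t
  simp only [mem_ofPred_eq, mem_iUnion, Finset.mem_filter, lev, exists_prop, mem_inter_iff]
  constructor
  · rintro ⟨h0, hp, he⟩
    refine ⟨v t, ⟨hR ?_, hp⟩, ⟨h0, he⟩, h0, rfl⟩
    rw [mem_valsF]; exact ⟨t, h0, rfl⟩
  · rintro ⟨β, ⟨_, hp⟩, ⟨h0, he⟩, _, rfl⟩
    exact ⟨h0, hp, he⟩

theorem eq_meas {u v : ℝ → Ordinal} (hu : GoodF u) (hv : GoodF v) :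
    MeasurableSet {t : ℝ | 0 < t ∧ 0 < v t ∧ u t = v t} := by
  rw [eq_union _ hv subset_rfl]
  exact Finset.measurableSet_biUnion _ (fun β _ => (hu.1 β).inter (hv.1 β))

theorem eq_vol {u v : ℝ → Ordinal} (R : Finset Ordinal) (hu : GoodF u) (hv : GoodF v)
    (hR : (valsF hv) ⊆ R) :
    volume {t : ℝ | 0 < t ∧ 0 < v t ∧ u t = v t} =
      ∑ β ∈ R.filter (fun x => 0 < x), volume (lev u β ∩ lev v β) := by
  rw [eq_union R hv hR, measure_biUnion_finset
    (fun a _ b _ hab => (lev_disj u hab).mono inter_subset_left inter_subset_left)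
    (fun β _ => (hu.1 β).inter (hv.1 β))]

theorem split_vol {u v : ℝ → Ordinal} (hu : GoodF u) (hv : GoodF v)
    (hle : ∀ t : ℝ, 0 < t → u t ≤ v t) :
    volume {t : ℝ | 0 < t ∧ 0 < v t ∧ u t = v t} + volume {t : ℝ | 0 < t ∧ u t < v t} =
      volume {t : ℝ | 0 < t ∧ 0 < v t} := by
  rw [← measure_union' _ (eq_meas hu hv)]
  · congr 1
    ext t
    simp only [mem_union, mem_ofPred_eq]
    constructor
    · rintro (⟨a, b, _⟩ | ⟨a, b⟩)
      · exact ⟨a, b⟩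
      · exact ⟨a, lt_of_le_of_lt (zero_le) b⟩
    · rintro ⟨a, b⟩
      rcases (hle t a).eq_or_lt with h | h
      · exact Or.inl ⟨a, b, h⟩
      · exact Or.inr ⟨a, h⟩
  · rw [Set.disjoint_left]
    rintro t ⟨_, _, h⟩ ⟨_, h'⟩
    exact h'.ne h

theorem rearr_lt {u v G H : ℝ → Ordinal} (hu : GoodF u) (hv : GoodF v)
    (hle : ∀ t : ℝ, 0 < t → u t ≤ v t) (hG : IsRearrangement G u) (hH : IsRearrangement H v)
    (hfin : volume {t : ℝ | 0 < t ∧ 0 < v t} ≠ ⊤) :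
    volume {t : ℝ | 0 < t ∧ u t < v t} ≤ volume {t : ℝ | 0 < t ∧ G t < H t} := by
  have hGG := rearr_good hu hG
  have hHH := rearr_good hv hH
  have s1 := split_vol hu hv hle
  have s2 := split_vol hGG hHH (rearr_le hu hv hle hG hH)
  have s3 := rearr_vol hv hH (fun x => 0 < x) (lt_irrefl _)
  have s4 : volume {t : ℝ | 0 < t ∧ 0 < H t ∧ G t = H t} ≤
      volume {t : ℝ | 0 < t ∧ 0 < v t ∧ u t = v t} := by
    rw [eq_vol ((valsF hv) ∪ (valsF hHH)) hu hv Finset.subset_union_left,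
      eq_vol ((valsF hv) ∪ (valsF hHH)) hGG hHH Finset.subset_union_right]
    exact Finset.sum_le_sum (fun β hβ =>
      rearr_lev hu hv hle hG hH hfin β (Finset.mem_filter.mp hβ).2)
  by_contra hc
  rw [not_le] at hc
  have hne : volume {t : ℝ | 0 < t ∧ 0 < H t ∧ G t = H t} ≠ ⊤ := by
    refine ne_top_of_le_ne_top hfin ?_
    rw [← s3]
    exact measure_mono (fun s hs => ⟨hs.1, hs.2.1⟩)
  have := ENNReal.add_lt_add_of_le_of_lt hne s4 hc
  rw [s1, s2, s3] at this
  exact this.false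

theorem subInd_good {g : ℝ → Ordinal} {γ : Ordinal} {ε : ℝ} (hg : NonIncr g)
    (hF : FiniteRange g) (hγ : γ ≤ g ε) : GoodF (subInd g γ (Set.Ioc 0 ε)) := by
  constructor
  · intro α
    have : lev (subInd g γ (Set.Ioc 0 ε)) α =
        (lev g (γ + α) ∩ Ioc 0 ε) ∪ (lev g α \ Ioc 0 ε) := by
      ext t
      by_cases ht : t ∈ Ioc 0 ε
      · have h1 : γ ≤ g t := hγ.trans (hg _ _ ht.1 ht.2)
        simp only [lev, subInd, mem_ofPred_eq, if_true, mem_union, mem_inter_iff, Set.mem_sdiff, ht,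
          not_true, and_true, and_false, or_false]
        refine and_congr_right (fun _ => ⟨?_, ?_⟩)
        · rintro rfl
          exact (Ordinal.add_sub_cancel_of_le h1).symm
        · intro h
          rw [h, Ordinal.add_sub_cancel]
      · simp only [lev, subInd, mem_ofPred_eq, if_false, mem_union, mem_inter_iff, Set.mem_sdiff, ht,
          not_false_eq_true, and_true, and_false, false_or]
    rw [this]
    exact ((lev_meas_of_nonIncr hg _).inter measurableSet_Ioc).union
      ((lev_meas_of_nonIncr hg _).diff measurableSet_Ioc)
  · apply Set.Finite.subset ((hF.image (fun x => x - γ)).union hF)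
    rintro _ ⟨t, ht, rfl⟩
    by_cases h : t ∈ Ioc 0 ε
    · left
      exact ⟨g t, ⟨t, ht, rfl⟩, by simp only [subInd, if_pos h]⟩
    · right
      exact ⟨t, ht, by simp only [subInd, if_neg h]⟩

/-- Lemma 3.3, `rearrange`. -/
theorem stmt_1 (g h G H : ℝ → Ordinal) (A : ℝ) (ε : ℝ) (γ : Ordinal)
    (hA : ∀ t : ℝ, A < t → g t = 0 ∧ h t = 0)
    (hgNI : NonIncr g) (hgLC : LeftCont g) (hgFR : FiniteRange g) (hgCV : CountableValued g)
    (hhNI : NonIncr h) (hhLC : LeftCont h) (hhFR : FiniteRange h) (hhCV : CountableValued h)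
    (hle : ∀ t : ℝ, 0 < t → g t ≤ h t)
    (hε : 0 < ε) (hγpos : 0 < γ) (hγ : γ ≤ g ε)
    (hG : IsRearrangement G (subInd g γ (Set.Ioc 0 ε)))
    (hH : IsRearrangement H (subInd h γ (Set.Ioc 0 ε))) :
    (∀ t : ℝ, 0 < t → G t ≤ H t) ∧
      volume {t : ℝ | 0 < t ∧ g t + 1 ≤ h t} ≤ volume {t : ℝ | 0 < t ∧ G t + 1 ≤ H t} := by
  have hγh : γ ≤ h ε := hγ.trans (hle ε hε)
  have hu := subInd_good hgNI hgFR hγ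
  have hv := subInd_good hhNI hhFR hγh
  have hle' : ∀ t : ℝ, 0 < t →
      subInd g γ (Set.Ioc 0 ε) t ≤ subInd h γ (Set.Ioc 0 ε) t := by
    intro t ht
    by_cases hI : t ∈ Ioc 0 ε
    · simp only [subInd, if_pos hI]
      rw [Ordinal.sub_le]
      exact (hle t ht).trans (Ordinal.le_add_sub _ _)
    · simp only [subInd, if_neg hI]
      exact hle t ht
  refine ⟨rearr_le hu hv hle' hG hH, ?_⟩
  have hfin : volume {t : ℝ | 0 < t ∧ 0 < subInd h γ (Set.Ioc 0 ε) t} ≠ ⊤ := by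
    have hsub : {t : ℝ | 0 < t ∧ 0 < subInd h γ (Set.Ioc 0 ε) t} ⊆ Ioc 0 A := by
      rintro t ⟨h0, hp⟩
      refine ⟨h0, ?_⟩
      by_contra hc
      have h1 := (hA t (not_le.mp hc)).2
      simp only [subInd, h1, Ordinal.zero_sub, ite_self] at hp
      exact hp.false
    refine ne_top_of_le_ne_top ?_ (measure_mono hsub)
    rw [Real.volume_Ioc]
    exact ENNReal.ofReal_ne_top
  have key := rearr_lt hu hv hle' hG hH hfin
  simp only [Order.add_one_le_iff]
  refine le_trans (measure_mono ?_) key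
  rintro t ⟨ht, hlt⟩
  refine ⟨ht, ?_⟩
  by_cases hI : t ∈ Ioc 0 ε
  · simp only [subInd, if_pos hI]
    have h1 : γ ≤ g t := hγ.trans (hgNI _ _ hI.1 hI.2)
    rw [Ordinal.lt_sub, Ordinal.add_sub_cancel_of_le h1]
    exact hlt
  · simp only [subInd, if_neg hI]
    exact hlt
end

section
/- Let ε > 0 and let g, h : (0,∞) → [0,ω₁) be non-increasing left-continuous functions that vanish beyond some A < ∞ (not necessarily with finite range), with g(t) ≤ h(t) for all t. If λ({t : g(t)+1 ≤ h(t)}) ≥ ε, then C(g,ε) + 1 ≤ C(h,ε). -/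
open MeasureTheory Set Ordinal Filter
open scoped Classical

/-- `h` is an ε-compression of `g` (by some `γ`): for some `0 < γ ≤ g(ε)` and `f` the
non-increasing left-continuous rearrangement of `g − γ·1_{(0,ε]}`, one has `h = γ·1_{(0,ε]} + f`
on `(0,∞)`. -/
def IsCompression (ε : ℝ) (h g : ℝ → Ordinal) : Prop :=
  ∃ (γ : Ordinal) (f : ℝ → Ordinal), 0 < γ ∧ γ ≤ g ε ∧
    IsRearrangement f (subInd g γ (Set.Ioc 0 ε)) ∧
    (∀ t : ℝ, 0 < t → t ≤ ε → h t = γ + f t) ∧ (∀ t : ℝ, ε < t → h t = f t)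

/-- The set of values `h_n(ε)` over all finite chains `h₀ ≤ g`, `h_{i+1}` an ε-compression of
`h_i`, consisting of non-increasing left-continuous functions with finite range and bounded
support. -/
def AreaVals (ε : ℝ) (g : ℝ → Ordinal) : Set Ordinal :=
  {α | ∃ (n : ℕ) (f : ℕ → ℝ → Ordinal),
    (∀ i ≤ n, NonIncr (f i) ∧ LeftCont (f i) ∧ FiniteRange (f i) ∧
      ∃ A : ℝ, VanishesBeyond (f i) A) ∧
    (∀ t : ℝ, 0 < t → f 0 t ≤ g t) ∧
    (∀ i < n, IsCompression ε (f (i + 1)) (f i)) ∧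
    α = f n ε}

/-- The ε-area `C(g,ε)` under `g`. -/
noncomputable def Carea (ε : ℝ) (g : ℝ → Ordinal) : Ordinal := sSup (AreaVals ε g)

/-! ### Abstract distribution functions and the compression operator -/

/-- Effect of an ε-reduction by `δ` on a distribution function. -/
noncomputable def TT (ε : ℝ) (δ : Ordinal) (D : Ordinal → ℝ) : Ordinal → ℝ :=
  fun x => D x - min ε (D x) + min ε (D (δ + x))

/-- Abstract distribution functions. -/
structure St (A : ℝ) (D : Ordinal → ℝ) : Prop where
  anti : Antitone D
  nonneg : ∀ x, 0 ≤ D x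
  zero : D 0 = A
  cont : ∀ x, Order.IsSuccLimit x → ∀ η, D x < η → ∃ y < x, D y < η

theorem TT_le {ε : ℝ} {δ : Ordinal} {D : Ordinal → ℝ} (hD : Antitone D) (x : Ordinal) :
    TT ε δ D x ≤ D x := by
  have : D (δ + x) ≤ D x := hD le_add_self
  have := min_le_min_left ε this
  unfold TT; linarith

theorem TT_mono {ε : ℝ} {δ : Ordinal} {D E : Ordinal → ℝ} (h : ∀ x, D x ≤ E x) (x : Ordinal) :
    TT ε δ D x ≤ TT ε δ E x := by
  have h1 := h x
  have h2 := min_le_min_left ε (h (δ + x))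
  unfold TT
  have : D x - min ε (D x) ≤ E x - min ε (E x) := by
    rcases min_cases ε (D x) with h | h <;> rcases min_cases ε (E x) with h' | h' <;> linarith
  linarith

theorem TT_zero {ε : ℝ} {D : Ordinal → ℝ} : TT ε 0 D = D := by
  funext x; simp [TT]

theorem St.TT {ε A : ℝ} {δ : Ordinal} {D : Ordinal → ℝ} (hε : 0 < ε) (hA : ε ≤ A) (hD : St A D)
    (hf : ε ≤ D δ) : St A (TT ε δ D) where
  anti := by
    intro x y hxy
    have h1 := hD.anti hxy
    have h2 := min_le_min_left ε (hD.anti (show δ + x ≤ δ + y from by gcongr))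
    simp only [_root_.TT]
    have : D y - min ε (D y) ≤ D x - min ε (D x) := by
      rcases min_cases ε (D x) with h | h <;> rcases min_cases ε (D y) with h' | h' <;> linarith
    linarith
  nonneg := by
    intro x
    have h1 := hD.nonneg (δ + x)
    have : 0 ≤ min ε (D (δ + x)) := le_min hε.le h1
    have := min_le_right ε (D x)
    simp only [_root_.TT]; linarith
  zero := by
    simp only [_root_.TT, add_zero, hD.zero, min_eq_left hA, min_eq_left hf]; ring
  cont := by
    intro x hx η hη
    simp only [_root_.TT] at hη ⊢
    set κ := (η - (D x - min ε (D x) + min ε (D (δ + x)))) / 2 with hκ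
    have hκ0 : 0 < κ := by rw [hκ]; linarith
    obtain ⟨y1, hy1, h1⟩ := hD.cont x hx (D x + κ) (by linarith)
    obtain ⟨y2, hy2, h2⟩ := hD.cont (δ + x) (isSuccLimit_add δ hx) (D (δ + x) + κ) (by linarith)
    obtain ⟨y3, hy3, h3⟩ := (lt_add_iff_of_isSuccLimit hx).1 hy2
    refine ⟨max y1 y3, max_lt hy1 hy3, ?_⟩
    have e1 : D (max y1 y3) ≤ D y1 := hD.anti (le_max_left _ _)
    have e2 : D (δ + max y1 y3) ≤ D y2 :=
      hD.anti (h3.le.trans (by gcongr; exact le_max_right _ _))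
    have a1 : D (max y1 y3) - min ε (D (max y1 y3)) < D x - min ε (D x) + κ := by
      rcases min_cases ε (D x) with h | h <;>
        rcases min_cases ε (D (max y1 y3)) with h' | h' <;> linarith
    have a2 : min ε (D (δ + max y1 y3)) ≤ min ε (D (δ + x)) + κ := by
      rcases min_cases ε (D (δ + x)) with h | h <;>
        rcases min_cases ε (D (δ + max y1 y3)) with h' | h' <;> linarith
    linarith

/-- Chains of reductions starting in `D0`. -/
inductive Ch (ε : ℝ) (D0 : Ordinal → ℝ) : Ordinal → (Ordinal → ℝ) → Prop
  | nil : Ch ε D0 0 D0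
  | step (γ : Ordinal) (D : Ordinal → ℝ) (δ : Ordinal) (h : Ch ε D0 γ D) (hδ : 0 < δ)
      (hf : ε ≤ D δ) : Ch ε D0 (γ + δ) (TT ε δ D)

/-- Canonical chains. -/
inductive Can (ε : ℝ) (D0 : Ordinal → ℝ) : Ordinal → (Ordinal → ℝ) → Prop
  | nil : Can ε D0 0 D0
  | step (a q : Ordinal) (D : Ordinal → ℝ) (h : Can ε D0 (ω ^ a * q) D)
      (hf : ε ≤ D (ω ^ a)) : Can ε D0 (ω ^ a * (q + 1)) (TT ε (ω ^ a) D)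

theorem opow_pos' (a : Ordinal) : 0 < ω ^ a := opow_pos a omega0_pos

theorem Ch.st {ε A : ℝ} {D0 D : Ordinal → ℝ} {γ : Ordinal} (hε : 0 < ε) (hA : ε ≤ A)
    (h0 : St A D0) (h : Ch ε D0 γ D) : St A D ∧ ∀ x, D x ≤ D0 x := by
  induction h with
  | nil => exact ⟨h0, fun _ => le_rfl⟩
  | step γ D δ h hδ hf ih =>
    exact ⟨ih.1.TT hε hA hf, fun x => (TT_le ih.1.anti x).trans (ih.2 x)⟩

theorem Can.ch {ε : ℝ} {D0 D : Ordinal → ℝ} {γ : Ordinal} (h : Can ε D0 γ D) : Ch ε D0 γ D := by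
  induction h with
  | nil => exact Ch.nil
  | step a q D h hf ih =>
    rw [mul_add_one]
    exact Ch.step _ _ _ ih (opow_pos' a) hf

theorem le_of_opow_dvd {a c q : Ordinal} (h : ω ^ a ∣ ω ^ c * (q + 1)) : a ≤ c := by
  by_contra hc
  push Not at hc
  have h1 : ω ^ (c + 1) ∣ ω ^ c * (q + 1) :=
    (opow_dvd_opow ω (Order.add_one_le_of_lt hc)).trans h
  rw [← Order.succ_eq_add_one, opow_succ] at h1
  obtain ⟨r, hr⟩ := h1
  rw [mul_assoc] at hr
  have h2 := (mul_right_inj' (opow_pos' c).ne').1 hr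
  have h3 : Order.IsSuccPrelimit (q + 1) := isSuccPrelimit_iff_omega0_dvd.2 ⟨r, h2⟩
  rw [← Order.succ_eq_add_one] at h3
  exact Order.not_isSuccPrelimit_succ q h3

theorem opow_eq_mul {a c : Ordinal} (h : a ≤ c) : ω ^ c = ω ^ a * ω ^ (c - a) := by
  rw [← opow_add, Ordinal.add_sub_cancel_of_le h]

theorem Can.inv {ε : ℝ} {D0 E : Ordinal → ℝ} {a q : Ordinal} (h : Can ε D0 (ω ^ a * (q + 1)) E) :
    ∃ D, Can ε D0 (ω ^ a * q) D ∧ ε ≤ D (ω ^ a) ∧ E = _root_.TT ε (ω ^ a) D := by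
  generalize hγ : ω ^ a * (q + 1) = γ at h
  cases h with
  | nil =>
    exfalso
    have : 0 < ω ^ a * (q + 1) := mul_pos (opow_pos' a) (by simp)
    exact this.ne' hγ
  | step a' q' D h hf =>
    have e1 : a ≤ a' := le_of_opow_dvd (q := q') ⟨q + 1, hγ.symm⟩
    have e2 : a' ≤ a := le_of_opow_dvd (q := q) ⟨q' + 1, hγ⟩
    obtain rfl := le_antisymm e1 e2
    have h2 := (mul_right_inj' (opow_pos' a).ne').1 hγ
    rw [← Order.succ_eq_add_one, ← Order.succ_eq_add_one] at h2
    obtain rfl := Order.succ_injective h2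
    exact ⟨D, h, hf, rfl⟩

theorem Can.det {ε : ℝ} {D0 E E' : Ordinal → ℝ} {γ : Ordinal} (h : Can ε D0 γ E)
    (h' : Can ε D0 γ E') : E = E' := by
  induction h generalizing E' with
  | nil =>
    generalize hγ : (0 : Ordinal) = γ at h'
    cases h' with
    | nil => rfl
    | step a q D h hf =>
      exfalso
      have : 0 < ω ^ a * (q + 1) := mul_pos (opow_pos' a) (by simp)
      exact this.ne hγ
  | step a q D h hf ih =>
    obtain ⟨D', h1, _, rfl⟩ := h'.inv
    rw [ih h1]

theorem last_term (γ : Ordinal) (h : γ ≠ 0) : ∃ c q : Ordinal, γ = ω ^ c * (q + 1) := by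
  induction γ using WellFoundedLT.induction with
  | _ γ ih =>
    set e := log ω γ with he
    have h1 : ω ^ e + (γ - ω ^ e) = γ := Ordinal.add_sub_cancel_of_le (opow_log_le_self ω h)
    by_cases hr : γ - ω ^ e = 0
    · refine ⟨e, 0, ?_⟩
      rw [hr, add_zero] at h1
      simp [h1]
    · obtain ⟨c, q, hq⟩ := ih _ (sub_omega0_opow_log_lt h) hr
      have hce : c ≤ e := by
        rw [he, ← opow_le_iff_le_log one_lt_omega0 h]
        calc ω ^ c ≤ ω ^ c * (q + 1) := le_mul_of_one_le_right' (by simp)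
          _ = γ - ω ^ e := hq.symm
          _ ≤ γ := sub_le_self _ _
      refine ⟨c, ω ^ (e - c) + q, ?_⟩
      rw [add_assoc, mul_add, ← opow_eq_mul hce, ← hq, h1]

/-- The comparison preorder at level `a`. -/
def LeAt (a : Ordinal) (D E : Ordinal → ℝ) : Prop :=
  ∀ y ≤ ω ^ a, ∀ m : ℕ, ∑ i ∈ Finset.range m, D (ω ^ a * (i : Ordinal) + y) ≤
    ∑ i ∈ Finset.range m, E (ω ^ a * (i : Ordinal) + y)

theorem LeAt.of_le {a : Ordinal} {D E : Ordinal → ℝ} (h : ∀ x, D x ≤ E x) : LeAt a D E :=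
  fun _ _ _ => Finset.sum_le_sum fun _ _ => h _

theorem LeAt.trans {a : Ordinal} {D E F : Ordinal → ℝ} (h : LeAt a D E) (h' : LeAt a E F) :
    LeAt a D F := fun y hy m => (h y hy m).trans (h' y hy m)

theorem LeAt.le {a : Ordinal} {D E : Ordinal → ℝ} (h : LeAt a D E) {y : Ordinal}
    (hy : y ≤ ω ^ a) : D y ≤ E y := by
  simpa using h y hy 1

theorem LeAt.down {a c : Ordinal} {D E : Ordinal → ℝ} (hac : a ≤ c) (h : LeAt c D E) :
    LeAt a D E := by
  rcases hac.eq_or_lt with rfl | hlt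
  · exact h
  intro y hy m
  refine Finset.sum_le_sum fun i _ => h.le ?_
  calc ω ^ a * (i : Ordinal) + y ≤ ω ^ a * (i : Ordinal) + ω ^ a := by gcongr
    _ = ω ^ a * ((i + 1 : ℕ) : Ordinal) := by rw [Nat.cast_succ, mul_add_one]
    _ ≤ ω ^ c := (opow_mul_lt_opow (natCast_lt_omega0 _) hlt).le

theorem shift_eq (a y : Ordinal) (i : ℕ) :
    ω ^ a + (ω ^ a * (i : Ordinal) + y) = ω ^ a * ((i + 1 : ℕ) : Ordinal) + y := by
  rw [← add_assoc, ← mul_one_add]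
  rw [Nat.add_comm i 1, Nat.cast_add, Nat.cast_one]

theorem sum_TT {ε : ℝ} {a y : Ordinal} {D : Ordinal → ℝ} (hy : ε ≤ D y) (m : ℕ) :
    ∑ i ∈ Finset.range m, TT ε (ω ^ a) D (ω ^ a * (i : Ordinal) + y) =
      min (∑ i ∈ Finset.range m, D (ω ^ a * (i : Ordinal) + y))
        (∑ i ∈ Finset.range (m + 1), D (ω ^ a * (i : Ordinal) + y) - ε) := by
  have key : ∑ i ∈ Finset.range m, TT ε (ω ^ a) D (ω ^ a * (i : Ordinal) + y) =
      ∑ i ∈ Finset.range m, D (ω ^ a * (i : Ordinal) + y) +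
        (min ε (D (ω ^ a * (m : Ordinal) + y)) - ε) := by
    have h0 := Finset.sum_range_sub (fun i : ℕ => min ε (D (ω ^ a * (i : Ordinal) + y))) m
    simp only [Nat.cast_zero, mul_zero, zero_add, min_eq_left hy] at h0
    rw [← h0, ← Finset.sum_add_distrib]
    refine Finset.sum_congr rfl fun i _ => ?_
    rw [TT, shift_eq]; ring
  rw [key, Finset.sum_range_succ]
  rcases min_cases ε (D (ω ^ a * (m : Ordinal) + y)) with h | h
  · rw [h.1, min_eq_left (by linarith)]; ring
  · rw [h.1, min_eq_right (by linarith)]; ring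

theorem LeAt.TT {ε : ℝ} {a : Ordinal} {D E : Ordinal → ℝ} (hD : Antitone D) (h : LeAt a D E)
    (hf : ε ≤ D (ω ^ a)) : LeAt a (TT ε (ω ^ a) D) (TT ε (ω ^ a) E) := by
  intro y hy m
  have h1 : ε ≤ D y := hf.trans (hD hy)
  rw [sum_TT h1, sum_TT (h1.trans (h.le hy))]
  exact min_le_min (h y hy m) (sub_le_sub_right (h y hy (m + 1)) ε)

theorem LeAt.split {ε : ℝ} {c δ' ρ : Ordinal} {D : Ordinal → ℝ} (hD : Antitone D)
    (hf : ε ≤ D (δ' + ω ^ c + ρ)) :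
    ε ≤ _root_.TT ε δ' D (ω ^ c) ∧
    LeAt c (_root_.TT ε (δ' + ω ^ c + ρ) D) (_root_.TT ε (ω ^ c) (_root_.TT ε δ' D)) := by
  have hf' : ε ≤ D (δ' + ω ^ c) := hf.trans (hD le_self_add)
  have hy' : ∀ y ≤ ω ^ c, ε ≤ _root_.TT ε δ' D y := by
    intro y hy
    have h2 : ε ≤ D (δ' + y) := hf'.trans (hD (by gcongr))
    have := min_le_right ε (D y)
    simp only [_root_.TT, min_eq_left h2]; linarith
  refine ⟨hy' _ le_rfl, fun y hy m => ?_⟩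
  rw [sum_TT (hy' y hy)]
  have hmono : ∀ i : ℕ, D (δ' + ω ^ c + ρ + (ω ^ c * (i : Ordinal) + y)) ≤
      D (δ' + (ω ^ c * ((i + 1 : ℕ) : Ordinal) + y)) := by
    intro i
    apply hD
    rw [← shift_eq, add_assoc (δ' + ω ^ c), add_assoc δ']
    exact add_le_add le_rfl (add_le_add le_rfl le_add_self)
  refine le_min ?_ ?_
  · refine Finset.sum_le_sum fun i _ => ?_
    have h1 := hmono i
    have h2 : D (δ' + (ω ^ c * ((i + 1 : ℕ) : Ordinal) + y)) ≤
      D (δ' + (ω ^ c * (i : Ordinal) + y)) := hD (by gcongr; simp)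
    have := min_le_min_left ε (h1.trans h2)
    simp only [_root_.TT]; linarith
  · rw [Finset.sum_range_succ']
    have e0 : ε ≤ _root_.TT ε δ' D (ω ^ c * ((0 : ℕ) : Ordinal) + y) := by
      simpa using hy' y hy
    have key : ∀ m : ℕ, ∑ i ∈ Finset.range m, (D (ω ^ c * (i : Ordinal) + y) -
        min ε (D (ω ^ c * (i : Ordinal) + y))) + ε ≤
        ∑ i ∈ Finset.range m, (D (ω ^ c * ((i + 1 : ℕ) : Ordinal) + y) -
        min ε (D (ω ^ c * ((i + 1 : ℕ) : Ordinal) + y))) +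
          _root_.TT ε δ' D (ω ^ c * ((0 : ℕ) : Ordinal) + y) := by
      intro m
      have h2 : ε ≤ D (δ' + y) := hf'.trans (hD (by gcongr))
      have ht := Finset.sum_range_sub (fun i : ℕ => D (ω ^ c * (i : Ordinal) + y) -
        min ε (D (ω ^ c * (i : Ordinal) + y))) m
      rw [Finset.sum_sub_distrib] at ht
      have hn : 0 ≤ D (ω ^ c * (m : Ordinal) + y) - min ε (D (ω ^ c * (m : Ordinal) + y)) :=
        sub_nonneg.2 (min_le_right _ _)
      simp only [_root_.TT, Nat.cast_zero, mul_zero, zero_add, min_eq_left h2] at ht ⊢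
      linarith
    have key2 : ∑ i ∈ Finset.range m, min ε (D (δ' + ω ^ c + ρ + (ω ^ c * (i : Ordinal) + y))) ≤
        ∑ i ∈ Finset.range m, min ε (D (δ' + (ω ^ c * ((i + 1 : ℕ) : Ordinal) + y))) :=
      Finset.sum_le_sum fun i _ => min_le_min_left ε (hmono i)
    have key := key m
    simp only [_root_.TT] at key ⊢
    rw [Finset.sum_add_distrib, Finset.sum_add_distrib]
    linarith

theorem ch_normalize {ε A : ℝ} {D0 D1 : Ordinal → ℝ} (hε : 0 < ε) (hA : ε ≤ A)
    (h1 : St A D1) (h10 : ∀ x, D1 x ≤ D0 x) (γ' : Ordinal) :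
    ∀ (γ : Ordinal) (D : Ordinal → ℝ), Ch ε D1 γ D → ∀ a q ρ, γ' = ω ^ a * q → γ = γ' + ρ →
      ρ < ω ^ (a + 1) → ∃ E, Can ε D0 γ' E ∧ LeAt a D E := by
  induction γ' using WellFoundedLT.induction with
  | _ γ' IH =>
  intro γ D hCh
  by_cases h0 : γ' = 0
  · subst h0
    intro a q ρ _ _ _
    exact ⟨D0, Can.nil, LeAt.of_le fun x => ((hCh.st hε hA h1).2 x).trans (h10 x)⟩
  obtain ⟨c, q'', hq''⟩ := last_term γ' h0
  have hlt : ω ^ c * q'' < γ' := by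
    rw [hq'', mul_add_one]
    exact lt_add_of_pos_right _ (opow_pos' c)
  have hsplit : γ' = ω ^ c * q'' + ω ^ c := by rw [hq'', mul_add_one]
  induction hCh with
  | nil =>
    intro a q ρ _ h _
    exfalso
    have : γ' ≤ 0 := by rw [h]; exact le_self_add
    exact h0 (nonpos_iff_eq_zero.1 this)
  | step γ D δ hCh hδ hf ih =>
    intro a q ρ hq hγ hρ
    have hst := (hCh.st hε hA h1).1
    have hac : a ≤ c := le_of_opow_dvd (q := q'') ⟨q, by rw [← hq'', hq]⟩
    have hρc : ρ < ω ^ (c + 1) := hρ.trans_le (opow_le_opow_right omega0_pos (by gcongr))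
    by_cases hle : γ' ≤ γ
    · -- the prefix was already reached before
      have e1 : γ = γ' + (γ - γ') := (Ordinal.add_sub_cancel_of_le hle).symm
      have e2 : γ - γ' ≤ ρ := by
        rw [Ordinal.sub_le, ← hγ]; exact le_self_add
      obtain ⟨E, hE, hDE⟩ := ih a q (γ - γ') hq e1 (e2.trans_lt hρ)
      exact ⟨E, hE, (LeAt.of_le (TT_le hst.anti)).trans hDE⟩
    push Not at hle
    -- it suffices to find δ'
    have main : ∃ δ' E, δ = δ' + ω ^ c + ρ ∧ Can ε D0 (ω ^ c * q'') E ∧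
        LeAt c (TT ε δ' D) E ∧ ε ≤ D δ' := by
      by_cases h2 : γ ≤ ω ^ c * q''
      · obtain ⟨δ', hδ'⟩ : ∃ δ', ω ^ c * q'' = γ + δ' :=
          ⟨_, (Ordinal.add_sub_cancel_of_le h2).symm⟩
        have e1 : δ = δ' + ω ^ c + ρ := by
          apply add_left_cancel (a := γ)
          rw [hγ, hsplit, hδ', add_assoc, add_assoc, add_assoc]
        have e2 : ε ≤ D δ' := hf.trans (hst.anti (by rw [e1, add_assoc]; exact le_self_add))
        have e3 : Ch ε D1 (ω ^ c * q'') (TT ε δ' D) := by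
          rcases eq_or_ne δ' 0 with rfl | hne
          · rw [TT_zero, hδ', add_zero]; exact hCh
          · rw [hδ']; exact Ch.step _ _ _ hCh (pos_iff_ne_zero.2 hne) e2
        obtain ⟨E, hE, hL⟩ := IH _ hlt _ _ e3 c q'' 0 rfl (by simp) (opow_pos' _)
        exact ⟨δ', E, e1, hE, hL, e2⟩
      · push Not at h2
        obtain ⟨τ, hτ⟩ : ∃ τ, γ = ω ^ c * q'' + τ :=
          ⟨_, (Ordinal.add_sub_cancel_of_le h2.le).symm⟩
        have hτc : τ < ω ^ c := by
          rw [hτ, hsplit] at hle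
          exact lt_of_add_lt_add_left hle
        have e1 : τ + δ = ω ^ c + ρ := by
          apply add_left_cancel (a := ω ^ c * q'')
          rw [← add_assoc, ← hτ, hγ, hsplit, add_assoc]
        have e2 : δ = ω ^ c + ρ := by
          apply add_left_cancel (a := τ)
          rw [e1, ← add_assoc, add_omega0_opow hτc]
        obtain ⟨E, hE, hL⟩ := IH _ hlt _ _ hCh c q'' τ rfl hτ
          (hτc.trans_le (opow_le_opow_right omega0_pos le_self_add))
        refine ⟨0, E, by rw [zero_add, e2], hE, by rwa [TT_zero], ?_⟩
        exact hf.trans (hst.anti zero_le)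
    obtain ⟨δ', E, rfl, hE, hL, hfδ'⟩ := main
    obtain ⟨f1, f2⟩ := LeAt.split hst.anti hf
    refine ⟨TT ε (ω ^ c) E, ?_, ?_⟩
    · rw [hq'']
      exact Can.step c q'' E hE (f1.trans (hL.le le_rfl))
    · exact (f2.trans (hL.TT (hst.TT hε hA hfδ').anti f1)).down hac

theorem can_multi {ε : ℝ} {D0 E0 : Ordinal → ℝ} {b q : Ordinal} (hE0 : Can ε D0 (ω ^ b * q) E0)
    (k : ℕ) : ∀ E,
      Can ε D0 (ω ^ b * (q + k)) E → ∀ m,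
        ∑ i ∈ Finset.range m, E (ω ^ b * (i : Ordinal) + ω ^ b) + k * ε ≤
        ∑ i ∈ Finset.range (m + k), E0 (ω ^ b * (i : Ordinal) + ω ^ b) := by
  induction k with
  | zero =>
    intro E hE m
    simp only [Nat.cast_zero, add_zero, zero_mul] at hE ⊢
    rw [hE.det hE0]
  | succ k ih =>
    intro E hE m
    rw [Nat.cast_succ, ← add_assoc] at hE
    obtain ⟨D, hD, hf, rfl⟩ := hE.inv
    have := ih D hD (m + 1)
    rw [sum_TT hf]
    have h2 := min_le_right (∑ i ∈ Finset.range m, D (ω ^ b * (i : Ordinal) + ω ^ b))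
        (∑ i ∈ Finset.range (m + 1), D (ω ^ b * (i : Ordinal) + ω ^ b) - ε)
    rw [show m + (k + 1) = m + 1 + k by ring]
    push_cast
    linarith

theorem attained {ε A : ℝ} {D0 : Ordinal → ℝ} (hε : 0 < ε) (hA : ε ≤ A)
    (h0 : St A D0) (σ : Ordinal)
    (hσ : ∀ β < σ, ∃ γ D1 D, β < γ ∧ γ ≤ σ ∧ St A D1 ∧ (∀ x, D1 x ≤ D0 x) ∧ Ch ε D1 γ D) :
    ∃ D, Ch ε D0 σ D := by
  by_cases hz : σ = 0
  · subst hz; exact ⟨D0, Ch.nil⟩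
  obtain ⟨a, q, hq⟩ := last_term σ hz
  have hsplit : σ = ω ^ a * q + ω ^ a := by rw [hq, mul_add_one]
  have hlt : ω ^ a * q < σ := by
    rw [hsplit]; exact lt_add_of_pos_right _ (opow_pos' a)
  by_cases hatt : ∃ D1 D, St A D1 ∧ (∀ x, D1 x ≤ D0 x) ∧ Ch ε D1 σ D
  · obtain ⟨D1, D, s1, s2, s3⟩ := hatt
    obtain ⟨E, hE, _⟩ := ch_normalize hε hA s1 s2 σ σ D s3 a (q + 1) 0 hq (by simp) (opow_pos' _)
    exact ⟨E, hE.ch⟩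
  have hσ' : ∀ β < ω ^ a, ∃ ρ, β < ρ ∧ ρ < ω ^ a ∧ ∃ D1 D, St A D1 ∧ (∀ x, D1 x ≤ D0 x) ∧
      Ch ε D1 (ω ^ a * q + ρ) D := by
    intro β hβ
    obtain ⟨γ, D1, D, g1, g2, g3, g4, g5⟩ := hσ (ω ^ a * q + β)
      (by rw [hsplit]; gcongr)
    obtain ⟨ρ, rfl⟩ : ∃ ρ, γ = ω ^ a * q + ρ :=
      ⟨_, (Ordinal.add_sub_cancel_of_le (le_self_add.trans g1.le)).symm⟩
    refine ⟨ρ, lt_of_add_lt_add_left g1, ?_, D1, D, g3, g4, g5⟩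
    rcases g2.lt_or_eq with g2 | g2
    · rw [hsplit] at g2; exact lt_of_add_lt_add_left g2
    · exact absurd ⟨D1, D, g3, g4, g2 ▸ g5⟩ hatt
  obtain ⟨ρ0, _, hρ0, D1, D, s1, s2, s3⟩ := hσ' 0 (opow_pos' a)
  obtain ⟨E, hE, _⟩ := ch_normalize hε hA s1 s2 _ _ D s3 a q ρ0 rfl rfl
    (hρ0.trans_le (opow_le_opow_right omega0_pos le_self_add))
  have hEst := (hE.ch.st hε hA h0).1
  suffices hgoal : ε ≤ E (ω ^ a) by
    refine ⟨_, (hq ▸ Can.step a q E hE hgoal : Can ε D0 σ _).ch⟩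
  by_contra hcon
  push Not at hcon
  rcases zero_or_succ_or_isSuccLimit a with rfl | ⟨b, rfl⟩ | hlim
  · obtain ⟨ρ, r1, r2, _⟩ := hσ' 0 (opow_pos' 0)
    rw [opow_zero, Order.lt_one_iff] at r2
    exact r1.ne' r2
  · have hmul : ω ^ (Order.succ b) * q = ω ^ b * (ω * q) := by rw [opow_succ, mul_assoc]
    have hlimit : Order.IsSuccLimit (ω ^ Order.succ b) :=
      isSuccLimit_opow_left isSuccLimit_omega0 (by simp)
    obtain ⟨y, hy, hyε⟩ := hEst.cont _ hlimit ε hcon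
    obtain ⟨N, hN⟩ := lt_omega0_opow_succ.1 hy
    have hk : ∀ k : ℕ, (k : ℝ) * ε ≤ ∑ i ∈ Finset.range k, E (ω ^ b * (i : Ordinal) + ω ^ b) := by
      intro k
      obtain ⟨ρ, r1, r2, D1, D, t1, t2, t3⟩ := hσ' (ω ^ b * (k : Ordinal))
        (opow_mul_lt_opow (natCast_lt_omega0 _) (Order.lt_succ b))
      have e1 : ω ^ (Order.succ b) * q + ρ = ω ^ b * (ω * q + k) + (ρ - ω ^ b * (k : Ordinal)) := by
        rw [mul_add, ← hmul, add_assoc, Ordinal.add_sub_cancel_of_le r1.le]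
      obtain ⟨E', hE', _⟩ := ch_normalize hε hA t1 t2 _ _ D t3 b (ω * q + k) _ rfl e1
        ((Ordinal.sub_le_self _ _).trans_lt r2)
      have := can_multi (hmul ▸ hE) k E' hE' 0
      simpa using this
    set η := E y with hη
    have hb : ∀ k : ℕ, ∑ i ∈ Finset.range k, E (ω ^ b * (i : Ordinal) + ω ^ b) ≤ N * A + k * η := by
      intro k
      have hη0 : 0 ≤ η := hEst.nonneg y
      have hterm : ∀ i : ℕ, E (ω ^ b * (i : Ordinal) + ω ^ b) ≤ (if i < N then A else 0) + η := by
        intro i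
        split_ifs with hi
        · have : E (ω ^ b * (i : Ordinal) + ω ^ b) ≤ A := by
            rw [← hEst.zero]; exact hEst.anti zero_le
          linarith
        · rw [zero_add]
          refine hEst.anti (hN.le.trans (le_trans ?_ le_self_add))
          gcongr
          omega
      refine (Finset.sum_le_sum fun i _ => hterm i).trans ?_
      rw [Finset.sum_add_distrib, Finset.sum_const, Finset.card_range, _root_.nsmul_eq_mul]
      have : ∑ i ∈ Finset.range k, (if i < N then A else 0) ≤ N * A := by
        rw [← Finset.sum_filter, Finset.sum_const, _root_.nsmul_eq_mul]
        have hA0 : 0 ≤ A := hε.le.trans hA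
        gcongr
        calc _ ≤ (Finset.range N).card := Finset.card_le_card (by
              intro i hi; simp at hi ⊢; exact hi.2)
          _ = N := Finset.card_range N
      linarith
    obtain ⟨k, hk2⟩ := exists_nat_gt (N * A / (ε - η))
    rw [div_lt_iff₀ (by linarith)] at hk2
    have := (hk k).trans (hb k)
    linarith
  · obtain ⟨y, hy, hyε⟩ := hEst.cont _ (isSuccLimit_opow one_lt_omega0 hlim) ε hcon
    obtain ⟨b, hb, hyb⟩ := (lt_opow_of_isSuccLimit omega0_ne_zero hlim).1 hy
    obtain ⟨ρ, r1, r2, D1, D, t1, t2, t3⟩ := hσ' (ω ^ b)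
      ((opow_lt_opow_iff_right one_lt_omega0).2 hb)
    have hρ0 : ρ ≠ 0 := ((zero_le).trans_lt r1).ne'
    set c := log ω ρ with hc
    have hbc : b ≤ c := by
      rw [hc, ← opow_le_iff_le_log one_lt_omega0 hρ0]; exact r1.le
    have hca : c < a := by
      rw [hc, ← lt_opow_iff_log_lt one_lt_omega0 hρ0]; exact r2
    have hmul : ω ^ a * q = ω ^ c * (ω ^ (a - c) * q) := by
      rw [← mul_assoc, ← opow_eq_mul hca.le]
    have hcρ : ω ^ c ≤ ρ := opow_log_le_self ω hρ0
    have e1 : ω ^ a * q + ρ = ω ^ c * (ω ^ (a - c) * q + 1) + (ρ - ω ^ c) := by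
      rw [mul_add_one, ← hmul, add_assoc, Ordinal.add_sub_cancel_of_le hcρ]
    obtain ⟨E', hE', _⟩ := ch_normalize hε hA t1 t2 _ _ D t3 c _ _ rfl e1
        ((Ordinal.sub_le_self _ _).trans_lt (lt_opow_succ_log_self one_lt_omega0 ρ))
    obtain ⟨E2, i1, i2, _⟩ := hE'.inv
    rw [← hmul] at i1
    rw [i1.det hE] at i2
    have : E (ω ^ c) ≤ E y := hEst.anti (hyb.le.trans (opow_le_opow_right omega0_pos hbc))
    linarith

/-- Abstract form of: the functions differ on a set of measure at least `ε`. -/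
def StrictGap (ε A : ℝ) (D E : Ordinal → ℝ) : Prop :=
  ∀ F : Finset Ordinal, ∑ α ∈ F, max 0 (D α - E (α + 1)) ≤ A - ε

theorem StrictGap.TT {ε A : ℝ} {δ : Ordinal} {D E : Ordinal → ℝ} (h : StrictGap ε A D E) :
    StrictGap ε A (TT ε δ D) (TT ε δ E) := by
  intro F
  set G : Finset Ordinal := F.image (δ + ·) with hG
  have hinj : Set.InjOn (δ + ·) (F : Set Ordinal) := fun x _ y _ h => add_left_cancel h
  set p : Ordinal → ℝ := fun α => max 0 ((D α - min ε (D α)) - (E (α + 1) - min ε (E (α + 1))))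
  set r : Ordinal → ℝ := fun α => max 0 (min ε (D α) - min ε (E (α + 1)))
  have hp0 : ∀ α, 0 ≤ p α := fun α => le_max_left _ _
  have hr0 : ∀ α, 0 ≤ r α := fun α => le_max_left _ _
  have hpr : ∀ α, p α + r α ≤ max 0 (D α - E (α + 1)) := by
    intro α
    simp only [p, r]
    rcases min_cases ε (D α) with h1 | h1 <;> rcases min_cases ε (E (α + 1)) with h2 | h2 <;>
      rw [h1.1, h2.1] <;> simp only [max_def] <;> split_ifs <;> linarith
  calc ∑ α ∈ F, max 0 (_root_.TT ε δ D α - _root_.TT ε δ E (α + 1))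
      ≤ ∑ α ∈ F, (p α + r (δ + α)) := by
        refine Finset.sum_le_sum fun α _ => ?_
        refine max_le (add_nonneg (hp0 _) (hr0 _)) ?_
        have e1 := le_max_right 0 ((D α - min ε (D α)) - (E (α + 1) - min ε (E (α + 1))))
        have e2 := le_max_right 0 (min ε (D (δ + α)) - min ε (E (δ + α + 1)))
        simp only [_root_.TT, p, r, ← add_assoc]
        linarith
    _ = ∑ α ∈ F, p α + ∑ α ∈ G, r α := by
        rw [Finset.sum_add_distrib, hG, Finset.sum_image hinj]
    _ ≤ ∑ α ∈ F ∪ G, p α + ∑ α ∈ F ∪ G, r α := by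
        refine add_le_add ?_ ?_
        · exact Finset.sum_le_sum_of_subset_of_nonneg Finset.subset_union_left fun i _ _ => hp0 i
        · exact Finset.sum_le_sum_of_subset_of_nonneg Finset.subset_union_right fun i _ _ => hr0 i
    _ = ∑ α ∈ F ∪ G, (p α + r α) := by rw [Finset.sum_add_distrib]
    _ ≤ ∑ α ∈ F ∪ G, max 0 (D α - E (α + 1)) := Finset.sum_le_sum fun α _ => hpr α
    _ ≤ A - ε := h _

theorem Ch.gap {ε A : ℝ} {D0 E0 D : Ordinal → ℝ} {γ : Ordinal} 
    (hle : ∀ x, D0 x ≤ E0 x) (hgap : StrictGap ε A D0 E0) (h : Ch ε D0 γ D) :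
    ∃ E, Ch ε E0 γ E ∧ (∀ x, D x ≤ E x) ∧ StrictGap ε A D E := by
  induction h with
  | nil => exact ⟨E0, Ch.nil, hle, hgap⟩
  | step γ D δ h hδ hf ih =>
    obtain ⟨E, h1, h2, h3⟩ := ih
    exact ⟨_root_.TT ε δ E, Ch.step _ _ _ h1 hδ (hf.trans (h2 δ)), TT_mono h2, h3.TT⟩

theorem Ch.succ_of_gap {ε A : ℝ} {D0 E0 D : Ordinal → ℝ} {γ : Ordinal} (hε : 0 < ε) (hA : ε ≤ A)
    (h0 : St A D0) (hle : ∀ x, D0 x ≤ E0 x) (hgap : StrictGap ε A D0 E0) (h : Ch ε D0 γ D) :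
    ∃ E, Ch ε E0 (γ + 1) E := by
  obtain ⟨E, h1, h2, h3⟩ := h.gap hle hgap
  refine ⟨_, Ch.step _ _ 1 h1 zero_lt_one ?_⟩
  have := h3 {0}
  rw [Finset.sum_singleton, zero_add, (h.st hε hA h0).1.zero] at this
  have := (le_max_right _ _).trans this
  linarith

theorem Ch.trunc {ε : ℝ} {D0 D : Ordinal → ℝ} {γ : Ordinal} (h : Ch ε D0 γ D) :
    ∀ G : Finset Ordinal, ∃ F : Finset Ordinal, ∀ D0' : Ordinal → ℝ, (∀ x ∈ F, D0' x = D0 x) →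
      ∃ D', Ch ε D0' γ D' ∧ ∀ x ∈ G, D' x = D x := by
  induction h with
  | nil => exact fun G => ⟨G, fun D0' h => ⟨D0', Ch.nil, h⟩⟩
  | step γ D δ h hδ hf ih =>
    intro G
    obtain ⟨F, hF⟩ := ih (insert δ (G ∪ G.image (δ + ·)))
    refine ⟨F, fun D0' h0 => ?_⟩
    obtain ⟨D', h1, h2⟩ := hF D0' h0
    refine ⟨_root_.TT ε δ D', Ch.step _ _ _ h1 hδ ?_, fun x hx => ?_⟩
    · rw [h2 δ (by simp)]; exact hf
    · simp only [_root_.TT]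
      rw [h2 x (by simp [hx]), h2 (δ + x) (by simp [hx])]

theorem Ch.lt_omega1 {ε A : ℝ} {D0 D : Ordinal → ℝ} {γ : Ordinal} (hε : 0 < ε) (hA : ε ≤ A)
    (h0 : St A D0) (hw : D0 (ω₁) = 0) (h : Ch ε D0 γ D) : γ < ω₁ := by
  induction h with
  | nil => exact omega_pos 1
  | step γ D δ h hδ hf ih =>
    refine isPrincipal_add_omega 1 ih ?_
    by_contra hc
    push Not at hc
    have := (h.st hε hA h0).2 δ
    have := h0.anti hc
    linarith

/-- `D` is the distribution function of `f`. -/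
def IsDist (f : ℝ → Ordinal) (D : Ordinal → ℝ) : Prop :=
  ∀ x, 0 < x → ∀ t, 0 < t → (x ≤ f t ↔ t ≤ D x)

theorem exists_dist {g : ℝ → Ordinal} {A A' : ℝ} (h1 : NonIncr g) (h2 : LeftCont g)
    (h3 : VanishesBeyond g A) (hA : A ≤ A') (hA' : 0 < A') : ∃ D, St A' D ∧ IsDist g D := by
  set D : Ordinal → ℝ := fun x => if x = 0 then A' else sSup {t | 0 < t ∧ x ≤ g t} with hDdef
  have hb : ∀ x, 0 < x → ∀ t ∈ {t | 0 < t ∧ x ≤ g t}, t ≤ A' := by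
    intro x hx t ht
    by_contra hc
    push Not at hc
    have := ht.2
    rw [h3 t (hA.trans_lt hc)] at this
    exact absurd (hx.trans_le this) (lt_irrefl _)
  have hD : ∀ x, 0 < x → D x = sSup {t | 0 < t ∧ x ≤ g t} := fun x hx => by
    simp [hDdef, hx.ne']
  have hdist : IsDist g D := by
    intro x hx t ht
    rw [hD x hx]
    constructor
    · intro h
      exact le_csSup ⟨A', hb x hx⟩ ⟨ht, h⟩
    · intro h
      have hne : {t | 0 < t ∧ x ≤ g t}.Nonempty := by
        by_contra hc
        rw [Set.not_nonempty_iff_eq_empty] at hc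
        rw [hc, Real.sSup_empty] at h
        linarith
      obtain ⟨d, hd, hd'⟩ := h2 t ht
      obtain ⟨s, ⟨hs0, hs⟩, hts⟩ := exists_lt_of_lt_csSup hne
        (show t - d < sSup {t | 0 < t ∧ x ≤ g t} by linarith)
      rcases le_total s t with hst | hst
      · rw [← hd' s hts hst]; exact hs
      · exact hs.trans (h1 t s ht hst)
  have hnn : ∀ x, 0 ≤ D x := by
    intro x
    rcases eq_or_ne x 0 with rfl | hx
    · simp [hDdef, hA'.le]
    · rw [hD x (pos_iff_ne_zero.2 hx)]
      exact Real.sSup_nonneg fun t ht => ht.1.le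
  have hle : ∀ x, D x ≤ A' := by
    intro x
    rcases eq_or_ne x 0 with rfl | hx
    · simp [hDdef]
    · rw [hD x (pos_iff_ne_zero.2 hx)]
      exact Real.sSup_le (hb x (pos_iff_ne_zero.2 hx)) hA'.le
  refine ⟨D, ⟨?_, hnn, by simp [hDdef], ?_⟩, hdist⟩
  · intro x y hxy
    rcases eq_or_ne x 0 with rfl | hx
    · simpa [hDdef] using hle y
    have hx := pos_iff_ne_zero.2 hx
    rcases (hnn y).eq_or_lt with hy | hy
    · rw [← hy]; exact hnn x
    · rw [← hdist x hx _ hy]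
      exact hxy.trans ((hdist y (hx.trans_le hxy) _ hy).2 le_rfl)
  · intro x hx η hη
    by_contra hc
    push Not at hc
    have hη0 : 0 < η := (hnn x).trans_lt hη
    have hx0 : 0 < x := hx.pos
    have : x ≤ g η := by
      refine hx.isSuccPrelimit.le_iff_forall_le.2 fun y hy => ?_
      rcases eq_or_ne y 0 with rfl | hy0
      · exact zero_le
      · exact (hdist y (pos_iff_ne_zero.2 hy0) η hη0).2 (hc y hy)
    have := (hdist x hx0 η hη0).1 this
    linarith

theorem exists_fun {D : Ordinal → ℝ} {A : ℝ} {B : Ordinal} (hD : St A D) (hB : D B = 0) :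
    ∃ f, IsDist f D ∧ NonIncr f ∧ LeftCont f ∧ VanishesBeyond f A ∧
      ((Set.range D).Finite → FiniteRange f) := by
  set f : ℝ → Ordinal := fun t => sSup {x | t ≤ D x} with hf
  have hle : ∀ x, D x ≤ A := fun x => hD.zero ▸ hD.anti zero_le
  have hbdd : ∀ t, 0 < t → BddAbove {x | t ≤ D x} := by
    intro t ht
    refine ⟨B, fun x hx => ?_⟩
    by_contra hc
    push Not at hc
    have := hD.anti hc.le
    have hx : t ≤ D x := hx
    linarith
  have hmem : ∀ t, 0 < t → t ≤ A → t ≤ D (f t) := by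
    intro t ht htA
    have hne : {x | t ≤ D x}.Nonempty := ⟨0, by simpa [hD.zero] using htA⟩
    rcases zero_or_succ_or_isSuccLimit (f t) with h | ⟨y, hy⟩ | h
    · rw [h, hD.zero]; exact htA
    · obtain ⟨z, hz, hyz⟩ := exists_lt_of_lt_csSup hne (show y < f t by rw [← hy]; simp)
      refine le_trans hz (hD.anti ?_)
      rw [← hy]; exact Order.succ_le_of_lt hyz
    · by_contra hc
      push Not at hc
      obtain ⟨y, hy, hyt⟩ := hD.cont _ h _ hc
      obtain ⟨z, hz, hyz⟩ := exists_lt_of_lt_csSup hne hy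
      have hz : t ≤ D z := hz
      have := hD.anti hyz.le
      linarith
  have hvan : VanishesBeyond f A := by
    intro t ht
    have : {x | t ≤ D x} = ∅ := by
      ext x; simp only [Set.mem_setOf_eq, Set.mem_empty_iff_false, iff_false, not_le]
      exact (hle x).trans_lt ht
    simp [hf, this]
  have hdist : IsDist f D := by
    intro x hx t ht
    constructor
    · intro h
      by_cases htA : t ≤ A
      · exact (hmem t ht htA).trans (hD.anti h)
      · push Not at htA
        rw [hvan t htA] at h
        exact absurd (hx.trans_le h) (lt_irrefl _)
    · exact fun h => le_csSup (hbdd t ht) h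
  have hni : NonIncr f := by
    intro s t hs hst
    rcases eq_or_ne (f t) 0 with h | h
    · rw [h]; exact zero_le
    · have h := pos_iff_ne_zero.2 h
      rw [hdist _ h s hs]
      exact hst.trans ((hdist _ h t (hs.trans_le hst)).1 le_rfl)
  refine ⟨f, hdist, hni, ?_, hvan, ?_⟩
  · intro t ht
    have h1 : D (f t + 1) < t := by
      by_contra hc
      push Not at hc
      have := (hdist _ (by simp) t ht).2 hc
      exact absurd this (by simp)
    refine ⟨t - D (f t + 1), by linarith, fun s hs hst => ?_⟩
    have hs0 : 0 < s := by have := hD.nonneg (f t + 1); linarith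
    refine le_antisymm ?_ (hni s t hs0 hst)
    by_contra hc
    push Not at hc
    have := (hdist _ (by simp) s hs0).1 (Order.add_one_le_of_lt hc)
    linarith
  · intro hfin
    refine ((hfin.finite_subsets).image fun S => sSup {x | D x ∈ S}).subset ?_
    rintro _ ⟨t, ht, rfl⟩
    refine ⟨{v | v ∈ Set.range D ∧ t ≤ v}, fun v hv => hv.1, ?_⟩
    simp [hf]

/-- Upper level sets are measurable with measure given by `D`. -/
def UD (u : ℝ → Ordinal) (D : Ordinal → ℝ) : Prop :=
  ∀ x, 0 < x → MeasurableSet {t : ℝ | 0 < t ∧ x ≤ u t} ∧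
    volume {t : ℝ | 0 < t ∧ x ≤ u t} = ENNReal.ofReal (D x)

theorem UD_dist {f : ℝ → Ordinal} {D : Ordinal → ℝ} (h : IsDist f D) : UD f D := by
  intro x hx
  have : {t : ℝ | 0 < t ∧ x ≤ f t} = Set.Ioc 0 (D x) := by
    ext t
    constructor
    · rintro ⟨h1, h2⟩
      exact ⟨h1, (h x hx t h1).1 h2⟩
    · rintro ⟨h1, h2⟩
      exact ⟨h1, (h x hx t h1).2 h2⟩
  rw [this]
  exact ⟨measurableSet_Ioc, by simp⟩

theorem le_sub_iff' {a b c : Ordinal} (h : b ≤ a) (_hc : 0 < c) : c ≤ a - b ↔ b + c ≤ a := by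
  conv_rhs => rw [← Ordinal.add_sub_cancel_of_le h]
  exact (add_le_add_iff_left b).symm

theorem UD_sub {f : ℝ → Ordinal} {D : Ordinal → ℝ} {A ε : ℝ} {δ : Ordinal} (hε : 0 < ε)
    (hD : St A D) (h : IsDist f D) (hf : NonIncr f) (hδ : δ ≤ f ε) :
    UD (subInd f δ (Set.Ioc 0 ε)) (TT ε δ D) := by
  intro x hx
  have hx' : 0 < δ + x := lt_of_lt_of_le hx le_add_self
  have : {t : ℝ | 0 < t ∧ x ≤ subInd f δ (Set.Ioc 0 ε) t} =
      Set.Ioc 0 (min ε (D (δ + x))) ∪ Set.Ioc ε (D x) := by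
    ext t
    constructor
    · rintro ⟨h1, h2⟩
      by_cases ht : t ≤ ε
      · left
        have hm : t ∈ Set.Ioc 0 ε := ⟨h1, ht⟩
        rw [subInd, if_pos hm, le_sub_iff' (hδ.trans (hf t ε h1 ht)) hx] at h2
        exact ⟨h1, le_min ht ((h _ hx' t h1).1 h2)⟩
      · right
        have hm : t ∉ Set.Ioc 0 ε := fun hh => ht hh.2
        rw [subInd, if_neg hm] at h2
        exact ⟨not_le.1 ht, (h _ hx t h1).1 h2⟩
    · rintro (⟨h1, h2⟩ | ⟨h1, h2⟩)
      · have ht : t ≤ ε := h2.trans (min_le_left _ _)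
        have hm : t ∈ Set.Ioc 0 ε := ⟨h1, ht⟩
        refine ⟨h1, ?_⟩
        rw [subInd, if_pos hm, le_sub_iff' (hδ.trans (hf t ε h1 ht)) hx]
        exact (h _ hx' t h1).2 (h2.trans (min_le_right _ _))
      · have h0 : 0 < t := hε.trans h1
        have hm : t ∉ Set.Ioc 0 ε := fun hh => absurd hh.2 (not_le.2 h1)
        refine ⟨h0, ?_⟩
        rw [subInd, if_neg hm]
        exact (h _ hx t h0).2 h2
  rw [this]
  refine ⟨measurableSet_Ioc.union measurableSet_Ioc, ?_⟩
  rw [measure_union _ measurableSet_Ioc, Real.volume_Ioc, Real.volume_Ioc]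
  · have e1 : D x - min ε (D x) = max 0 (D x - ε) := by
      rcases le_total ε (D x) with h' | h'
      · rw [min_eq_left h', max_eq_right (by linarith)]
      · rw [min_eq_right h', max_eq_left (by linarith)]; ring
    have e2 : ENNReal.ofReal (D x - ε) = ENNReal.ofReal (max 0 (D x - ε)) := by
      rw [max_comm, ENNReal.ofReal_max]; simp
    rw [TT, e1, e2, _root_.sub_zero, add_comm, ENNReal.ofReal_add (le_max_left _ _)
      (le_min hε.le (hD.nonneg _))]
  · rw [Set.disjoint_left]
    rintro t ⟨_, h2⟩ ⟨h3, _⟩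
    exact absurd (h2.trans (min_le_left _ _)) (not_le.2 h3)

theorem UD.lev {u : ℝ → Ordinal} {D : Ordinal → ℝ} (h : UD u D) {α : Ordinal} (hα : 0 < α) :
    MeasurableSet (_root_.lev u α) ∧
    volume (_root_.lev u α) = ENNReal.ofReal (D α) - ENNReal.ofReal (D (α + 1)) := by
  have h1 := h α hα
  have hα' : 0 < α + 1 := lt_of_lt_of_le hα le_self_add
  have h2 := h (α + 1) hα'
  have e : _root_.lev u α = {t : ℝ | 0 < t ∧ α ≤ u t} \ {t : ℝ | 0 < t ∧ α + 1 ≤ u t} := by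
    ext t
    simp only [_root_.lev, Set.mem_sdiff]
    constructor
    · rintro ⟨a, b⟩
      refine ⟨⟨a, b.ge⟩, fun hc => ?_⟩
      have := hc.2
      rw [b, Order.add_one_le_iff] at this
      exact lt_irrefl _ this
    · rintro ⟨⟨a, b⟩, c⟩
      refine ⟨a, le_antisymm ?_ b⟩
      by_contra hc
      exact c ⟨a, Order.add_one_le_of_lt (not_le.1 hc)⟩
  rw [e]
  refine ⟨h1.1.diff h2.1, ?_⟩
  rw [measure_sdiff _ h2.1.nullMeasurableSet, h1.2, h2.2]
  · rw [h2.2]; exact ENNReal.ofReal_ne_top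
  · rintro t ⟨a, b⟩
    exact ⟨a, le_self_add.trans b⟩

theorem UD.rearr {f u : ℝ → Ordinal} {D : Ordinal → ℝ} (h1 : NonIncr f) (h2 : LeftCont f)
    (hf : UD f D) (hu : UD u D) : IsRearrangement f u :=
  ⟨h1, h2, fun α hα => by rw [(hf.lev hα).2, (hu.lev hα).2]⟩

theorem UD.upper {u : ℝ → Ordinal} {D : Ordinal → ℝ} (h : UD u D) {S : Finset Ordinal}
    (hS : ∀ t, 0 < t → u t ∈ S) {x : Ordinal} (hx : 0 < x) :
    ENNReal.ofReal (D x) = ∑ α ∈ S.filter (x ≤ ·), volume (_root_.lev u α) := by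
  rw [← (h x hx).2, ← measure_biUnion_finset]
  · congr 1
    ext t
    simp only [Set.mem_iUnion, Finset.mem_filter, _root_.lev]
    constructor
    · rintro ⟨a, b⟩
      exact ⟨u t, ⟨hS t a, b⟩, a, rfl⟩
    · rintro ⟨α, ⟨_, b⟩, a, rfl⟩
      exact ⟨a, b⟩
  · intro a _ b _ hab
    rw [Function.onFun, Set.disjoint_left]
    rintro t ⟨_, h1⟩ ⟨_, h2⟩
    exact hab (h1.symm.trans h2)
  · intro α hα
    exact (h.lev (lt_of_lt_of_le hx (Finset.mem_filter.1 hα).2)).1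

theorem FiniteRange.subInd {f : ℝ → Ordinal} (h : FiniteRange f) (γ : Ordinal) (I : Set ℝ) :
    FiniteRange (_root_.subInd f γ I) := by
  refine (h.union (h.image (fun x => x - γ))).subset ?_
  rintro _ ⟨t, ht, rfl⟩
  by_cases hm : t ∈ I
  · right
    simp only [_root_.subInd, if_pos hm]
    exact ⟨f t, ⟨t, ht, rfl⟩, rfl⟩
  · left
    simp only [_root_.subInd, if_neg hm]
    exact ⟨t, ht, rfl⟩

theorem IsDist.congr {f f' : ℝ → Ordinal} {D : Ordinal → ℝ} (h : IsDist f D)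
    (e : ∀ t, 0 < t → f' t = f t) : IsDist f' D := by
  intro x hx t ht
  rw [e t ht]
  exact h x hx t ht

theorem IsDist.eq {f f' : ℝ → Ordinal} {D : Ordinal → ℝ} (h : IsDist f D) (h' : IsDist f' D)
    (t : ℝ) (ht : 0 < t) : f t = f' t := by
  apply le_antisymm
  · rcases eq_or_ne (f t) 0 with h0 | h0
    · rw [h0]; exact zero_le
    · have := pos_iff_ne_zero.2 h0
      exact (h' _ this t ht).2 ((h _ this t ht).1 le_rfl)
  · rcases eq_or_ne (f' t) 0 with h0 | h0
    · rw [h0]; exact zero_le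
    · have := pos_iff_ne_zero.2 h0
      exact (h _ this t ht).2 ((h' _ this t ht).1 le_rfl)

theorem rearr_dist {f' u : ℝ → Ordinal} {E : Ordinal → ℝ} {B : ℝ} (hE : ∀ x, 0 ≤ E x)
    (hu : UD u E) (hfr : FiniteRange u) (hr : IsRearrangement f' u) (hfr' : FiniteRange f')
    (hv : VanishesBeyond f' B) : IsDist f' E := by
  obtain ⟨D', hD', hd'⟩ := exists_dist hr.1 hr.2.1 hv (le_max_left B 1)
    (lt_of_lt_of_le one_pos (le_max_right B 1))
  intro x hx t ht
  rw [hd' x hx t ht]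
  have : D' x = E x := by
    have h1 := (UD_dist hd').upper (S := (hfr.union hfr').toFinset) (fun t ht => by
      rw [Set.Finite.mem_toFinset]; exact Or.inr ⟨t, ht, rfl⟩) hx
    have h2 := hu.upper (S := (hfr.union hfr').toFinset) (fun t ht => by
      rw [Set.Finite.mem_toFinset]; exact Or.inl ⟨t, ht, rfl⟩) hx
    have h3 : ENNReal.ofReal (D' x) = ENNReal.ofReal (E x) := by
      rw [h1, h2]
      refine Finset.sum_congr rfl fun α hα => hr.2.2 α ?_
      exact lt_of_lt_of_le hx (Finset.mem_filter.1 hα).2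
    exact (ENNReal.ofReal_eq_ofReal_iff (hD'.nonneg x) (hE x)).1 h3
  rw [this]

/-- add `γ` on `(0, ε]`. -/
noncomputable def bump (ε : ℝ) (γ : Ordinal) (φ : ℝ → Ordinal) : ℝ → Ordinal :=
  fun t => if t ≤ ε then γ + φ t else φ t

theorem bump_nonIncr {ε : ℝ} {γ : Ordinal} {φ : ℝ → Ordinal} (h : NonIncr φ) :
    NonIncr (bump ε γ φ) := by
  intro s t hs hst
  unfold bump
  by_cases h1 : t ≤ ε
  · rw [if_pos h1, if_pos (hst.trans h1)]
    have := h s t hs hst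
    gcongr
  · rw [if_neg h1]
    split_ifs
    · exact (h s t hs hst).trans le_add_self
    · exact h s t hs hst

theorem bump_leftCont {ε : ℝ} {γ : Ordinal} {φ : ℝ → Ordinal} (h : LeftCont φ) :
    LeftCont (bump ε γ φ) := by
  intro t ht
  obtain ⟨δ, hδ, hh⟩ := h t ht
  unfold bump
  by_cases h1 : t ≤ ε
  · refine ⟨δ, hδ, fun s hs hst => ?_⟩
    rw [if_pos h1, if_pos (hst.trans h1), hh s hs hst]
  · push Not at h1
    refine ⟨min δ (t - ε), lt_min hδ (by linarith), fun s hs hst => ?_⟩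
    have a1 := min_le_left δ (t - ε)
    have a2 := min_le_right δ (t - ε)
    rw [if_neg (not_le.2 h1), if_neg (by linarith), hh s (by linarith) hst]

theorem bump_finite {ε : ℝ} {γ : Ordinal} {φ : ℝ → Ordinal} (h : FiniteRange φ) :
    FiniteRange (bump ε γ φ) := by
  refine (h.union (h.image (fun x => γ + x))).subset ?_
  rintro _ ⟨t, ht, rfl⟩
  unfold bump
  by_cases hm : t ≤ ε
  · right
    simp only [if_pos hm]
    exact ⟨φ t, ⟨t, ht, rfl⟩, rfl⟩
  · left
    simp only [if_neg hm]
    exact ⟨t, ht, rfl⟩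

theorem bump_vanish {ε : ℝ} {γ : Ordinal} {φ : ℝ → Ordinal} {A : ℝ} (h : VanishesBeyond φ A) :
    VanishesBeyond (bump ε γ φ) (max A ε) := by
  intro t ht
  unfold bump
  rw [if_neg (not_le.2 (lt_of_le_of_lt (le_max_right _ _) ht))]
  exact h t (lt_of_le_of_lt (le_max_left _ _) ht)

/-- The class of functions allowed in chains. -/
def Good (f : ℝ → Ordinal) : Prop :=
  NonIncr f ∧ LeftCont f ∧ FiniteRange f ∧ ∃ A : ℝ, VanishesBeyond f A

theorem Good.bump {ε : ℝ} {γ : Ordinal} {φ : ℝ → Ordinal} (h : Good φ) :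
    Good (_root_.bump ε γ φ) := by
  obtain ⟨h1, h2, h3, A, h4⟩ := h
  exact ⟨bump_nonIncr h1, bump_leftCont h2, bump_finite h3, _, bump_vanish h4⟩

theorem IsRearrangement.congr {f u v : ℝ → Ordinal} (h : IsRearrangement f u)
    (e : ∀ t, 0 < t → u t = v t) : IsRearrangement f v := by
  refine ⟨h.1, h.2.1, fun α hα => ?_⟩
  rw [h.2.2 α hα]
  congr 1
  ext t
  simp only [lev]
  constructor
  · rintro ⟨a, b⟩
    exact ⟨a, (e t a).symm.trans b⟩
  · rintro ⟨a, b⟩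
    exact ⟨a, (e t a).trans b⟩

theorem comp_state {ε A : ℝ} (hε : 0 < ε) (hA : ε ≤ A) {D1 D : Ordinal → ℝ} (h0 : St A D1)
    {γ : Ordinal} (hc : Ch ε D1 γ D) {φ f f' : ℝ → Ordinal} (hd : IsDist φ D) (hg : Good φ)
    (hf : ∀ t, 0 < t → f t = bump ε γ φ t) (hcomp : IsCompression ε f' f) (hf' : Good f') :
    ∃ γ' D' φ', Ch ε D1 γ' D' ∧ IsDist φ' D' ∧ Good φ' ∧ ∀ t, 0 < t → f' t = bump ε γ' φ' t := by
  obtain ⟨c, f1, hc0, hcle, hr, h1, h2⟩ := hcomp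
  have hst := (hc.st hε hA h0).1
  have hf1v : ∃ B, VanishesBeyond f1 B := by
    obtain ⟨B, hB⟩ := hf'.2.2.2
    refine ⟨max B ε, fun t ht => ?_⟩
    rw [← h2 t (lt_of_le_of_lt (le_max_right _ _) ht)]
    exact hB t (lt_of_le_of_lt (le_max_left _ _) ht)
  have hf1f : FiniteRange f1 := by
    refine (hf'.2.2.1.union (hf'.2.2.1.image (fun x => x - c))).subset ?_
    rintro _ ⟨t, ht, rfl⟩
    by_cases hm : t ≤ ε
    · right
      refine ⟨f' t, ⟨t, ht, rfl⟩, ?_⟩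
      simp only [h1 t ht hm, Ordinal.add_sub_cancel]
    · left
      exact ⟨t, ht, h2 t (not_le.1 hm)⟩
  obtain ⟨B, hB⟩ := hf1v
  rcases le_or_gt c γ with hcg | hcg
  · have e : ∀ t, 0 < t → subInd f c (Set.Ioc 0 ε) t = bump ε (γ - c) φ t := by
      intro t ht
      unfold subInd
      rw [hf t ht]
      unfold bump
      by_cases hm : t ≤ ε
      · rw [if_pos ⟨ht, hm⟩, if_pos hm, if_pos hm]
        conv_lhs => rw [← Ordinal.add_sub_cancel_of_le hcg, add_assoc, Ordinal.add_sub_cancel]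
      · rw [if_neg (fun hh => hm hh.2), if_neg hm, if_neg hm]
    have hr' := hr.congr e
    have hgb : Good (bump ε (γ - c) φ) := hg.bump
    obtain ⟨C, hC⟩ := hgb.2.2.2
    obtain ⟨E, hE, hdE⟩ := exists_dist hgb.1 hgb.2.1 hC (le_max_left C 1)
      (lt_of_lt_of_le one_pos (le_max_right C 1))
    have hd1 := rearr_dist hE.nonneg (UD_dist hdE) hgb.2.2.1 hr' hf1f hB
    have heq := hd1.eq hdE
    refine ⟨γ, D, φ, hc, hd, hg, fun t ht => ?_⟩
    by_cases hm : t ≤ ε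
    · rw [h1 t ht hm, heq t ht]
      unfold bump
      rw [if_pos hm, if_pos hm, ← add_assoc, Ordinal.add_sub_cancel_of_le hcg]
    · rw [h2 t (not_le.1 hm), heq t ht]
      unfold bump
      rw [if_neg hm, if_neg hm]
  · obtain ⟨δ, rfl⟩ : ∃ δ, c = γ + δ := ⟨c - γ, (Ordinal.add_sub_cancel_of_le hcg.le).symm⟩
    have hδ : 0 < δ := by
      rw [pos_iff_ne_zero]
      rintro rfl
      simp at hcg
    have hδle : δ ≤ φ ε := by
      rw [hf ε hε] at hcle
      unfold bump at hcle
      rw [if_pos le_rfl] at hcle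
      exact (add_le_add_iff_left γ).1 hcle
    have e : ∀ t, 0 < t → subInd f (γ + δ) (Set.Ioc 0 ε) t = subInd φ δ (Set.Ioc 0 ε) t := by
      intro t ht
      unfold subInd
      rw [hf t ht]
      unfold bump
      by_cases hm : t ≤ ε
      · rw [if_pos ⟨ht, hm⟩, if_pos hm, if_pos ⟨ht, hm⟩, Ordinal.add_sub_add_cancel]
      · rw [if_neg (fun hh => hm hh.2), if_neg hm, if_neg (fun hh => hm hh.2)]
    have hr' := hr.congr e
    have hfe : ε ≤ D δ := (hd δ hδ ε hε).1 hδle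
    have hst' : St A (TT ε δ D) := hst.TT hε hA hfe
    have hd1 := rearr_dist hst'.nonneg (UD_sub hε hst hd hg.1 hδle) (hg.2.2.1.subInd _ _)
      hr' hf1f hB
    refine ⟨γ + δ, _, f1, hc.step γ D δ hδ hfe, hd1, ⟨hr.1, hr.2.1, hf1f, B, hB⟩, fun t ht => ?_⟩
    unfold bump
    by_cases hm : t ≤ ε
    · rw [if_pos hm, h1 t ht hm]
    · rw [if_neg hm, h2 t (not_le.1 hm)]

theorem vals_to_ch {ε A : ℝ} (hε : 0 < ε) (hA : ε ≤ A) {g : ℝ → Ordinal} {Dg : Ordinal → ℝ}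
    (hg : St A Dg) (hdg : IsDist g Dg) (hvan : VanishesBeyond g A) {v : Ordinal}
    (hv : v ∈ AreaVals ε g) :
    ∃ D1 D, St A D1 ∧ (∀ x, D1 x ≤ Dg x) ∧ Ch ε D1 v D := by
  obtain ⟨n, f, hgood, hle, hcomp, rfl⟩ := hv
  have hvan0 : VanishesBeyond (f 0) A := by
    intro t ht
    have := hle t ((hε.trans_le hA).trans ht)
    rw [hvan t ht] at this
    exact nonpos_iff_eq_zero.1 this
  have hg0 : Good (f 0) := hgood 0 (Nat.zero_le _)
  obtain ⟨D1, hD1, hd1⟩ := exists_dist hg0.1 hg0.2.1 hvan0 le_rfl (hε.trans_le hA)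
  have hD1le : ∀ x, D1 x ≤ Dg x := by
    intro x
    rcases eq_or_ne x 0 with rfl | hx
    · rw [hD1.zero, hg.zero]
    · have hx := pos_iff_ne_zero.2 hx
      rcases (hD1.nonneg x).eq_or_lt with h | h
      · rw [← h]; exact hg.nonneg x
      · exact (hdg x hx _ h).1 (((hd1 x hx _ h).2 le_rfl).trans (hle _ h))
  have key : ∀ i ≤ n, ∃ γ D φ, Ch ε D1 γ D ∧ IsDist φ D ∧ Good φ ∧
      ∀ t, 0 < t → f i t = bump ε γ φ t := by
    intro i
    induction i with
    | zero =>
      intro _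
      refine ⟨0, D1, f 0, Ch.nil, hd1, hg0, fun t ht => ?_⟩
      simp [bump]
    | succ i ih =>
      intro hi
      obtain ⟨γ, D, φ, h1, h2, h3, h4⟩ := ih (by omega)
      exact comp_state hε hA hD1 h1 h2 h3 h4 (hcomp i (by omega)) (hgood (i + 1) hi)
  obtain ⟨γ, D, φ, h1, h2, h3, h4⟩ := key n le_rfl
  refine ⟨D1, ?_⟩
  have e : f n ε = γ + φ ε := by rw [h4 ε hε]; simp [bump]
  rw [e]
  rcases eq_or_ne (φ ε) 0 with hz | hz
  · rw [hz, add_zero]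
    exact ⟨D, hD1, hD1le, h1⟩
  · have hz := pos_iff_ne_zero.2 hz
    exact ⟨_, hD1, hD1le, h1.step γ D (φ ε) hz ((h2 _ hz ε hε).1 le_rfl)⟩

theorem dist_range_finite {f : ℝ → Ordinal} {D : Ordinal → ℝ} {A : ℝ} (hf : FiniteRange f)
    (hD : St A D) (hd : IsDist f D) : (Set.range D).Finite := by
  refine ((Set.finite_singleton A).union ((Set.finite_singleton 0).union (hf.image D))).subset ?_
  rintro _ ⟨x, rfl⟩
  rcases eq_or_ne x 0 with rfl | hx
  · left; exact hD.zero
  right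
  have hx := pos_iff_ne_zero.2 hx
  rcases (hD.nonneg x).eq_or_lt with h | h
  · left; exact h.symm
  right
  have h1 : x ≤ f (D x) := (hd x hx _ h).2 le_rfl
  refine ⟨f (D x), ⟨D x, h, rfl⟩, le_antisymm (hD.anti h1) ?_⟩
  exact (hd _ (lt_of_lt_of_le hx h1) _ h).1 le_rfl

theorem TT_range_finite {ε : ℝ} {δ : Ordinal} {D : Ordinal → ℝ} (h : (Set.range D).Finite) :
    (Set.range (TT ε δ D)).Finite := by
  refine (h.image2 (fun a b => a - min ε a + min ε b) h).subset ?_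
  rintro _ ⟨x, rfl⟩
  exact ⟨D x, ⟨x, rfl⟩, D (δ + x), ⟨_, rfl⟩, rfl⟩

theorem ch_to_chain {ε A : ℝ} (hε : 0 < ε) (hA : ε ≤ A) {D0 D : Ordinal → ℝ} (h0 : St A D0)
    {f0 : ℝ → Ordinal} (hd0 : IsDist f0 D0) (hg0 : Good f0) {B : Ordinal} (hB : D0 B = 0)
    {γ : Ordinal} (h : Ch ε D0 γ D) :
    (Set.range D).Finite ∧ ∃ (n : ℕ) (f : ℕ → ℝ → Ordinal) (φ : ℝ → Ordinal),
      (∀ i ≤ n, Good (f i)) ∧ f 0 = f0 ∧ (∀ i < n, IsCompression ε (f (i + 1)) (f i)) ∧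
      IsDist φ D ∧ Good φ ∧ ∀ t, 0 < t → f n t = bump ε γ φ t := by
  induction h with
  | nil =>
    refine ⟨dist_range_finite hg0.2.2.1 h0 hd0, 0, fun _ => f0, f0, fun _ _ => hg0, rfl,
      fun i hi => absurd hi (by omega), hd0, hg0, fun t _ => by simp [bump]⟩
  | step γ D δ h hδ hf ih =>
    obtain ⟨hfin, n, f, φ, h1, h2, h3, h4, h5, h6⟩ := ih
    obtain ⟨hst, hle⟩ := h.st hε hA h0
    have hst' : St A (TT ε δ D) := hst.TT hε hA hf
    have hfin' : (Set.range (TT ε δ D)).Finite := TT_range_finite hfin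
    have hB' : TT ε δ D B = 0 :=
      le_antisymm (((TT_le hst.anti B).trans (hle B)).trans hB.le) (hst'.nonneg B)
    obtain ⟨ψ, a1, a2, a3, a4, a5⟩ := exists_fun hst' hB'
    have hψ : Good ψ := ⟨a2, a3, a5 hfin', A, a4⟩
    have hδle : δ ≤ φ ε := (h4 δ hδ ε hε).2 hf
    refine ⟨hfin', n + 1, fun i => if i ≤ n then f i else bump ε (γ + δ) ψ, ψ, ?_, ?_, ?_, a1, hψ,
      ?_⟩
    · intro i _
      dsimp only
      split_ifs with hi
      · exact h1 i hi
      · exact hψ.bump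
    · simp [h2]
    · intro i hi
      rcases Nat.lt_succ_iff_lt_or_eq.1 hi with hi | rfl
      · simp only [hi.le, if_true, Nat.succ_le_of_lt hi]
        exact h3 i hi
      · simp only [le_refl, if_true, Nat.not_succ_le_self, if_false]
        refine ⟨γ + δ, ψ, lt_of_lt_of_le hδ le_add_self, ?_, ?_, ?_, ?_⟩
        · rw [h6 ε hε]
          simp only [bump, le_refl, if_true]
          gcongr
        · refine (UD.rearr a2 a3 (UD_dist a1) (UD_sub hε hst h4 h5.1 hδle)).congr fun t ht => ?_
          unfold subInd
          rw [h6 t ht]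
          unfold bump
          by_cases hm : t ≤ ε
          · rw [if_pos ⟨ht, hm⟩, if_pos hm, if_pos ⟨ht, hm⟩, Ordinal.add_sub_add_cancel]
          · rw [if_neg (fun hh => hm hh.2), if_neg hm, if_neg (fun hh => hm hh.2)]
        · intro t _ ht
          simp [bump, ht]
        · intro t ht
          simp [bump, not_le.2 ht]
    · intro t _
      simp

theorem trunc_fun {h : ℝ → Ordinal} {A : ℝ} (h1 : NonIncr h) (h2 : LeftCont h)
    (h3 : VanishesBeyond h A) (F : Finset Ordinal) :
    ∃ k : ℝ → Ordinal, NonIncr k ∧ LeftCont k ∧ FiniteRange k ∧ VanishesBeyond k A ∧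
      (∀ t, k t ≤ h t) ∧ ∀ x ∈ F, ∀ t, x ≤ k t ↔ x ≤ h t := by
  have hle : ∀ t, (F.filter (· ≤ h t)).sup id ≤ h t := by
    intro t
    refine Finset.sup_le fun b hb => ?_
    exact (Finset.mem_filter.1 hb).2
  refine ⟨fun t => (F.filter (· ≤ h t)).sup id, ?_, ?_, ?_, ?_, hle, ?_⟩
  · intro s t hs hst
    refine Finset.sup_mono fun b hb => ?_
    rw [Finset.mem_filter] at hb ⊢
    exact ⟨hb.1, hb.2.trans (h1 s t hs hst)⟩
  · intro t ht
    obtain ⟨δ, hδ, hh⟩ := h2 t ht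
    refine ⟨δ, hδ, fun s hs hst => ?_⟩
    simp only [hh s hs hst]
  · refine (F.powerset.finite_toSet.image (fun G => G.sup id)).subset ?_
    rintro _ ⟨t, _, rfl⟩
    exact ⟨_, Finset.mem_coe.2 (Finset.mem_powerset.2 (Finset.filter_subset _ _)), rfl⟩
  · intro t ht
    have := hle t
    rw [h3 t ht] at this
    exact nonpos_iff_eq_zero.1 (by simpa only [h3 t ht] using this)
  · intro x hx t
    refine ⟨fun hh => hh.trans (hle t), fun hh => ?_⟩
    exact Finset.le_sup (f := id) (Finset.mem_filter.2 ⟨hx, hh⟩)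

theorem ch_to_vals {ε A : ℝ} (hε : 0 < ε) (hA : ε ≤ A) {h : ℝ → Ordinal} {Dh D : Ordinal → ℝ}
    (hh : St A Dh) (hd : IsDist h Dh) (h1 : NonIncr h) (h2 : LeftCont h)
    (hvan : VanishesBeyond h A) {B : Ordinal} (hBp : 0 < B) (hB : Dh B = 0) {γ : Ordinal}
    (hc : Ch ε Dh γ D) :
    ∃ v ∈ AreaVals ε h, γ ≤ v := by
  obtain ⟨F, hF⟩ := hc.trunc ∅
  obtain ⟨k, k1, k2, k3, k4, k5, k6⟩ := trunc_fun h1 h2 hvan F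
  obtain ⟨D0, hD0, hd0⟩ := exists_dist k1 k2 k4 le_rfl (hε.trans_le hA)
  have hle : ∀ x, D0 x ≤ Dh x := by
    intro x
    rcases eq_or_ne x 0 with rfl | hx
    · rw [hD0.zero, hh.zero]
    · have hx := pos_iff_ne_zero.2 hx
      rcases (hD0.nonneg x).eq_or_lt with h | h
      · rw [← h]; exact hh.nonneg x
      · exact (hd x hx _ h).1 (((hd0 x hx _ h).2 le_rfl).trans (k5 _))
  have hagree : ∀ x ∈ F, D0 x = Dh x := by
    intro x hxF
    refine le_antisymm (hle x) ?_
    rcases eq_or_ne x 0 with rfl | hx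
    · rw [hD0.zero, hh.zero]
    · have hx := pos_iff_ne_zero.2 hx
      rcases (hh.nonneg x).eq_or_lt with h | h
      · rw [← h]; exact hD0.nonneg x
      · exact (hd0 x hx _ h).1 ((k6 x hxF _).2 ((hd x hx _ h).2 le_rfl))
  obtain ⟨D', hc', -⟩ := hF D0 hagree
  obtain ⟨-, n, f, φ, a1, a2, a3, a4, a5, a6⟩ := ch_to_chain hε hA hD0 hd0 ⟨k1, k2, k3, A, k4⟩
    (le_antisymm ((hle B).trans hB.le) (hD0.nonneg B)) hc'
  refine ⟨f n ε, ⟨n, f, a1, fun t _ => by rw [a2]; exact k5 t, a3, rfl⟩, ?_⟩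
  rw [a6 ε hε]
  simp [bump]

theorem gap_of_meas {ε A : ℝ} (hA0 : 0 < A) {g h : ℝ → Ordinal} {Dg Dh : Ordinal → ℝ}
    (hg : St A Dg) (hh : St A Dh) (hdg : IsDist g Dg) (hdh : IsDist h Dh)
    (hvan : VanishesBeyond h A) (hle : ∀ t : ℝ, 0 < t → g t ≤ h t)
    (hmeas : ENNReal.ofReal ε ≤ volume {t : ℝ | 0 < t ∧ g t + 1 ≤ h t}) :
    StrictGap ε A Dg Dh := by
  intro F
  have key : ∀ α, ∀ t ∈ Set.Ioc (Dh (α + 1)) (Dg α), 0 < t ∧ t ≤ A ∧ g t = α ∧ h t = α := by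
    rintro α t ⟨ht1, ht2⟩
    have h0 : 0 < t := lt_of_le_of_lt (hh.nonneg _) ht1
    have h1 : α ≤ g t := by
      rcases eq_or_ne α 0 with rfl | hx
      · exact zero_le
      · exact (hdg α (pos_iff_ne_zero.2 hx) t h0).2 ht2
    have h2 : h t ≤ α := by
      by_contra hc
      have := (hdh (α + 1) (lt_of_le_of_lt zero_le (Order.lt_add_one_iff.2 le_rfl)) t h0).1
        (Order.add_one_le_of_lt (not_le.1 hc))
      exact absurd this (not_le.2 ht1)
    refine ⟨h0, ht2.trans (hg.zero ▸ hg.anti zero_le), ?_, ?_⟩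
    · exact le_antisymm ((hle t h0).trans h2) h1
    · exact le_antisymm h2 (h1.trans (hle t h0))
  set S := {t : ℝ | 0 < t ∧ g t + 1 ≤ h t} with hS
  set U := ⋃ α ∈ F, Set.Ioc (Dh (α + 1)) (Dg α) with hU
  have hUm : MeasurableSet U := Finset.measurableSet_biUnion _ fun _ _ => measurableSet_Ioc
  have hdisj : Disjoint S U := by
    rw [Set.disjoint_left]
    rintro t ⟨_, h2⟩ h3
    simp only [hU, Set.mem_iUnion] at h3
    obtain ⟨α, _, h3⟩ := h3
    obtain ⟨_, _, h4, h5⟩ := key α t h3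
    rw [h4, h5, Order.add_one_le_iff] at h2
    exact lt_irrefl _ h2
  have hsub : S ∪ U ⊆ Set.Ioc 0 A := by
    rintro t (⟨h1, h2⟩ | h3)
    · refine ⟨h1, ?_⟩
      by_contra hc
      rw [hvan t (not_le.1 hc), Order.add_one_le_iff] at h2
      exact absurd h2 (not_lt.2 zero_le)
    · simp only [hU, Set.mem_iUnion] at h3
      obtain ⟨α, _, h3⟩ := h3
      obtain ⟨h4, h5, _⟩ := key α t h3
      exact ⟨h4, h5⟩
  have hvU : volume U = ∑ α ∈ F, ENNReal.ofReal (max 0 (Dg α - Dh (α + 1))) := by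
    rw [hU, measure_biUnion_finset]
    · refine Finset.sum_congr rfl fun α _ => ?_
      rw [Real.volume_Ioc, max_comm, ENNReal.ofReal_max]; simp
    · intro a _ b _ hab
      rw [Function.onFun, Set.disjoint_left]
      intro t h1 h2
      exact hab ((key a t h1).2.2.1.symm.trans (key b t h2).2.2.1)
    · intro _ _; exact measurableSet_Ioc
  have h1 : ENNReal.ofReal ε + volume U ≤ ENNReal.ofReal A := by
    calc _ ≤ volume S + volume U := by gcongr
      _ = volume (S ∪ U) := (measure_union hdisj hUm).symm
      _ ≤ volume (Set.Ioc 0 A) := measure_mono hsub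
      _ = _ := by simp
  rw [hvU, ← ENNReal.ofReal_sum_of_nonneg (fun _ _ => le_max_left _ _)] at h1
  have hs : 0 ≤ ∑ α ∈ F, max 0 (Dg α - Dh (α + 1)) := Finset.sum_nonneg fun _ _ => le_max_left _ _
  have h2 : ε + ∑ α ∈ F, max 0 (Dg α - Dh (α + 1)) ≤ A := by
    rcases le_total 0 ε with he | he
    · rw [← ENNReal.ofReal_add he hs] at h1
      exact (ENNReal.ofReal_le_ofReal_iff hA0.le).1 h1
    · have := (ENNReal.ofReal_le_ofReal_iff hA0.le).1 (le_trans le_add_self h1)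
      linarith
  linarith
/-- comparison of ε-areas for general non-increasing functions. -/
theorem stmt_4 (ε A : ℝ) (hε : 0 < ε) (g h : ℝ → Ordinal)
    (hgNI : NonIncr g) (hgLC : LeftCont g) (hgCV : CountableValued g)
    (hhNI : NonIncr h) (hhLC : LeftCont h) (hhCV : CountableValued h)
    (hvan : ∀ t : ℝ, A < t → g t = 0 ∧ h t = 0)
    (hle : ∀ t : ℝ, 0 < t → g t ≤ h t)
    (hmeas : ENNReal.ofReal ε ≤ volume {t : ℝ | 0 < t ∧ g t + 1 ≤ h t}) :
    Carea ε g + 1 ≤ Carea ε h := by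
  have hA : ε ≤ max A ε := le_max_right _ _
  have hA0 : 0 < max A ε := hε.trans_le hA
  have hgv : VanishesBeyond g (max A ε) := fun t ht =>
    (hvan t (lt_of_le_of_lt (le_max_left _ _) ht)).1
  have hhv : VanishesBeyond h (max A ε) := fun t ht =>
    (hvan t (lt_of_le_of_lt (le_max_left _ _) ht)).2
  obtain ⟨Dg, hDg, hdg⟩ := exists_dist hgNI hgLC hgv le_rfl hA0
  obtain ⟨Dh, hDh, hdh⟩ := exists_dist hhNI hhLC hhv le_rfl hA0
  have hw : (0 : Ordinal) < ω₁ := Ordinal.omega_pos 1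
  have hz : ∀ {f : ℝ → Ordinal} {D : Ordinal → ℝ}, St (max A ε) D → IsDist f D →
      CountableValued f → D ω₁ = 0 := by
    intro f D hD hd hc
    by_contra hne
    have hp := lt_of_le_of_ne (hD.nonneg ω₁) (Ne.symm hne)
    exact absurd ((hd _ hw _ hp).2 le_rfl) (not_le.2 (hc _ hp))
  have hgz := hz hDg hdg hgCV
  have hhz := hz hDh hdh hhCV
  have hDle : ∀ x, Dg x ≤ Dh x := by
    intro x
    rcases eq_or_ne x 0 with rfl | hx
    · rw [hDg.zero, hDh.zero]
    · have hx := pos_iff_ne_zero.2 hx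
      rcases (hDg.nonneg x).eq_or_lt with h | h
      · rw [← h]; exact hDh.nonneg x
      · exact (hdh x hx _ h).1 (((hdg x hx _ h).2 le_rfl).trans (hle _ h))
  have hbdd : ∀ {f : ℝ → Ordinal} {D : Ordinal → ℝ}, St (max A ε) D → IsDist f D →
      VanishesBeyond f (max A ε) → D ω₁ = 0 → BddAbove (AreaVals ε f) := by
    intro f D hD hd hv hz
    refine ⟨ω₁, fun v hv' => ?_⟩
    obtain ⟨D1, D2, b1, b2, b3⟩ := vals_to_ch hε hA hD hd hv hv'
    exact (b3.lt_omega1 hε hA b1 (le_antisymm ((b2 _).trans hz.le) (b1.nonneg _))).le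
  have hbg := hbdd hDg hdg hgv hgz
  have hbh := hbdd hDh hdh hhv hhz
  have hne : (AreaVals ε g).Nonempty := by
    obtain ⟨v, hv, _⟩ := ch_to_vals hε hA hDg hdg hgNI hgLC hgv hw hgz Ch.nil
    exact ⟨v, hv⟩
  obtain ⟨D, hD⟩ := attained hε hA hDg (Carea ε g) (by
    intro β hβ
    obtain ⟨v, hv, hlt⟩ := exists_lt_of_lt_csSup hne hβ
    obtain ⟨D1, D2, b1, b2, b3⟩ := vals_to_ch hε hA hDg hdg hgv hv
    exact ⟨v, D1, D2, hlt, le_csSup hbg hv, b1, b2, b3⟩)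
  have hgap := gap_of_meas hA0 hDg hDh hdg hdh hhv hle hmeas
  obtain ⟨E, hE⟩ := hD.succ_of_gap hε hA hDg hDle hgap
  obtain ⟨v, hv, hvle⟩ := ch_to_vals hε hA hDh hdh hhNI hhLC hhv hw hhz hE
  exact hvle.trans (le_csSup hbh hv)
end

section
/- Let γ be a countable ordinal, k a positive integer, and 0 < ε ≤ 1. Let Y = C([0, ω^{ω^γ·k}]) be the Banach space of continuous real-valued functions on the compact ordinal interval [0, ω^{ω^γ·k}] (order topology), where ω^{ω^γ·k} denotes ordinal exponentiation of ω to the ordinal ω^γ·k. Then η(ε, B_{Y^*}) = ω^γ·⌊k/ε⌋ + 1, where B_{Y^*} is the closed unit ball of Y^* and ⌊k/ε⌋ is the greatest integer not exceeding k/ε. -/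
open MeasureTheory Set Ordinal Filter

/-- Ordinal intervals `[0,θ]` are compact in the order topology. -/
noncomputable instance (θ : Ordinal) : CompactSpace (Set.Iic θ) :=
  isCompact_iff_compactSpace.mp (by rw [← Set.Icc_bot]; exact isCompact_Icc)

/-- The Szlenk sets `P_α(ε, B)` of a subset `B` of the dual of `Y`:
`P₀ = B`; `b ∈ P_{α+1}` iff `b ∈ B` and `b` is the weak* limit of a sequence in `P_α` whose
evaluations along some weakly null sequence of the unit ball of `Y` converge to a limit `≥ ε`;
intersections are taken at limit ordinals. -/
noncomputable def SzlenkSet (Y : Type*) [NormedAddCommGroup Y] [NormedSpace ℝ Y]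
    (ε : ℝ) (B : Set (Y →L[ℝ] ℝ)) : Ordinal → Set (Y →L[ℝ] ℝ) :=
  fun α => Ordinal.limitRecOn α B
    (fun _ prev => {b | b ∈ B ∧ ∃ (a : ℕ → Y) (bs : ℕ → Y →L[ℝ] ℝ),
      (∀ n, ‖a n‖ ≤ 1) ∧
      (∀ F : Y →L[ℝ] ℝ, Filter.Tendsto (fun n => F (a n)) Filter.atTop (nhds (0:ℝ))) ∧
      (∀ n, bs n ∈ prev) ∧
      (∀ y : Y, Filter.Tendsto (fun n => bs n y) Filter.atTop (nhds (b y))) ∧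
      (∃ L : ℝ, ε ≤ L ∧ Filter.Tendsto (fun n => bs n (a n)) Filter.atTop (nhds L))})
    (fun β _ ih => ⋂ (γ : Ordinal) (h : γ < β), ih γ h)

/-- The ε-Szlenk index: the least ordinal `α` with `P_α(ε,B) = ∅`. -/
noncomputable def SzlenkIndex (Y : Type*) [NormedAddCommGroup Y] [NormedSpace ℝ Y]
    (ε : ℝ) (B : Set (Y →L[ℝ] ℝ)) : Ordinal :=
  sInf {α : Ordinal | SzlenkSet Y ε B α = ∅}

section abstract_part

variable {Y : Type*} [NormedAddCommGroup Y] [NormedSpace ℝ Y]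

/-- One derivation step, without intersecting with the ambient set. -/
def DD (ε : ℝ) (prev : Set (Y →L[ℝ] ℝ)) : Set (Y →L[ℝ] ℝ) :=
  {b | ∃ (a : ℕ → Y) (bs : ℕ → Y →L[ℝ] ℝ),
      (∀ n, ‖a n‖ ≤ 1) ∧
      (∀ F : Y →L[ℝ] ℝ, Filter.Tendsto (fun n => F (a n)) Filter.atTop (nhds (0:ℝ))) ∧
      (∀ n, bs n ∈ prev) ∧
      (∀ y : Y, Filter.Tendsto (fun n => bs n y) Filter.atTop (nhds (b y))) ∧
      (∃ L : ℝ, ε ≤ L ∧ Filter.Tendsto (fun n => bs n (a n)) Filter.atTop (nhds L))}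

lemma DD_mono {ε : ℝ} {S T : Set (Y →L[ℝ] ℝ)} (h : S ⊆ T) : DD ε S ⊆ DD ε T := by
  rintro b ⟨a, bs, h1, h2, h3, h4, h5⟩
  exact ⟨a, bs, h1, h2, fun n => h (h3 n), h4, h5⟩

lemma sz_zero (ε : ℝ) (B : Set (Y →L[ℝ] ℝ)) : SzlenkSet Y ε B 0 = B := by
  unfold SzlenkSet; exact Ordinal.limitRecOn_zero _ _ _

lemma sz_succ (ε : ℝ) (B : Set (Y →L[ℝ] ℝ)) (α : Ordinal) :
    SzlenkSet Y ε B (α + 1) = B ∩ DD ε (SzlenkSet Y ε B α) := by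
  unfold SzlenkSet
  simp only [Ordinal.limitRecOn_add_one]
  rfl

lemma sz_limit (ε : ℝ) (B : Set (Y →L[ℝ] ℝ)) (α : Ordinal) (h : Order.IsSuccLimit α) :
    SzlenkSet Y ε B α = ⋂ (γ : Ordinal) (_ : γ < α), SzlenkSet Y ε B γ := by
  unfold SzlenkSet
  simp only [Ordinal.limitRecOn_limit _ _ _ _ h]

lemma sz_anti (ε : ℝ) (B : Set (Y →L[ℝ] ℝ)) (β : Ordinal) :
    ∀ α ≤ β, SzlenkSet Y ε B β ⊆ SzlenkSet Y ε B α := by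
  induction β using WellFoundedLT.induction with
  | _ β ih =>
  intro α hα
  rcases hα.eq_or_lt with h' | h'
  · rw [h']
  rcases Ordinal.zero_or_succ_or_isSuccLimit β with h | ⟨δ, h⟩ | h
  · subst h; simp at h'
  · have h : β = δ + 1 := by simpa using h.symm
    subst h
    have hαδ : α ≤ δ := Order.lt_add_one_iff.mp h'
    have hδ : δ < δ + 1 := Order.lt_add_one_iff.mpr le_rfl
    refine Subset.trans ?_ (ih δ hδ α hαδ)
    rcases Ordinal.zero_or_succ_or_isSuccLimit δ with h | ⟨η, h⟩ | h
    · subst h; rw [sz_succ, sz_zero]; exact inter_subset_left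
    · have h : δ = η + 1 := by simpa using h.symm
      subst h
      rw [sz_succ]
      conv_rhs => rw [sz_succ]
      exact inter_subset_inter_right _ (DD_mono (ih _ hδ η (Order.lt_add_one_iff.mpr le_rfl).le))
    · intro b hb
      rw [sz_limit _ _ _ h, mem_iInter₂]
      intro ξ hξ
      have h1 : ξ + 1 < δ := by simpa using h.succ_lt hξ
      apply ih (ξ + 1) (h1.trans hδ) ξ (Order.lt_add_one_iff.mpr le_rfl).le
      rw [sz_succ] at hb ⊢
      exact ⟨hb.1, DD_mono (ih δ hδ ξ hξ.le) hb.2⟩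
  · rw [sz_limit _ _ _ h]; exact iInter₂_subset α h'

lemma sz_mem (ε : ℝ) (B : Set (Y →L[ℝ] ℝ)) (β : Ordinal) (b : Y →L[ℝ] ℝ) :
    b ∈ SzlenkSet Y ε B β ↔ b ∈ B ∧ ∀ α < β, b ∈ DD ε (SzlenkSet Y ε B α) := by
  constructor
  · intro hb
    refine ⟨by have := sz_anti ε B β 0 zero_le hb; rwa [sz_zero] at this, fun α hα => ?_⟩
    have := sz_anti ε B β (α + 1) (Order.add_one_le_iff.mpr hα) hb
    rw [sz_succ] at this
    exact this.2
  · rintro ⟨h0, h1⟩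
    rcases Ordinal.zero_or_succ_or_isSuccLimit β with h | ⟨δ, h⟩ | h
    · subst h; rwa [sz_zero]
    · have h : β = δ + 1 := by simpa using h.symm
      subst h
      rw [sz_succ]
      exact ⟨h0, h1 _ (Order.lt_add_one_iff.mpr le_rfl)⟩
    · rw [sz_limit _ _ _ h, mem_iInter₂]
      intro ξ hξ
      apply sz_anti ε B (ξ + 1) ξ (Order.lt_add_one_iff.mpr le_rfl).le
      rw [sz_succ]
      exact ⟨h0, h1 _ hξ⟩

lemma sz_sub (ε : ℝ) (B : Set (Y →L[ℝ] ℝ)) (β : Ordinal) : SzlenkSet Y ε B β ⊆ B :=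
  fun _ hb => ((sz_mem ε B β _).1 hb).1

lemma sz_mono {ε : ℝ} {S T : Set (Y →L[ℝ] ℝ)} (h : S ⊆ T) (β : Ordinal) :
    SzlenkSet Y ε S β ⊆ SzlenkSet Y ε T β := by
  induction β using WellFoundedLT.induction with
  | _ β ih =>
  intro b hb
  rw [sz_mem] at hb ⊢
  exact ⟨h hb.1, fun α hα => DD_mono (ih α hα) (hb.2 α hα)⟩

lemma sz_add (ε : ℝ) (S : Set (Y →L[ℝ] ℝ)) (α β : Ordinal) :
    SzlenkSet Y ε S (α + β) ⊆ SzlenkSet Y ε (SzlenkSet Y ε S α) β := by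
  induction β using WellFoundedLT.induction with
  | _ β ih =>
  intro b hb
  rw [sz_mem]
  refine ⟨sz_anti ε S (α + β) α le_self_add hb, fun ξ hξ => ?_⟩
  exact DD_mono (ih ξ hξ) (((sz_mem ε S (α + β) b).1 hb).2 (α + ξ) (by gcongr))

lemma sz_local (ε : ℝ) (S : Set (Y →L[ℝ] ℝ)) (g : Y) (t : ℝ) (β : Ordinal) :
    SzlenkSet Y ε S β ∩ {f | t < f g} ⊆ SzlenkSet Y ε (S ∩ {f | t < f g}) β := by
  induction β using WellFoundedLT.induction with
  | _ β ih =>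
  rintro b ⟨hb, hbt⟩
  rw [sz_mem] at hb ⊢
  refine ⟨⟨hb.1, hbt⟩, fun α hα => ?_⟩
  obtain ⟨a, bs, h1, h2, h3, h4, L, h5, h6⟩ := hb.2 α hα
  have hev : ∀ᶠ n in atTop, t < bs n g := (h4 g).eventually (lt_mem_nhds hbt)
  obtain ⟨n0, hn0⟩ := eventually_atTop.1 hev
  have ht : Tendsto (fun n : ℕ => n + n0) atTop atTop := tendsto_add_atTop_nat n0
  exact ⟨fun n => a (n + n0), fun n => bs (n + n0), fun n => h1 _, fun F => (h2 F).comp ht,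
    fun n => ih α hα ⟨h3 _, hn0 _ (by omega)⟩, fun y => (h4 y).comp ht, L, h5, h6.comp ht⟩

end abstract_part

section upper_part

open Topology

variable {K : Type*} [TopologicalSpace K] [CompactSpace K]

/-- `ρ` strictly decreases near every point of `L`, along `L`. -/
def IsRk (L : Set K) (ρ : K → Ordinal) : Prop :=
  ∀ x ∈ L, ∀ᶠ y in 𝓝 x, y ∈ L → y ≠ x → ρ y < ρ x

/-- Functionals of norm at most one with a bound on functions dominated by `h` on `L`. -/
def SS (L : Set K) (h : K → ℝ) (c δ : ℝ) : Set (C(K, ℝ) →L[ℝ] ℝ) :=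
  {f | ‖f‖ ≤ 1 ∧ ∀ g : C(K, ℝ), (∀ x ∈ L, |g x| ≤ h x) → f g ≤ c + δ * ‖g‖}

lemma exists_soft (g : C(K, ℝ)) (s : ℝ) (hs : 0 ≤ s) :
    ∃ g' : C(K, ℝ), (∀ x, |g' x| ≤ max (|g x| - s) 0) ∧ ‖g - g'‖ ≤ s ∧ ‖g'‖ ≤ ‖g‖ := by
  refine ⟨⟨fun x => g x - max (-s) (min s (g x)), by fun_prop⟩, ?_, ?_, ?_⟩
  · intro x
    simp only [ContinuousMap.coe_mk]
    grind
  · rw [ContinuousMap.norm_le _ hs]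
    intro x
    simp only [ContinuousMap.sub_apply, ContinuousMap.coe_mk, Real.norm_eq_abs]
    grind
  · rw [ContinuousMap.norm_le _ (norm_nonneg _)]
    intro x
    refine le_trans ?_ (g.norm_coe_le_norm x)
    simp only [ContinuousMap.coe_mk, Real.norm_eq_abs]
    grind

lemma apply_le_norm {f : C(K, ℝ) →L[ℝ] ℝ} (hf : ‖f‖ ≤ 1) (g : C(K, ℝ)) : f g ≤ ‖g‖ :=
  (le_abs_self _).trans ((f.le_opNorm g).trans (mul_le_of_le_one_left (norm_nonneg _) hf))

lemma SS_soft {L : Set K} {h : K → ℝ} {c δ s : ℝ} (hδ : 0 ≤ δ) (hs : 0 ≤ s)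
    (hh : ∀ x ∈ L, 0 ≤ h x) {f : C(K, ℝ) →L[ℝ] ℝ} (hf : f ∈ SS L h c δ) (g : C(K, ℝ))
    (hg : ∀ x ∈ L, |g x| ≤ h x + s) : f g ≤ c + δ * ‖g‖ + s := by
  obtain ⟨g', h1, h2, h3⟩ := exists_soft g s hs
  have h4 : f g' ≤ c + δ * ‖g'‖ := hf.2 g' fun x hx =>
    (h1 x).trans (max_le (by linarith [hg x hx]) (hh x hx))
  have h5 : f (g - g') ≤ s := (apply_le_norm hf.1 _).trans h2
  have h6 : δ * ‖g'‖ ≤ δ * ‖g‖ := by gcongr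
  rw [map_sub] at h5
  linarith

lemma rk_bound {L : Set K} {ρ : K → Ordinal} (hL : IsClosed L) (hρ : IsRk L ρ) :
    ∃ F : Finset K, (∀ x ∈ F, x ∈ L) ∧ ∀ y ∈ L, ∃ x ∈ F, y = x ∨ ρ y < ρ x := by
  obtain ⟨F, h1, h2⟩ := hL.isCompact.elim_nhds_subcover
    (fun x => {y | y ∈ L → y ≠ x → ρ y < ρ x}) (fun x hx => hρ x hx)
  refine ⟨F, h1, fun y hy => ?_⟩
  obtain ⟨x, hx, hyx⟩ := mem_iUnion₂.1 (h2 hy)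
  refine ⟨x, hx, ?_⟩
  by_cases e : y = x
  · exact Or.inl e
  · exact Or.inr (hyx hy e)

/-- The points where `h` is not much larger than `|g| + 1`. -/
def core (L : Set K) (h : K → ℝ) (g : C(K, ℝ)) (τ : ℝ) : Set K :=
  {y | y ∈ L ∧ h y ≤ |g y| + 1 - τ}

/-- `h = N - block`, where the block is the quotient of the rank by `ω ^ γ`. -/
def IsBlk (L : Set K) (ρ : K → Ordinal) (γ : Ordinal) (N : ℕ) (h : K → ℝ) : Prop :=
  ∃ blk : K → ℕ, ∀ x ∈ L, ρ x / ω ^ γ = blk x ∧ blk x ≤ N ∧ h x = N - blk x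

lemma blk_nonneg {L : Set K} {ρ : K → Ordinal} {γ : Ordinal} {N : ℕ} {h : K → ℝ}
    (hb : IsBlk L ρ γ N h) : ∀ x ∈ L, 0 ≤ h x ∧ h x ≤ N := by
  obtain ⟨blk, hb⟩ := hb
  intro x hx
  obtain ⟨-, h2, h3⟩ := hb x hx
  rw [h3]
  have : (blk x : ℝ) ≤ N := by exact_mod_cast h2
  constructor
  · linarith
  · simp

lemma blk_lsc {L : Set K} {ρ : K → Ordinal} {γ : Ordinal} {N : ℕ} {h : K → ℝ}
    (hb : IsBlk L ρ γ N h) {x y : K} (hx : x ∈ L) (hy : y ∈ L) (hxy : ρ y < ρ x) :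
    h x + 1 ≤ h y ∨ (h x = h y ∧ ρ y % ω ^ γ < ρ x % ω ^ γ) := by
  obtain ⟨blk, hb⟩ := hb
  obtain ⟨h1, h2, h3⟩ := hb x hx
  obtain ⟨h1', h2', h3'⟩ := hb y hy
  have hle : blk y ≤ blk x := by
    have : ρ y / ω ^ γ ≤ ρ x / ω ^ γ := by
      rw [Ordinal.le_div (opow_pos γ omega0_pos).ne']
      exact (Ordinal.mul_div_le _ _).trans hxy.le
    rw [h1, h1'] at this
    exact_mod_cast this
  rcases hle.lt_or_eq with hlt | heq
  · left
    rw [h3, h3']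
    have : (blk y : ℝ) + 1 ≤ blk x := by exact_mod_cast hlt
    linarith
  · right
    refine ⟨by rw [h3, h3', heq], ?_⟩
    have e1 := Ordinal.div_add_mod (ρ x) (ω ^ γ)
    have e2 := Ordinal.div_add_mod (ρ y) (ω ^ γ)
    rw [h1] at e1
    rw [h1', heq] at e2
    rw [← e1, ← e2] at hxy
    exact (add_lt_add_iff_left _).1 hxy

lemma core_closed {L : Set K} {ρ : K → Ordinal} {γ : Ordinal} {N : ℕ} {h : K → ℝ}
    (hL : IsClosed L) (hρ : IsRk L ρ) (hb : IsBlk L ρ γ N h) (g : C(K, ℝ)) (τ : ℝ) :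
    IsClosed (core L h g τ) := by
  rw [← isOpen_compl_iff, isOpen_iff_mem_nhds]
  intro x hx
  by_cases hxL : x ∈ L
  · have hx' : |g x| < h x - 1 + τ := by
      by_contra hcon
      exact hx ⟨hxL, by linarith⟩
    have hc : ∀ᶠ y in 𝓝 x, |g y| < h x - 1 + τ :=
      (g.continuous.abs.tendsto x).eventually (gt_mem_nhds hx')
    filter_upwards [hc, hρ x hxL] with y hy1 hy2 hy3
    by_cases e : y = x
    · subst e; exact hx hy3
    · have := hy3.2
      rcases blk_lsc hb hxL hy3.1 (hy2 hy3.1 e) with h1 | ⟨h1, -⟩ <;> linarith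
  · filter_upwards [hL.isOpen_compl.mem_nhds hxL] with y hy hy2 using hy hy2.1

lemma core_rk {L : Set K} {ρ : K → Ordinal} {γ : Ordinal} {N : ℕ} {h : K → ℝ}
    (hρ : IsRk L ρ) (hb : IsBlk L ρ γ N h) (g : C(K, ℝ)) (τ : ℝ)
    (hτ : 0 < τ) (hg : ∀ x ∈ L, |g x| ≤ h x) :
    IsRk (core L h g τ) (fun x => ρ x % ω ^ γ) := by
  intro x hx
  have hc : ∀ᶠ y in 𝓝 x, |g y| < |g x| + τ :=
      (g.continuous.abs.tendsto x).eventually (gt_mem_nhds (by linarith))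
  filter_upwards [hc, hρ x hx.1] with y hy1 hy2 hy3 hne
  rcases blk_lsc hb hx.1 hy3.1 (hy2 hy3.1 hne) with h1 | ⟨-, h1⟩
  · have := hy3.2
    have := hg x hx.1
    linarith
  · exact h1

lemma SS_core {L : Set K} {h : K → ℝ} {c δ ε η τ : ℝ} (hδ : 0 ≤ δ) (hτ : 0 < τ)
    (hτη : τ ≤ η / 4) (hh : ∀ x ∈ L, 0 ≤ h x) (g : C(K, ℝ)) (hg : ∀ x ∈ L, |g x| ≤ h x)
    {f : C(K, ℝ) →L[ℝ] ℝ} (hf : f ∈ SS L h c δ)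
    (hfg : c - (ε - δ) + δ * ‖g‖ + η / 2 < f g) (u : C(K, ℝ)) (hu : ‖u‖ ≤ 1)
    (huc : ∀ x ∈ core L h g τ, |u x| ≤ τ) : f u ≤ ε - η / 4 := by
  have h1 := SS_soft hδ hτ.le hh hf (g + u) (by
    intro x hx
    have h2 : |(g + u) x| ≤ |g x| + |u x| := abs_add_le _ _
    by_cases hxc : x ∈ core L h g τ
    · linarith [huc x hxc, hg x hx]
    · have h3 : |g x| + 1 - τ < h x := by
        by_contra hcon
        exact hxc ⟨hx, by linarith⟩
      have h4 : |u x| ≤ 1 := (u.norm_coe_le_norm x).trans hu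
      linarith)
  have h5 : δ * ‖g + u‖ ≤ δ * (‖g‖ + 1) := by
    gcongr
    exact (norm_add_le _ _).trans (by linarith)
  rw [map_add] at h1
  linarith

/-- The one-block estimate. -/
def UB (K : Type*) [TopologicalSpace K] [CompactSpace K] (γ : Ordinal) : Prop :=
  ∀ (L : Set K) (ρ : K → Ordinal) (N : ℕ) (h : K → ℝ) (c δ ε : ℝ), IsClosed L → IsRk L ρ →
    IsBlk L ρ γ N h → 0 ≤ δ →
    SzlenkSet C(K, ℝ) ε (SS L h c δ) (ω ^ γ) ⊆ SS L h (c - (ε - δ)) δ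

lemma UB_iter {γ : Ordinal} (hU : UB K γ) (L : Set K) (ρ : K → Ordinal) (N : ℕ) (h : K → ℝ)
    (c δ ε : ℝ) (hL : IsClosed L) (hρ : IsRk L ρ) (hb : IsBlk L ρ γ N h) (hδ : 0 ≤ δ) (m : ℕ) :
    SzlenkSet C(K, ℝ) ε (SS L h c δ) (ω ^ γ * m) ⊆ SS L h (c - m * (ε - δ)) δ := by
  induction m with
  | zero => simp [sz_zero]
  | succ m ih =>
    have e : (ω : Ordinal) ^ γ * ((m + 1 : ℕ) : Ordinal) = ω ^ γ * m + ω ^ γ := by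
      push_cast; rw [mul_add_one]
    rw [e]
    refine (sz_add _ _ _ _).trans ((sz_mono ih _).trans ((hU L ρ N h _ δ ε hL hρ hb hδ).trans ?_))
    apply le_of_eq
    congr 1
    push_cast
    ring

theorem UB_all (γ : Ordinal) : UB K γ := by
  induction γ using WellFoundedLT.induction with
  | _ γ ih =>
  intro L ρ N h c δ ε hL hρ hb hδ f hf
  have hfS := sz_sub _ _ _ hf
  refine ⟨hfS.1, fun g hg => ?_⟩
  by_contra! hcon
  obtain ⟨η, hη⟩ : ∃ η, η = f g - (c - (ε - δ) + δ * ‖g‖) := ⟨_, rfl⟩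
  have hη0 : 0 < η := by linarith
  have hh := fun x hx => (blk_nonneg hb x hx).1
  have hτ : (0 : ℝ) < η / 4 := by linarith
  have hloc := sz_local ε (SS L h c δ) g (c - (ε - δ) + δ * ‖g‖ + η / 2) (ω ^ γ)
    ⟨hf, show c - (ε - δ) + δ * ‖g‖ + η / 2 < f g by linarith⟩
  have hcore := core_closed hL hρ hb g (η / 4)
  have hcrk := core_rk hρ hb g (η / 4) hτ hg
  obtain ⟨F, hF1, hF2⟩ := rk_bound hcore hcrk
  have key : ∀ f' ∈ SS L h c δ ∩ {f | c - (ε - δ) + δ * ‖g‖ + η / 2 < f g}, ∀ u : C(K, ℝ),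
      ‖u‖ ≤ 1 → (∀ x ∈ core L h g (η / 4), |u x| ≤ η / 4) → f' u ≤ ε - η / 4 :=
    fun f' hf' u hu huc => SS_core hδ hτ le_rfl hh g hg hf'.1 hf'.2 u hu huc
  rcases eq_or_ne γ 0 with rfl | hγ
  · have h1 := ((sz_mem _ _ _ _).1 hloc).2 0 (by simp)
    rw [sz_zero] at h1
    obtain ⟨a, bs, h1, h2, h3, h4, l, h5, h6⟩ := h1
    have hF3 : ∀ y ∈ core L h g (η / 4), y ∈ F := by
      intro y hy
      obtain ⟨x, hx, e | e⟩ := hF2 y hy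
      · rwa [e]
      · simp at e
    have hev : ∀ᶠ n in atTop, ∀ x ∈ F, |a n x| ≤ η / 4 := by
      rw [Filter.eventually_all_finset]
      intro x hx
      have h7 := (h2 (ContinuousMap.evalCLM ℝ x)).abs
      rw [abs_zero] at h7
      filter_upwards [h7.eventually (gt_mem_nhds hτ)] with n hn
      exact le_of_lt hn
    have h8 : l ≤ ε - η / 4 := by
      refine le_of_tendsto h6 ?_
      filter_upwards [hev] with n hn
      exact key (bs n) (h3 n) (a n) (h1 n) fun x hx => hn x (hF3 x hx)
    linarith
  · have hlt : (F.sup fun x => ρ x % ω ^ γ) < ω ^ γ := by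
      rw [Finset.sup_lt_iff (opow_pos γ omega0_pos)]
      exact fun x _ => Ordinal.mod_lt _ (opow_pos γ omega0_pos).ne'
    obtain ⟨γ', hγ', n, hn⟩ := (Ordinal.lt_omega0_opow hγ).1 hlt
    have hlt2 : ∀ y ∈ core L h g (η / 4), ρ y % ω ^ γ < ω ^ γ' * n := by
      intro y hy
      obtain ⟨x, hx, e⟩ := hF2 y hy
      have h1 : ρ x % ω ^ γ ≤ F.sup fun x => ρ x % ω ^ γ :=
        Finset.le_sup (f := fun x => ρ x % ω ^ γ) hx
      rcases e with rfl | e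
      · exact h1.trans_lt hn
      · exact (e.le.trans h1).trans_lt hn
    have hblk : ∀ y : K, ∃ b : ℕ, y ∈ core L h g (η / 4) →
        (ρ y % ω ^ γ) / ω ^ γ' = b ∧ b ≤ n := by
      intro y
      by_cases hy : y ∈ core L h g (η / 4)
      · have h1 := (Ordinal.div_lt (opow_pos γ' omega0_pos).ne').2 (hlt2 y hy)
        obtain ⟨b, hb'⟩ := Ordinal.lt_omega0.1 (h1.trans (natCast_lt_omega0 n))
        refine ⟨b, fun _ => ⟨hb', ?_⟩⟩
        rw [hb'] at h1
        exact_mod_cast h1.le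
      · exact ⟨0, fun h => absurd h hy⟩
    choose blk hblk using hblk
    have hb' : IsBlk (core L h g (η / 4)) (fun x => ρ x % ω ^ γ) γ' n
        (fun x => (n : ℝ) - blk x) :=
      ⟨blk, fun x hx => ⟨(hblk x hx).1, (hblk x hx).2, rfl⟩⟩
    have hfV := sz_sub _ _ _ hloc
    have hδ' : 0 ≤ ε - η / 4 := by
      have := key f hfV 0 (by simp) (fun x _ => by simpa using hτ.le)
      simpa using this
    have hsub : SS L h c δ ∩ {f | c - (ε - δ) + δ * ‖g‖ + η / 2 < f g} ⊆
        SS (core L h g (η / 4)) (fun x => (n : ℝ) - blk x) n (ε - η / 4) := by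
      intro f' hf'
      refine ⟨hf'.1.1, fun u hu => ?_⟩
      obtain ⟨u', h1, h2, h3⟩ := exists_soft u n (Nat.cast_nonneg n)
      have h4 : f' (u - u') ≤ n := (apply_le_norm hf'.1.1 _).trans h2
      have h5 : f' u' ≤ (ε - η / 4) * ‖u'‖ := by
        rcases eq_or_ne u' 0 with e | e
        · simp [e]
        · have hn0 : 0 < ‖u'‖ := norm_pos_iff.2 e
          have h6 := key f' hf' (‖u'‖⁻¹ • u') (by
            rw [norm_smul, norm_inv, norm_norm, inv_mul_cancel₀ hn0.ne']) (by
            intro x hx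
            have h7 : |u' x| ≤ 0 := (h1 x).trans (max_le (by
              have h8 := hu x hx
              have h9 : (0 : ℝ) ≤ blk x := Nat.cast_nonneg _
              linarith) le_rfl)
            have h8 : u' x = 0 := abs_nonpos_iff.1 h7
            simp [h8, hτ.le])
          rw [map_smul, _root_.smul_eq_mul, inv_mul_le_iff₀ hn0] at h6
          linarith
      have h6 : (ε - η / 4) * ‖u'‖ ≤ (ε - η / 4) * ‖u‖ := by gcongr
      rw [map_sub] at h4
      linarith
    obtain ⟨m, hm⟩ := exists_nat_gt ((n : ℝ) / (η / 4))
    rw [div_lt_iff₀ hτ] at hm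
    have hmem := sz_anti _ _ _ (ω ^ γ' * m) (omega0_opow_mul_nat_lt hγ' m).le hloc
    have hmem2 := UB_iter (ih γ' hγ') _ _ n _ n (ε - η / 4) ε hcore hcrk hb' hδ' m
      (sz_mono hsub _ hmem)
    have h0 := hmem2.2 0 (fun x hx => by
      have : (blk x : ℝ) ≤ n := by exact_mod_cast (hblk x hx).2
      simpa using this)
    simp only [map_zero, norm_zero, mul_zero, add_zero] at h0
    nlinarith

end upper_part

section ordinal_part

open Topology

/-- The last exponent in the Cantor normal form (the Cantor-Bendixson rank of the point). -/
noncomputable def rk (x : Ordinal) : Ordinal :=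
  log ω (sInf ((fun z => x - z) '' Iio x))

lemma rk_le {x z : Ordinal} (h : z < x) : rk x ≤ log ω (x - z) :=
  log_mono_right _ (csInf_le' ⟨z, h, rfl⟩)

lemma rk_spec {x : Ordinal} (hx : x ≠ 0) : ∃ z < x, ∀ y, z < y → y < x → rk y < rk x := by
  have hne : ((fun z => x - z) '' Iio x).Nonempty := ⟨x - 0, 0, pos_iff_ne_zero.2 hx, rfl⟩
  obtain ⟨z, hz, he⟩ := csInf_mem hne
  have hz : z < x := hz
  have he : x - z = sInf ((fun z => x - z) '' Iio x) := he
  have hrk : rk x = log ω (x - z) := by rw [rk, ← he]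
  have hpos : x - z ≠ 0 := by
    rw [Ne, Ordinal.sub_eq_zero_iff_le]; exact not_le.2 hz
  have hadd : z + (x - z) = x := Ordinal.add_sub_cancel_of_le hz.le
  have hle : x - z ≤ ω ^ rk x := by
    by_contra! hcon
    have h1 : z + ω ^ rk x < x := by
      conv_rhs => rw [← hadd]
      gcongr
    have h2 : x - z ≤ x - (z + ω ^ rk x) := by
      rw [he]; exact csInf_le' ⟨_, h1, rfl⟩
    rw [← Ordinal.sub_sub, hrk] at h2
    exact absurd h2 (not_le.2 (isLeast_sub_lt_omega0_opow_log hpos).1)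
  refine ⟨z, hz, fun y hzy hyx => ?_⟩
  have hy0 : y - z ≠ 0 := by
    rw [Ne, Ordinal.sub_eq_zero_iff_le]; exact not_le.2 hzy
  have h1 : z + (y - z) < z + (x - z) := by
    rw [hadd, Ordinal.add_sub_cancel_of_le hzy.le]; exact hyx
  have h2 : y - z < ω ^ rk x := ((add_lt_add_iff_left _).1 h1).trans_le hle
  exact (rk_le hzy).trans_lt ((lt_opow_iff_log_lt one_lt_omega0 hy0).1 h2)

lemma rk_opow (t : Ordinal) : rk (ω ^ t) = t := by
  have h : (fun z => (ω : Ordinal) ^ t - z) '' Iio (ω ^ t) = {ω ^ t} := by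
    ext w
    simp only [mem_image, mem_Iio, mem_singleton_iff]
    constructor
    · rintro ⟨z, hz, rfl⟩
      have := add_omega0_opow hz
      conv_lhs => rw [← this]
      exact Ordinal.add_sub_cancel _ _
    · rintro rfl
      exact ⟨0, opow_pos _ omega0_pos, Ordinal.sub_zero _⟩
  rw [rk, h, csInf_singleton, log_opow one_lt_omega0]

lemma rk_lt {t y : Ordinal} (ht : t ≠ 0) (h : y < ω ^ t) : rk y < t := by
  rcases eq_or_ne y 0 with rfl | hy
  · have : rk 0 = 0 := by simp [rk]
    rw [this]; exact pos_iff_ne_zero.2 ht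
  · have := rk_le (pos_iff_ne_zero.2 hy)
    rw [Ordinal.sub_zero] at this
    exact this.trans_lt ((lt_opow_iff_log_lt one_lt_omega0 hy).1 h)

lemma rk_isRk (θ : Ordinal) : IsRk (univ : Set (Iic θ)) (fun x => rk x.1) := by
  intro x _
  have hlt : ∀ᶠ y : Iic θ in 𝓝 x, y.1 < x.1 + 1 :=
    (continuous_subtype_val.tendsto x).eventually (gt_mem_nhds (Order.lt_add_one_iff.2 le_rfl))
  rcases eq_or_ne x.1 0 with h0 | h0
  · filter_upwards [hlt] with y hy _ hne
    rw [Order.lt_add_one_iff, h0, nonpos_iff_eq_zero] at hy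
    exact absurd (Subtype.ext (hy.trans h0.symm)) hne
  · obtain ⟨z, hz, h⟩ := rk_spec h0
    have hgt : ∀ᶠ y : Iic θ in 𝓝 x, z < y.1 :=
      (continuous_subtype_val.tendsto x).eventually (lt_mem_nhds hz)
    filter_upwards [hlt, hgt] with y hy1 hy2 _ hne
    exact h y.1 hy2 (lt_of_le_of_ne (Order.lt_add_one_iff.1 hy1) fun e => hne (Subtype.ext e))

lemma approx_point {r x z : Ordinal} (hx : x ≠ 0) (hd : ω ^ (r + 1) ∣ x) (hz : z < x) :
    ∃ y, z < y ∧ y < x ∧ (y ≠ 0 ∧ ω ^ r ∣ y) := by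
  have hr : (ω : Ordinal) ^ r ≠ 0 := (opow_pos r omega0_pos).ne'
  have h1 : z < ω ^ r * (z / ω ^ r + 1) := by simpa using Ordinal.lt_mul_succ_div z hr
  refine ⟨ω ^ r * (z / ω ^ r + 1), h1, ?_, (zero_le.trans_lt h1).ne', dvd_mul_right _ _⟩
  obtain ⟨q, rfl⟩ := hd
  rw [opow_add, opow_one, mul_assoc] at hz hx ⊢
  have hq : q ≠ 0 := by rintro rfl; simp at hx
  have hlim : Order.IsSuccLimit (ω * q) :=
    isSuccLimit_mul_left isSuccLimit_omega0 (pos_iff_ne_zero.2 hq)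
  have h2 := (Ordinal.lt_mul_iff_div_lt hr).1 hz
  have h3 : z / ω ^ r + 1 < ω * q := by simpa using hlim.succ_lt h2
  exact (mul_lt_mul_iff_right₀ (pos_iff_ne_zero.2 hr)).2 h3

lemma exists_seq {x : Ordinal} (hx1 : x < ω₁) (hx : x ≠ 0) (P : Ordinal → Prop)
    (h : ∀ z < x, ∃ y, z < y ∧ y < x ∧ P y) :
    ∃ s : ℕ → Ordinal, StrictMono s ∧ (∀ n, s n < x ∧ P (s n)) ∧ Tendsto s atTop (𝓝 x) := by
  have hc : (Iio x).Countable := by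
    rw [← Cardinal.le_aleph0_iff_set_countable, Cardinal.mk_Iio_ordinal,
      Cardinal.lift_le_aleph0, ← Cardinal.lt_aleph_one_iff]
    exact Cardinal.lt_omega_iff_card_lt.1 hx1
  obtain ⟨e, he⟩ := hc.exists_eq_range ⟨0, pos_iff_ne_zero.2 hx⟩
  have hee : ∀ n, e n < x := fun n => by
    have : e n ∈ Iio x := he ▸ mem_range_self n
    exact this
  choose! nxt hn1 hn2 hn3 using h
  let s : ℕ → Ordinal := fun n => Nat.rec (nxt (e 0)) (fun n p => nxt (max p (e (n + 1)))) n
  have hs0 : s 0 = nxt (e 0) := rfl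
  have hs1 : ∀ n, s (n + 1) = nxt (max (s n) (e (n + 1))) := fun n => rfl
  have hsx : ∀ n, s n < x ∧ P (s n) := by
    intro n
    induction n with
    | zero => exact ⟨hn2 _ (hee 0), hn3 _ (hee 0)⟩
    | succ n ih =>
      rw [hs1]
      have : max (s n) (e (n + 1)) < x := max_lt ih.1 (hee _)
      exact ⟨hn2 _ this, hn3 _ this⟩
  have hstep : ∀ n, max (s n) (e (n + 1)) < s (n + 1) := fun n => by
    rw [hs1]; exact hn1 _ (max_lt (hsx n).1 (hee _))
  have hmono : StrictMono s := strictMono_nat_of_lt_succ fun n =>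
    (le_max_left _ _).trans_lt (hstep n)
  refine ⟨s, hmono, hsx, ?_⟩
  rw [tendsto_order]
  constructor
  · intro z hz
    obtain ⟨m, hm⟩ : z ∈ range e := he ▸ hz
    have : z < s m := by
      rw [← hm]
      cases m with
      | zero => exact hn1 _ (hee 0)
      | succ m => exact (le_max_right _ _).trans_lt (hstep m)
    filter_upwards [eventually_ge_atTop m] with n hn
    exact this.trans_le (hmono.monotone hn)
  · intro z hz
    exact Eventually.of_forall fun n => (hsx n).1.trans hz

end ordinal_part

section lower_part

open Topology

lemma weakly_null {K : Type*} [TopologicalSpace K] [CompactSpace K] (a : ℕ → C(K, ℝ)) (C : ℝ)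
    (hC : 0 ≤ C) (h : ∀ (T : Finset ℕ) (x : K), ∑ n ∈ T, |a n x| ≤ C) (F : C(K, ℝ) →L[ℝ] ℝ) :
    Tendsto (fun n => F (a n)) atTop (𝓝 0) := by
  have hs : Summable fun n => |F (a n)| := by
    refine summable_of_sum_le (c := ‖F‖ * C) (fun n => abs_nonneg _) fun T => ?_
    have h1 : ∑ n ∈ T, |F (a n)| = F (∑ n ∈ T, (SignType.sign (F (a n)) : ℝ) • a n) := by
      rw [map_sum]
      refine Finset.sum_congr rfl fun n _ => ?_
      rw [map_smul, _root_.smul_eq_mul, sign_mul_self]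
    rw [h1]
    refine (le_abs_self _).trans ((F.le_opNorm _).trans ?_)
    gcongr
    rw [ContinuousMap.norm_le _ hC]
    intro x
    rw [ContinuousMap.sum_apply]
    refine (norm_sum_le _ _).trans (le_trans (Finset.sum_le_sum fun n _ => ?_) (h T x))
    rw [ContinuousMap.smul_apply, norm_smul, Real.norm_eq_abs, Real.norm_eq_abs]
    refine mul_le_of_le_one_left (abs_nonneg _) ?_
    rcases lt_trichotomy (F (a n)) 0 with h | h | h <;> simp [h]
  have := hs.tendsto_atTop_zero
  exact (tendsto_zero_iff_abs_tendsto_zero _).2 this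

variable {θ : Ordinal}

/-- Equally weighted sum of point evaluations. -/
noncomputable def stt (M : ℕ) (y : ℕ → Iic θ) : C(Iic θ, ℝ) →L[ℝ] ℝ :=
  ∑ j ∈ Finset.range M, (1 / M : ℝ) • ContinuousMap.evalCLM ℝ (y j)

lemma stt_apply (M : ℕ) (y : ℕ → Iic θ) (g : C(Iic θ, ℝ)) :
    stt M y g = ∑ j ∈ Finset.range M, (1 / M : ℝ) * g (y j) := by
  simp [stt, ContinuousMap.evalCLM]

lemma stt_norm (M : ℕ) (hM : 0 < M) (y : ℕ → Iic θ) : ‖stt M y‖ ≤ 1 := by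
  refine ContinuousLinearMap.opNorm_le_bound _ zero_le_one fun g => ?_
  rw [stt_apply, one_mul]
  refine (norm_sum_le _ _).trans ?_
  have hM' : (0 : ℝ) < M := by exact_mod_cast hM
  calc ∑ j ∈ Finset.range M, ‖(1 / M : ℝ) * g (y j)‖
      ≤ ∑ j ∈ Finset.range M, (1 / M : ℝ) * ‖g‖ := by
        refine Finset.sum_le_sum fun j _ => ?_
        rw [norm_mul, Real.norm_of_nonneg (by positivity)]
        gcongr
        exact g.norm_coe_le_norm _
    _ = ‖g‖ := by
        rw [Finset.sum_const, Finset.card_range, _root_.nsmul_eq_mul]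
        field_simp

lemma clopen_Ioc (u v : Ordinal) : IsClopen {x : Iic θ | u < x.1 ∧ x.1 ≤ v} := by
  constructor
  · have : {x : Iic θ | u < x.1 ∧ x.1 ≤ v} = {x : Iic θ | u + 1 ≤ x.1} ∩ {x : Iic θ | x.1 ≤ v} := by
      ext x; simp [Order.add_one_le_iff]
    rw [this]
    exact (isClosed_le continuous_const continuous_subtype_val).inter
      (isClosed_le continuous_subtype_val continuous_const)
  · have : {x : Iic θ | u < x.1 ∧ x.1 ≤ v} = {x : Iic θ | u < x.1} ∩ {x : Iic θ | x.1 < v + 1} := by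
      ext x; simp [Order.lt_add_one_iff]
    rw [this]
    exact (isOpen_lt continuous_const continuous_subtype_val).inter
      (isOpen_lt continuous_subtype_val continuous_const)

lemma lower_step (hθ : θ < ω₁) {M : ℕ} {ε : ℝ} {A : Finset ℕ} (hA : A ⊆ Finset.range M)
    (hAε : ε ≤ (A.card : ℝ) / M) (y : ℕ → Iic θ) (r : ℕ → Ordinal)
    (hy : ∀ j ∈ A, (y j).1 ≠ 0 ∧ ω ^ (r j + 1) ∣ (y j).1) (T : Set (C(Iic θ, ℝ) →L[ℝ] ℝ))
    (hT : ∀ y' : ℕ → Iic θ, (∀ j ∉ A, y' j = y j) →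
      (∀ j ∈ A, (y' j).1 ≠ 0 ∧ ω ^ r j ∣ (y' j).1) → stt M y' ∈ T) :
    stt M y ∈ DD ε T := by
  classical
  have hseq : ∀ j, ∃ s : ℕ → Ordinal, j ∈ A → (StrictMono s ∧
      (∀ n, s n < (y j).1 ∧ (s n ≠ 0 ∧ ω ^ r j ∣ s n)) ∧ Tendsto s atTop (𝓝 (y j).1)) := by
    intro j
    by_cases hj : j ∈ A
    · obtain ⟨s, hs⟩ := exists_seq (lt_of_le_of_lt (y j).2 hθ) (hy j hj).1
        (fun w => w ≠ 0 ∧ ω ^ r j ∣ w) (fun z hz => approx_point (hy j hj).1 (hy j hj).2 hz)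
      exact ⟨s, fun _ => hs⟩
    · exact ⟨fun _ => 0, fun h => absurd h hj⟩
  choose s hs using hseq
  let y' : ℕ → ℕ → Iic θ := fun n j =>
    if hj : j ∈ A then ⟨s j (n + 1), (((hs j hj).2.1 (n + 1)).1.le.trans (y j).2)⟩ else y j
  have hy'A : ∀ n, ∀ j ∈ A, (y' n j).1 = s j (n + 1) := fun n j hj => by simp [y', hj]
  have hy'N : ∀ n, ∀ j ∉ A, y' n j = y j := fun n j hj => by simp [y', hj]
  let W : ℕ → Set (Iic θ) := fun n => ⋃ j ∈ A, {x : Iic θ | s j n < x.1 ∧ x.1 ≤ s j (n + 1)}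
  have hW : ∀ n, IsClopen (W n) := fun n => isClopen_biUnion_finset fun j _ => clopen_Ioc _ _
  let a : ℕ → C(Iic θ, ℝ) := fun n =>
    ⟨(W n).indicator fun _ => (1 : ℝ), (hW n).continuous_indicator continuous_const⟩
  have ha : ∀ n x, a n x = (W n).indicator (fun _ => (1 : ℝ)) x := fun n x => rfl
  have ha01 : ∀ n x, 0 ≤ a n x ∧ a n x ≤ 1 := by
    intro n x
    rw [ha]
    by_cases h : x ∈ W n <;> simp [h]
  have hnull : ∀ F : C(Iic θ, ℝ) →L[ℝ] ℝ, Tendsto (fun n => F (a n)) atTop (𝓝 0) := by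
    refine weakly_null a (A.card : ℝ) (Nat.cast_nonneg _) fun T x => ?_
    have h1 : ∀ n, |a n x| ≤ ∑ j ∈ A, if s j n < x.1 ∧ x.1 ≤ s j (n + 1) then (1 : ℝ) else 0 := by
      intro n
      rw [abs_of_nonneg (ha01 n x).1, ha]
      by_cases h : x ∈ W n
      · obtain ⟨j, hj, hjx⟩ := mem_iUnion₂.1 h
        have hjx : s j n < x.1 ∧ x.1 ≤ s j (n + 1) := hjx
        rw [indicator_of_mem h]
        refine le_trans ?_ (Finset.single_le_sum (fun i _ => by split_ifs <;> norm_num) hj)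
        rw [if_pos hjx]
      · rw [indicator_of_notMem h]
        exact Finset.sum_nonneg fun i _ => by split_ifs <;> norm_num
    refine (Finset.sum_le_sum fun n _ => h1 n).trans ?_
    rw [Finset.sum_comm]
    refine (Finset.sum_le_card_nsmul A _ 1 fun j hj => ?_).trans (by simp)
    rw [← Finset.sum_filter, Finset.sum_const, _root_.nsmul_eq_mul, mul_one]
    have : (T.filter fun n => s j n < x.1 ∧ x.1 ≤ s j (n + 1)).card ≤ 1 := by
      rw [Finset.card_le_one]
      intro p hp q hq
      have hp := (Finset.mem_filter.1 hp).2
      have hq := (Finset.mem_filter.1 hq).2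
      have hm := (hs j hj).1
      have h2 : p < q + 1 := hm.lt_iff_lt.1 (hp.1.trans_le hq.2)
      have h3 : q < p + 1 := hm.lt_iff_lt.1 (hq.1.trans_le hp.2)
      omega
    exact_mod_cast this
  have hconv : ∀ j, Tendsto (fun n => y' n j) atTop (𝓝 (y j)) := by
    intro j
    by_cases hj : j ∈ A
    · rw [tendsto_subtype_rng]
      have : (fun n => (y' n j).1) = fun n => s j (n + 1) := funext fun n => hy'A n j hj
      rw [this]
      exact (hs j hj).2.2.comp (tendsto_add_atTop_nat 1)
    · have : (fun n => y' n j) = fun _ => y j := funext fun n => hy'N n j hj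
      rw [this]; exact tendsto_const_nhds
  refine ⟨a, fun n => stt M (y' n), fun n => ?_, hnull, fun n => ?_, fun g => ?_,
    (A.card : ℝ) / M, hAε, ?_⟩
  · rw [ContinuousMap.norm_le _ zero_le_one]
    intro x
    rw [Real.norm_eq_abs, abs_of_nonneg (ha01 n x).1]
    exact (ha01 n x).2
  · refine hT (y' n) (hy'N n) fun j hj => ?_
    rw [hy'A n j hj]
    exact ((hs j hj).2.1 (n + 1)).2
  · simp only [stt_apply]
    exact tendsto_finsetSum _ fun j _ =>
      ((g.continuous.tendsto (y j)).comp (hconv j)).const_mul _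
  · simp only [stt_apply]
    have e : (A.card : ℝ) / M = ∑ j ∈ Finset.range M, (1 / M : ℝ) * (if j ∈ A then 1 else 0) := by
      rw [← Finset.mul_sum, Finset.sum_ite_mem, Finset.inter_eq_right.2 hA]
      simp; ring
    rw [e]
    refine tendsto_finsetSum _ fun j _ => Tendsto.const_mul _ ?_
    by_cases hj : j ∈ A
    · have : (fun n => a n (y' n j)) = fun _ => (1 : ℝ) := by
        funext n
        rw [ha, indicator_of_mem]
        refine mem_iUnion₂.2 ⟨j, hj, ?_⟩
        change s j n < (y' n j).1 ∧ (y' n j).1 ≤ s j (n + 1)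
        rw [hy'A n j hj]
        exact ⟨(hs j hj).1 (Nat.lt_succ_self n), le_rfl⟩
      rw [this, if_pos hj]; exact tendsto_const_nhds
    · have : (fun n => a n (y' n j)) = fun n => ContinuousMap.evalCLM ℝ (y j) (a n) := by
        funext n
        rw [hy'N n j hj]; rfl
      rw [this, if_neg hj]; exact hnull _

/-- The number of the first `s` rounds in which the index `j` takes part. -/
def cnt (A : ℕ → Finset ℕ) (s j : ℕ) : ℕ := ((Finset.range s).filter fun i => j ∈ A i).card

lemma cnt_succ (A : ℕ → Finset ℕ) (s j : ℕ) :
    cnt A (s + 1) j = cnt A s j + if j ∈ A s then 1 else 0 := by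
  unfold cnt
  rw [Finset.range_add_one, Finset.filter_insert]
  split_ifs <;> simp

lemma lower_main (hθ : θ < ω₁) (γ : Ordinal) {M : ℕ} (hM : 0 < M) {ε : ℝ} (A : ℕ → Finset ℕ)
    (hA : ∀ s, A s ⊆ Finset.range M) (hAε : ∀ s, ε ≤ ((A s).card : ℝ) / M) (s : ℕ) :
    ∀ y : ℕ → Iic θ, (∀ j, (y j).1 ≠ 0 ∧ ω ^ (ω ^ γ * (cnt A s j : Ordinal)) ∣ (y j).1) →
      stt M y ∈ SzlenkSet C(Iic θ, ℝ) ε {f | ‖f‖ ≤ 1} (ω ^ γ * s) := by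
  induction s with
  | zero =>
    intro y _
    simp only [Nat.cast_zero, mul_zero, sz_zero]
    exact stt_norm M hM y
  | succ s ih =>
    have key : ∀ ρ : Ordinal, ∀ y : ℕ → Iic θ, (∀ j, (y j).1 ≠ 0 ∧
        ω ^ (ω ^ γ * (cnt A s j : Ordinal) + if j ∈ A s then ρ else 0) ∣ (y j).1) →
        stt M y ∈ SzlenkSet C(Iic θ, ℝ) ε {f | ‖f‖ ≤ 1} (ω ^ γ * s + ρ) := by
      intro ρ
      induction ρ using WellFoundedLT.induction with
      | _ ρ ihρ =>
      intro y hy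
      rcases eq_or_ne ρ 0 with rfl | hρ
      · rw [add_zero]
        exact ih y fun j => by simpa using hy j
      · rw [sz_mem]
        refine ⟨stt_norm M hM y, fun α hα => ?_⟩
        obtain ⟨ρ', hρ', hαρ⟩ : ∃ ρ' < ρ, α ≤ ω ^ γ * s + ρ' := by
          rcases le_total α (ω ^ γ * s) with h | h
          · exact ⟨0, pos_iff_ne_zero.2 hρ, by simpa using h⟩
          · refine ⟨α - ω ^ γ * s, ?_, (Ordinal.add_sub_cancel_of_le h).ge⟩
            rw [← Ordinal.add_sub_cancel_of_le h] at hα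
            exact (add_lt_add_iff_left _).1 hα
        refine DD_mono (sz_anti _ _ _ _ hαρ) ?_
        refine lower_step hθ (hA s) (hAε s) y (fun j => ω ^ γ * (cnt A s j : Ordinal) + ρ')
          (fun j hj => ⟨(hy j).1, ?_⟩) _ fun y' h1 h2 => ?_
        · have := (hy j).2
          rw [if_pos hj] at this
          refine (opow_dvd_opow ω ?_).trans this
          rw [add_assoc]
          gcongr
          exact Order.add_one_le_iff.2 hρ'
        · refine ihρ ρ' hρ' y' fun j => ?_
          by_cases hj : j ∈ A s
          · rw [if_pos hj]; exact h2 j hj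
          · have := hy j
            rw [if_neg hj] at this ⊢
            rw [h1 j hj]; exact this
    intro y hy
    have e : (ω : Ordinal) ^ γ * ((s + 1 : ℕ) : Ordinal) = ω ^ γ * s + ω ^ γ := by
      push_cast; rw [mul_add_one]
    rw [e]
    refine key _ y fun j => ?_
    have := hy j
    rw [cnt_succ] at this
    split_ifs at this ⊢ with hj
    · rw [Nat.cast_add, Nat.cast_one, mul_add_one] at this; exact this
    · simpa using this

lemma cyc_card {k M : ℕ} (hkM : k ≤ M) (j : ℕ) :
    ((Finset.range M).filter fun i => (i + j) % M < k).card = k := by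
  have hp : Function.Periodic (fun i => (i + j) % M < k) M := by
    intro i
    simp only [eq_iff_iff]
    rw [show i + M + j = (i + j) + M by ring, Nat.add_mod_right]
  have hp2 : Function.Periodic (fun i => i % M < k) M := by
    intro i; simp
  have h1 := Nat.filter_Ico_card_eq_of_periodic j M (fun i => i % M < k) hp2
  have h2 : ((Finset.range M).filter fun i => (i + j) % M < k).card =
      ((Finset.Ico j (j + M)).filter fun i => i % M < k).card := by
    refine Finset.card_bij (fun i _ => i + j) ?_ ?_ ?_
    · intro i hi
      simp only [Finset.mem_filter, Finset.mem_range, Finset.mem_Ico] at hi ⊢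
      exact ⟨by omega, hi.2⟩
    · intro a _ b _ hab; simpa using hab
    · intro b hb
      simp only [Finset.mem_filter, Finset.mem_range, Finset.mem_Ico] at hb
      refine ⟨b - j, ?_, by omega⟩
      simp only [Finset.mem_filter, Finset.mem_range]
      rw [Nat.sub_add_cancel hb.1.1]
      exact ⟨by omega, hb.2⟩
  rw [h2, h1, Nat.count_eq_card_filter_range]
  have h3 : ((Finset.range M).filter fun i => i % M < k) = Finset.range k := by
    ext i
    simp only [Finset.mem_filter, Finset.mem_range]
    constructor
    · rintro ⟨ha, hb⟩; rwa [Nat.mod_eq_of_lt ha] at hb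
    · intro h; exact ⟨by omega, by rwa [Nat.mod_eq_of_lt (by omega)]⟩
  rw [h3, Finset.card_range]

end lower_part

section final_part

open Topology

lemma theta_lt (γ : Ordinal) (hγ : γ < ω₁) (k : ℕ) :
    (ω : Ordinal) ^ ((ω : Ordinal) ^ γ * (k : Ordinal)) < ω₁ := by
  have h1 : (ω : Ordinal) < ω₁ := omega0_lt_omega_one
  have h2 : (k : Ordinal) < ω₁ := (natCast_lt_omega0 k).trans h1
  exact isPrincipal_opow_omega 1 h1 (isPrincipal_mul_omega 1 (isPrincipal_opow_omega 1 h1 hγ) h2)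

lemma lower_final (γ : Ordinal) (hγ : γ < ω₁) (k M : ℕ) (hk : 0 < k) (hkM : k ≤ M) (ε : ℝ)
    (hε : ε ≤ (k : ℝ) / M) :
    (SzlenkSet C(Set.Iic ((ω : Ordinal) ^ ((ω : Ordinal) ^ γ * (k : Ordinal))), ℝ) ε
      {f | ‖f‖ ≤ 1} (ω ^ γ * (M : Ordinal))).Nonempty := by
  refine ⟨_, lower_main (theta_lt γ hγ k) γ (lt_of_lt_of_le hk hkM)
    (fun s => (Finset.range M).filter fun i => (i + s) % M < k)
    (fun s => Finset.filter_subset _ _) (fun s => ?_) M (fun _ => ⟨_, self_mem_Iic⟩) (fun j => ⟨?_, ?_⟩)⟩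
  · rw [cyc_card hkM]; exact hε
  · exact (opow_pos _ omega0_pos).ne'
  · refine opow_dvd_opow _ ?_
    gcongr
    unfold cnt
    refine le_trans (Finset.card_le_card ?_) (cyc_card hkM j).le
    intro i hi
    simp only [Finset.mem_filter] at hi ⊢
    refine ⟨hi.1, ?_⟩
    rw [add_comm]; exact hi.2.2

lemma upper_final (γ : Ordinal) (k M : ℕ) (hk : 0 < k) (ε : ℝ)
    (hε : (k : ℝ) - M * ε < ε) :
    SzlenkSet C(Set.Iic ((ω : Ordinal) ^ ((ω : Ordinal) ^ γ * (k : Ordinal))), ℝ) ε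
      {f | ‖f‖ ≤ 1} (ω ^ γ * (M : Ordinal) + 1) = ∅ := by
  set θ := (ω : Ordinal) ^ ((ω : Ordinal) ^ γ * (k : Ordinal)) with hθ
  have hpos : (0 : Ordinal) < ω ^ γ := opow_pos _ omega0_pos
  have ht : (ω : Ordinal) ^ γ * (k : Ordinal) ≠ 0 :=
    mul_ne_zero hpos.ne' (by exact_mod_cast hk.ne')
  have hrk : ∀ x : Iic θ, x.1 ≠ θ → rk x.1 / ω ^ γ < k := fun x hx =>
    (Ordinal.div_lt hpos.ne').2 (rk_lt ht (lt_of_le_of_ne x.2 hx))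
  have hrkθ : rk θ / ω ^ γ = k := by
    rw [hθ, rk_opow, Ordinal.mul_div_cancel _ hpos.ne']
  have hex : ∀ x : Iic θ, ∃ n : ℕ, rk x.1 / ω ^ γ = n ∧ n ≤ k ∧ (x.1 ≠ θ → n < k) := by
    intro x
    by_cases hx : x.1 = θ
    · exact ⟨k, by rw [hx, hrkθ], le_rfl, fun h => absurd hx h⟩
    · obtain ⟨n, hn⟩ := lt_omega0.1 ((hrk x hx).trans (natCast_lt_omega0 k))
      have h2 : n < k := by
        have := hrk x hx
        rw [hn] at this
        exact_mod_cast this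
      exact ⟨n, hn, h2.le, fun _ => h2⟩
  choose blk h1 h2 h3 using hex
  set h : Iic θ → ℝ := fun x => (k : ℝ) - blk x with hh
  have hb : IsBlk (univ : Set (Iic θ)) (fun x => rk x.1) γ k h :=
    ⟨blk, fun x _ => ⟨h1 x, h2 x, rfl⟩⟩
  have hsub : {f : C(Iic θ, ℝ) →L[ℝ] ℝ | ‖f‖ ≤ 1} ⊆ SS univ h k 0 := by
    intro f hf
    refine ⟨hf, fun g hg => ?_⟩
    have : ‖g‖ ≤ k := by
      rw [ContinuousMap.norm_le _ (Nat.cast_nonneg k)]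
      intro x
      exact (hg x (mem_univ x)).trans (blk_nonneg hb x (mem_univ x)).2
    have := apply_le_norm hf g
    linarith
  rw [eq_empty_iff_forall_notMem]
  intro b hbm
  rw [sz_succ] at hbm
  obtain ⟨_, a, bs, ha, hnull, hbs, _, l, hl, hlim⟩ := hbm
  let p : Iic θ := ⟨θ, self_mem_Iic⟩
  have hap : Tendsto (fun n => a n p) atTop (𝓝 0) := hnull (ContinuousMap.evalCLM ℝ p)
  have hbound : ∀ n, bs n (a n) ≤ (k : ℝ) - M * ε + |a n p| := by
    intro n
    have hm := UB_iter (UB_all γ) univ _ k h k 0 ε isClosed_univ (rk_isRk θ) hb le_rfl M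
      (sz_mono hsub _ (hbs n))
    obtain ⟨g, hg1, hg2, _⟩ := exists_soft (a n) |a n p| (abs_nonneg _)
    have hg : bs n g ≤ (k : ℝ) - M * (ε - 0) + 0 * ‖g‖ := by
      refine hm.2 g fun x _ => (hg1 x).trans ?_
      refine max_le ?_ (blk_nonneg hb x (mem_univ x)).1
      by_cases hx : x.1 = θ
      · have : x = p := Subtype.ext hx
        rw [this, _root_.sub_self]
        exact (blk_nonneg hb p (mem_univ p)).1
      · have h5 : (blk x : ℝ) + 1 ≤ k := by exact_mod_cast h3 x hx
        have h6 : |a n x| ≤ 1 := ((a n).norm_coe_le_norm x).trans (ha n)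
        have h7 := abs_nonneg (a n p)
        simp only [hh]
        linarith
    have h8 := (apply_le_norm hm.1 (a n - g)).trans hg2
    rw [map_sub] at h8
    linarith
  have hlim2 : Tendsto (fun n => (k : ℝ) - M * ε + |a n p|) atTop (𝓝 ((k : ℝ) - M * ε + |0|)) :=
    hap.abs.const_add _
  have := le_of_tendsto_of_tendsto' hlim hlim2 hbound
  rw [abs_zero] at this
  linarith

end final_part

/-- Corollary 3.10: the ε-Szlenk index of the unit ball of
`C([0, ω^{ω^γ·k}])^*` is `ω^γ·⌊k/ε⌋ + 1`. -/
theorem stmt_8 (γ : Ordinal) (hγ : γ < ω₁) (k : ℕ) (hk : 0 < k) (ε : ℝ)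
    (hε : 0 < ε) (hε1 : ε ≤ 1) :
    SzlenkIndex (C(Set.Iic ((ω : Ordinal) ^ ((ω : Ordinal) ^ γ * (k : Ordinal))), ℝ)) ε
        {f : C(Set.Iic ((ω : Ordinal) ^ ((ω : Ordinal) ^ γ * (k : Ordinal))), ℝ) →L[ℝ] ℝ |
          ‖f‖ ≤ 1} =
      (ω : Ordinal) ^ γ * ((⌊(k : ℝ) / ε⌋₊ : ℕ) : Ordinal) + 1 := by
  have hMk : k ≤ ⌊(k : ℝ) / ε⌋₊ := by
    apply Nat.le_floor
    rw [le_div_iff₀ hε]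
    exact mul_le_of_le_one_right (Nat.cast_nonneg k) hε1
  have hM1 : (⌊(k : ℝ) / ε⌋₊ : ℝ) ≤ (k : ℝ) / ε := Nat.floor_le (by positivity)
  have hM2 : (k : ℝ) / ε < (⌊(k : ℝ) / ε⌋₊ : ℝ) + 1 := Nat.lt_floor_add_one _
  generalize ⌊(k : ℝ) / ε⌋₊ = M at *
  have hMpos : (0 : ℝ) < M := by exact_mod_cast lt_of_lt_of_le hk hMk
  have hup := upper_final γ k M hk ε (by rw [div_lt_iff₀ hε] at hM2; linarith)
  have hlow := lower_final γ hγ k M hk hMk ε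
    (by rw [le_div_iff₀ hε] at hM1; rw [le_div_iff₀ hMpos]; linarith)
  unfold SzlenkIndex
  refine le_antisymm (csInf_le' hup) (le_csInf ⟨_, hup⟩ fun α hα => ?_)
  by_contra hlt
  rw [not_le, Order.lt_add_one_iff] at hlt
  obtain ⟨f, hf⟩ := hlow
  have := sz_anti _ _ _ α hlt hf
  rw [mem_setOf_eq] at hα
  rw [hα] at this
  exact this
end

section
/- Let X = X_{a,b} be the Bourgain–Delbaen space and Q : ℓ∞^* → X^* the restriction (quotient) map. Then the sequence (Q e_n^*)_{n∈ℕ} is equivalent to the standard unit vector basis of ℓ₁; in particular, for every finitely supported sequence of reals (a_k), λ^{-1} Σ_k |a_k| ≤ ‖Σ_k a_k Q e_k^*‖_{X^*} ≤ Σ_k |a_k|. Moreover, the closed linear span of {Q e_n^* : n ∈ ℕ} is all of X^*. -/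
open MeasureTheory Set Ordinal Filter
open scoped Classical

/-- `ℓ∞ = ℓ∞(ℕ)`. -/
noncomputable abbrev linf : Type := lp (fun _ : ℕ => ℝ) ⊤

/-- The `k`-th coordinate functional `e_k^*` on `ℓ∞`. -/
noncomputable def coordFn (k : ℕ) : linf →L[ℝ] ℝ :=
  LinearMap.mkContinuous
    { toFun := fun x => x k
      map_add' := fun _ _ => rfl
      map_smul' := fun _ _ => rfl }
    1 (fun x => by
      rw [one_mul]
      exact lp.norm_apply_le_norm (E := fun _ : ℕ => ℝ) ENNReal.top_ne_zero x k)

/-- The `k`-th coordinate vector `e_k` of `ℓ∞`. -/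
noncomputable def ek (k : ℕ) : linf := lp.single ⊤ k (1 : ℝ)

/-- `E_n = span{e_k : 1 ≤ k ≤ d n}`. -/
noncomputable def Esub (d : ℕ → ℕ) (n : ℕ) : Submodule ℝ linf :=
  Submodule.span ℝ {x : linf | ∃ k : ℕ, 1 ≤ k ∧ k ≤ d n ∧ x = ek k}

/-- All the data of the Bourgain–Delbaen construction: the constants `a`, `b`, `λ`, the
dimensions `d n`, the enumeration `φ` of tuples `(σ',i,m,σ'',j)`, the coordinate projections
`π_m`, the embeddings `i_{m,n}` and the limit projections `P_m`, together with their defining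
properties. -/
structure BDSetup where
  a : ℝ
  b : ℝ
  lam : ℝ
  hb : 0 < b
  hba : b < a
  ha : a < 1
  hlam : 1 < lam
  hineq : a + 2 * b * lam < lam
  /-- the dimensions -/
  d : ℕ → ℕ
  hd1 : d 1 = 1
  hd2 : d 2 = 2
  /-- the enumeration of the tuples `(σ', i, m, σ'', j)` -/
  φ : ℕ → ℤ × ℕ × ℕ × ℤ × ℕ
  hφ : ∀ n : ℕ, 2 ≤ n → Set.BijOn φ {k : ℕ | d n < k ∧ k ≤ d (n + 1)}
      {q : ℤ × ℕ × ℕ × ℤ × ℕ | (q.1 = 1 ∨ q.1 = -1) ∧ (q.2.2.2.1 = 1 ∨ q.2.2.2.1 = -1) ∧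
        1 ≤ q.2.2.1 ∧ q.2.2.1 < n ∧ 1 ≤ q.2.1 ∧ q.2.1 ≤ d q.2.2.1 ∧
        1 ≤ q.2.2.2.2 ∧ q.2.2.2.2 ≤ d n}
  /-- the coordinate projections `π_m` -/
  pi : ℕ → (linf →L[ℝ] linf)
  hpi : ∀ (m : ℕ) (x : linf) (k : ℕ), pi m x k = if 1 ≤ k ∧ k ≤ d m then x k else 0
  /-- the embeddings `i_{m,n}` -/
  iMap : ℕ → ℕ → (linf →L[ℝ] linf)
  hi12 : ∀ x : linf, x ∈ Esub d 1 → iMap 1 2 x = x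
  histep : ∀ n : ℕ, 2 ≤ n → ∀ x : linf, x ∈ Esub d n →
    iMap n (n + 1) x = x + ∑ k ∈ Finset.Ioc (d n) (d (n + 1)),
      (a * ((φ k).1 : ℝ) * x (φ k).2.1 +
        b * (((φ k).2.2.2.1 : ℤ) : ℝ) *
          ((x - iMap (φ k).2.2.1 n (pi (φ k).2.2.1 x)) (φ k).2.2.2.2)) • ek k
  hicomp : ∀ m n : ℕ, 1 ≤ m → m < n → ∀ x : linf, x ∈ Esub d m →
    iMap m (n + 1) x = iMap n (n + 1) (iMap m n x)
  hinorm : ∀ m n : ℕ, 1 ≤ m → m < n → ∀ x : linf, x ∈ Esub d m → ‖iMap m n x‖ ≤ lam * ‖x‖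
  /-- the coordinatewise limit projections `P_m` -/
  P : ℕ → (linf →L[ℝ] linf)
  hP0 : P 0 = 0
  hPlim : ∀ m : ℕ, 1 ≤ m → ∀ (x : linf) (k : ℕ),
    Filter.Tendsto (fun n => (iMap m n (pi m x)) k) Filter.atTop (nhds (P m x k))
  hPproj : ∀ m : ℕ, (P m).comp (P m) = P m
  hPnorm : ∀ m : ℕ, ‖P m‖ ≤ lam

/-- The Bourgain–Delbaen space `X = X_{a,b}`, the closed linear span of `⋃ m, P_m(E_m)`. -/
noncomputable def Xsub (S : BDSetup) : Submodule ℝ linf :=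
  (Submodule.span ℝ (⋃ m ∈ {m : ℕ | 1 ≤ m}, (S.P m) '' (Esub S.d m))).topologicalClosure

/-- The restriction (quotient) map `Q : ℓ∞^* → X^*`. -/
noncomputable def QMap (S : BDSetup) (f : linf →L[ℝ] ℝ) : (Xsub S) →L[ℝ] ℝ :=
  f.comp (Xsub S).subtypeL

/-- The images `Q e_k^*` of the coordinate functionals in `X^*`. -/
noncomputable def Qe (S : BDSetup) (k : ℕ) : (Xsub S) →L[ℝ] ℝ := QMap S (coordFn k)

theorem linf_ext {x y : linf} (h : ∀ k, x k = y k) : x = y :=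
  Subtype.ext (funext h)

theorem linf_coord_le (x : linf) (k : ℕ) : |x k| ≤ ‖x‖ :=
  lp.norm_apply_le_norm (E := fun _ : ℕ => ℝ) ENNReal.top_ne_zero x k

theorem ek_apply (k j : ℕ) : (ek k) j = if j = k then (1 : ℝ) else 0 := by
  unfold ek
  rw [lp.single_apply]
  by_cases h : j = k
  · subst h; simp
  · simp [h]

theorem sum_coord {ι : Type*} (s : Finset ι) (f : ι → linf) (k : ℕ) :
    (∑ l ∈ s, f l) k = ∑ l ∈ s, f l k :=
  map_sum (coordFn k) f s

theorem sum_ek_apply (s : Finset ℕ) (c : ℕ → ℝ) (j : ℕ) :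
    (∑ k ∈ s, c k • ek k) j = if j ∈ s then c j else 0 := by
  rw [sum_coord]
  have : ∀ k, (c k • ek k) j = if j = k then c k else 0 := by
    intro k
    change c k * (ek k) j = _
    rw [ek_apply]; split_ifs <;> simp
  simp [this]

theorem mem_Esub_iff (d : ℕ → ℕ) (n : ℕ) (x : linf) :
    x ∈ Esub d n ↔ ∀ k, ¬ (1 ≤ k ∧ k ≤ d n) → x k = 0 := by
  constructor
  · intro hx k hk
    have : Esub d n ≤ LinearMap.ker (coordFn k : linf →ₗ[ℝ] ℝ) := by
      unfold Esub
      rw [Submodule.span_le]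
      rintro y ⟨j, hj1, hj2, rfl⟩
      change (ek j) k = 0
      rw [ek_apply, if_neg]
      rintro rfl
      exact hk ⟨hj1, hj2⟩
    exact this hx
  · intro h
    have hx : x = ∑ k ∈ Finset.Icc 1 (d n), x k • ek k := by
      apply linf_ext
      intro j
      rw [sum_ek_apply]
      split_ifs with hj
      · rfl
      · exact h j (by simpa using hj)
    rw [hx]
    refine Submodule.sum_mem _ fun k hk => Submodule.smul_mem _ _ (Submodule.subset_span ?_)
    rw [Finset.mem_Icc] at hk
    exact ⟨k, hk.1, hk.2, rfl⟩

namespace BDSetup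
variable (S : BDSetup)

theorem d_step (n : ℕ) (hn : 1 ≤ n) (hd : 1 ≤ S.d n) (hd1 : ∀ m, m = 1 → 1 ≤ S.d m) :
    S.d n < S.d (n + 1) := by
  rcases Nat.lt_or_ge n 2 with h | h
  · have : n = 1 := by omega
    subst this
    rw [S.hd1, S.hd2]; norm_num
  · have hs := (S.hφ n h).surjOn
    have hmem : ((1 : ℤ), 1, 1, (1 : ℤ), 1) ∈ {q : ℤ × ℕ × ℕ × ℤ × ℕ | (q.1 = 1 ∨ q.1 = -1) ∧
        (q.2.2.2.1 = 1 ∨ q.2.2.2.1 = -1) ∧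
        1 ≤ q.2.2.1 ∧ q.2.2.1 < n ∧ 1 ≤ q.2.1 ∧ q.2.1 ≤ S.d q.2.2.1 ∧
        1 ≤ q.2.2.2.2 ∧ q.2.2.2.2 ≤ S.d n} := by
      refine ⟨Or.inl rfl, Or.inl rfl, le_refl _, ?_, le_refl _, ?_, le_refl _, hd⟩
      · change 1 < n; omega
      · exact hd1 1 rfl
    obtain ⟨k, hk, -⟩ := hs hmem
    exact lt_of_lt_of_le hk.1 hk.2

theorem d_lt (n : ℕ) (hn : 1 ≤ n) : n ≤ S.d n ∧ S.d n < S.d (n + 1) := by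
  have h1 : ∀ m, m = 1 → 1 ≤ S.d m := by rintro m rfl; rw [S.hd1]
  induction n, hn using Nat.le_induction with
  | base => exact ⟨h1 1 rfl, S.d_step 1 le_rfl (h1 1 rfl) h1⟩
  | succ n hn ih =>
    have : n + 1 ≤ S.d (n + 1) := by omega
    exact ⟨this, S.d_step (n + 1) (by omega) (by omega) h1⟩

theorem d_mono {m n : ℕ} (hm : 1 ≤ m) (hmn : m ≤ n) : S.d m ≤ S.d n := by
  induction n, hmn using Nat.le_induction with
  | base => exact le_rfl
  | succ n hn ih => exact ih.trans (S.d_lt n (hm.trans hn)).2.le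

theorem pi_mem (m : ℕ) (x : linf) : S.pi m x ∈ Esub S.d m := by
  rw [mem_Esub_iff]
  intro k hk
  rw [S.hpi, if_neg hk]

theorem pi_eq_self {m : ℕ} {x : linf} (hx : x ∈ Esub S.d m) : S.pi m x = x := by
  rw [mem_Esub_iff] at hx
  apply linf_ext
  intro k
  rw [S.hpi]
  split_ifs with h
  · rfl
  · exact (hx k h).symm

theorem pi_congr {m : ℕ} {x y : linf} (h : ∀ k, 1 ≤ k → k ≤ S.d m → x k = y k) :
    S.pi m x = S.pi m y := by
  apply linf_ext
  intro k
  rw [S.hpi, S.hpi]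
  split_ifs with hk
  · exact h k hk.1 hk.2
  · rfl

theorem step_apply {n : ℕ} (hn : 1 ≤ n) {x : linf} (hx : x ∈ Esub S.d n) (k : ℕ)
    (hk : k ≤ S.d n ∨ S.d (n + 1) < k) : S.iMap n (n + 1) x k = x k := by
  rcases Nat.lt_or_ge n 2 with h | h
  · have : n = 1 := by omega
    subst this
    rw [S.hi12 x hx]
  · rw [S.histep n h x hx]
    change x k + (∑ k ∈ Finset.Ioc _ _, _ : linf) k = _
    rw [sum_ek_apply, if_neg, add_zero]
    rw [Finset.mem_Ioc]; omega

theorem step_mem {n : ℕ} (hn : 1 ≤ n) {x : linf} (hx : x ∈ Esub S.d n) :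
    S.iMap n (n + 1) x ∈ Esub S.d (n + 1) := by
  rw [mem_Esub_iff]
  intro k hk
  have hd := (S.d_lt n hn).2
  rw [S.step_apply hn hx k (by omega)]
  rw [mem_Esub_iff] at hx
  exact hx k (by omega)

theorem iMap_mem {m n : ℕ} (hm : 1 ≤ m) (hmn : m < n) {x : linf} (hx : x ∈ Esub S.d m) :
    S.iMap m n x ∈ Esub S.d n := by
  induction n, (Nat.succ_le_of_lt hmn) using Nat.le_induction with
  | base => exact S.step_mem hm hx
  | succ n hn ih =>
    rw [S.hicomp m n hm hn x hx]
    exact S.step_mem (by omega) (ih hn)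

theorem iMap_apply {m n : ℕ} (hm : 1 ≤ m) (hmn : m < n) {x : linf} (hx : x ∈ Esub S.d m)
    (k : ℕ) (hk : k ≤ S.d m) : S.iMap m n x k = x k := by
  induction n, (Nat.succ_le_of_lt hmn) using Nat.le_induction with
  | base => exact S.step_apply hm hx k (Or.inl hk)
  | succ n hn ih =>
    have hn' : m < n := hn
    rw [S.hicomp m n hm hn x hx, S.step_apply (by omega) (S.iMap_mem hm hn hx) k
      (Or.inl (hk.trans (S.d_mono hm hn'.le))), ih hn]

theorem iMap_comp {m n q : ℕ} (hm : 1 ≤ m) (hmn : m < n) (hnq : n < q) {x : linf}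
    (hx : x ∈ Esub S.d m) : S.iMap n q (S.iMap m n x) = S.iMap m q x := by
  induction q, (Nat.succ_le_of_lt hnq) using Nat.le_induction with
  | base => exact (S.hicomp m n hm hmn x hx).symm
  | succ q hq ih =>
    have hq' : n < q := hq
    rw [S.hicomp n q (by omega) hq _ (S.iMap_mem hm hmn hx), ih hq,
      S.hicomp m q hm (by omega) x hx]

theorem P_eq_iMap {m n : ℕ} (hm : 1 ≤ m) (hmn : m < n) (x : linf) (k : ℕ) (hk : k ≤ S.d n) :
    S.P m x k = S.iMap m n (S.pi m x) k := by
  refine tendsto_nhds_unique (S.hPlim m hm x k) ?_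
  refine tendsto_const_nhds.congr' ?_
  filter_upwards [Filter.eventually_gt_atTop n] with q hq
  rw [← S.iMap_comp hm hmn hq (S.pi_mem m x),
    S.iMap_apply (by omega) hq (S.iMap_mem hm hmn (S.pi_mem m x)) k hk]

theorem P_apply {m : ℕ} (hm : 1 ≤ m) (x : linf) (k : ℕ) (hk1 : 1 ≤ k) (hk : k ≤ S.d m) :
    S.P m x k = x k := by
  rw [S.P_eq_iMap hm (Nat.lt_succ_self m) x k (hk.trans (S.d_lt m hm).2.le),
    S.iMap_apply hm (Nat.lt_succ_self m) (S.pi_mem m x) k hk, S.hpi, if_pos ⟨hk1, hk⟩]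

theorem P_zero {m : ℕ} (hm : 1 ≤ m) (x : linf) : S.P m x 0 = 0 := by
  rw [S.P_eq_iMap hm (Nat.lt_succ_self m) x 0 (Nat.zero_le _),
    S.iMap_apply hm (Nat.lt_succ_self m) (S.pi_mem m x) 0 (Nat.zero_le _), S.hpi, if_neg (by omega)]

theorem P_congr {m : ℕ} (hm : 1 ≤ m) {x y : linf} (h : ∀ k, 1 ≤ k → k ≤ S.d m → x k = y k) :
    S.P m x = S.P m y := by
  apply linf_ext
  intro k
  refine tendsto_nhds_unique (S.hPlim m hm x k) ?_
  rw [S.pi_congr h]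
  exact S.hPlim m hm y k

theorem P_pi {m : ℕ} (hm : 1 ≤ m) (x : linf) : S.P m (S.pi m x) = S.P m x := by
  apply S.P_congr hm
  intro k h1 h2
  rw [S.hpi, if_pos ⟨h1, h2⟩]

theorem P_P_le {m n : ℕ} (hm : 1 ≤ m) (hmn : m ≤ n) (x : linf) :
    S.P m (S.P n x) = S.P m x := by
  apply S.P_congr hm
  intro k h1 h2
  exact S.P_apply (hm.trans hmn) x k h1 (h2.trans (S.d_mono hm hmn))

theorem P_P_ge {m n : ℕ} (hm : 1 ≤ m) (hmn : m ≤ n) (x : linf) :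
    S.P n (S.P m x) = S.P m x := by
  rcases hmn.eq_or_lt with rfl | hlt
  · exact S.P_P_le hm le_rfl x
  apply linf_ext
  intro k
  refine tendsto_nhds_unique (S.hPlim n (by omega) _ k) ?_
  refine (S.hPlim m hm x k).congr' ?_
  filter_upwards [Filter.eventually_gt_atTop n] with q hq
  have : S.pi n (S.P m x) = S.iMap m n (S.pi m x) := by
    rw [← S.pi_eq_self (S.iMap_mem hm hlt (S.pi_mem m x))]
    apply S.pi_congr
    intro j _ hj
    exact S.P_eq_iMap hm hlt x j hj
  rw [this, S.iMap_comp hm hlt hq (S.pi_mem m x)]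

theorem P_rec {p k : ℕ} (hp : 2 ≤ p) (hk1 : S.d p < k) (hk2 : k ≤ S.d (p + 1)) :
    ∃ (s t : ℝ) (i m j : ℕ), |s| = 1 ∧ |t| = 1 ∧ 1 ≤ m ∧ m < p ∧ 1 ≤ i ∧ i ≤ S.d m ∧
      1 ≤ j ∧ j ≤ S.d p ∧
      ∀ x : linf, S.P p x k = S.a * s * x i + S.b * t * (x j - S.P m x j) := by
  obtain ⟨h1, h2, h3, h4, h5, h6, h7, h8⟩ := (S.hφ p hp).mapsTo (show k ∈ {k | _ ∧ _} from ⟨hk1, hk2⟩)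
  refine ⟨((S.φ k).1 : ℝ), ((S.φ k).2.2.2.1 : ℝ), (S.φ k).2.1, (S.φ k).2.2.1, (S.φ k).2.2.2.2,
    ?_, ?_, h3, h4, h5, h6, h7, h8, ?_⟩
  · rcases h1 with h | h <;> rw [h] <;> simp
  · rcases h2 with h | h <;> rw [h] <;> simp
  intro x
  rw [S.P_eq_iMap (by omega) (Nat.lt_succ_self p) x k hk2, S.histep p hp _ (S.pi_mem p x)]
  change S.pi p x k + (∑ k ∈ Finset.Ioc _ _, _ : linf) k = _
  rw [sum_ek_apply, if_pos (by rw [Finset.mem_Ioc]; exact ⟨hk1, hk2⟩), S.hpi,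
    if_neg (by omega), zero_add]
  have e1 : S.pi p x (S.φ k).2.1 = x (S.φ k).2.1 := by
    rw [S.hpi, if_pos ⟨h5, h6.trans (S.d_mono h3 h4.le)⟩]
  have e2 : S.pi p x (S.φ k).2.2.2.2 = x (S.φ k).2.2.2.2 := by
    rw [S.hpi, if_pos ⟨h7, h8⟩]
  have e3 : S.pi (S.φ k).2.2.1 (S.pi p x) = S.pi (S.φ k).2.2.1 x := by
    apply S.pi_congr
    intro r hr1 hr2
    rw [S.hpi, if_pos ⟨hr1, hr2.trans (S.d_mono h3 h4.le)⟩]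
  rw [e1, e3, S.P_eq_iMap h3 h4 x _ h8, ← e2]
  rfl

theorem sum_single_le {s : Finset ℕ} {f : ℕ → ℝ} {D : ℝ} (hD : 0 ≤ D)
    (hb : ∀ l ∈ s, |f l| ≤ D) (hu : ∀ l ∈ s, ∀ l' ∈ s, f l ≠ 0 → f l' ≠ 0 → l = l') :
    |∑ l ∈ s, f l| ≤ D := by
  by_cases h : ∃ l ∈ s, f l ≠ 0
  · obtain ⟨l, hl, hfl⟩ := h
    rw [Finset.sum_eq_single_of_mem l hl]
    · exact hb l hl
    · intro l' hl' hne
      by_contra h0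
      exact hne (hu l' hl' l hl h0 hfl)
  · push Not at h
    rw [Finset.sum_eq_zero h]
    simpa using hD

theorem exists_level {k : ℕ} (hk : S.d 2 < k) : ∃ p, 2 ≤ p ∧ S.d p < k ∧ k ≤ S.d (p + 1) := by
  have hex : ∃ n, 2 ≤ n ∧ k ≤ S.d n :=
    ⟨max 2 k, le_max_left _ _, (le_max_right 2 k).trans (S.d_lt _ (by omega)).1⟩
  have h1 := Nat.find_spec hex
  have h2 : ¬ (Nat.find hex = 2) := by
    intro h; rw [h] at h1; omega
  have h3 := Nat.find_min hex (m := Nat.find hex - 1) (by omega)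
  refine ⟨Nat.find hex - 1, by omega, ?_, ?_⟩
  · by_contra hc
    exact h3 ⟨by omega, by omega⟩
  · rw [show Nat.find hex - 1 + 1 = Nat.find hex by omega]
    exact h1.2

theorem block_est (n : ℕ → ℕ) (hn : StrictMono n) (hn0 : 2 ≤ n 0) (x : ℕ → linf) (D : ℝ)
    (hD : 0 ≤ D)
    (hx0 : ∀ l, S.P (n l) (x l) = 0) (hx1 : ∀ l, S.P (n (l + 1)) (x l) = x l)
    (hxD : ∀ l m, ‖x l - S.P m (x l)‖ ≤ D)
    (g : ℕ → ℝ) (hg0 : ∀ N, 0 ≤ g N)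
    (hg : ∀ s t, 1 ≤ s + t → S.a * g s + S.b * g t + (D + S.b * D) ≤ g (s + t)) (k : ℕ) :
    1 ≤ k → ∀ u v, |∑ l ∈ Finset.Ico u v, x l k| ≤ g (v - u) := by
  have hapos : 0 < S.a := S.hb.trans S.hba
  have hn2 : ∀ l, 2 ≤ n l := fun l => hn0.trans (hn.monotone (Nat.zero_le l))
  -- vanishing coordinates
  have hvan : ∀ l j, 1 ≤ j → j ≤ S.d (n l) → x l j = 0 := by
    intro l j h1 h2
    rw [← S.P_apply (by have := hn2 l; omega) (x l) j h1 h2, hx0]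
    rfl
  have hP0 : ∀ l m, 1 ≤ m → m ≤ n l → S.P m (x l) = 0 := by
    intro l m h1 h2
    rw [← S.P_P_le h1 h2, hx0, map_zero]
  have hP1 : ∀ l m, n (l + 1) ≤ m → S.P m (x l) = x l := by
    intro l m h2
    rw [← hx1 l]
    exact S.P_P_ge (by have := hn2 (l + 1); omega) h2 _
  have hDc : ∀ l m j, |x l j - S.P m (x l) j| ≤ D := fun l m j =>
    (linf_coord_le (x l - S.P m (x l)) j).trans (hxD l m)
  have huniq : ∀ p l l', n l ≤ p → p < n (l + 1) → n l' ≤ p → p < n (l' + 1) → l = l' := by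
    intro p l l' h1 h2 h3 h4
    have h5 := hn.lt_iff_lt.1 (h1.trans_lt h4)
    have h6 := hn.lt_iff_lt.1 (h3.trans_lt h2)
    omega
  induction k using Nat.strong_induction_on with
  | _ k ih =>
  intro hk u v
  by_cases huv : v ≤ u
  · rw [Finset.Ico_eq_empty_of_le huv]; simpa using hg0 _
  push Not at huv
  by_cases hk2 : k ≤ S.d 2
  · rw [Finset.sum_eq_zero]
    · simpa using hg0 _
    · intro l _
      exact hvan l k hk (hk2.trans (S.d_mono (by norm_num) (hn2 l)))
  push Not at hk2
  obtain ⟨p, hp, hp1, hp2⟩ := S.exists_level hk2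
  obtain ⟨s, t, i, m, j, hs, ht, hm1, hmp, hi1, hi2, hj1, hj2, hrec⟩ := S.P_rec hp hp1 hp2
  have hik : i < k := (hi2.trans (S.d_mono hm1 hmp.le)).trans_lt hp1
  have hjk : j < k := hj2.trans_lt hp1
  -- the splitting point
  have hex : ∃ l, m ≤ n l := ⟨m, hn.le_apply⟩
  obtain ⟨w, huw, hwv, hw1, hw2⟩ : ∃ w, u ≤ w ∧ w ≤ v ∧ (∀ l, u ≤ l → l < w → n l < m) ∧
      (∀ l, w ≤ l → l < v → m ≤ n l) := by
    refine ⟨max u (min v (Nat.find hex)), by omega, by omega, ?_, ?_⟩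
    · intro l h1 h2
      have := Nat.find_min hex (m := l) (by omega)
      omega
    · intro l h1 h2
      exact (Nat.find_spec hex).trans (hn.monotone (by omega))
  have hT1 : |∑ l ∈ Finset.Ico u v, (x l k - S.P p (x l) k)| ≤ D := by
    apply sum_single_le hD (fun l _ => hDc l p k)
    have key : ∀ l, x l k - S.P p (x l) k ≠ 0 → n l ≤ p ∧ p < n (l + 1) := by
      intro l hl
      constructor
      · by_contra hc
        apply hl
        rw [hP0 l p (by omega) (by omega), hvan l k hk (hp2.trans (S.d_mono (by omega) (by omega)))]
        exact sub_zero _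
      · by_contra hc
        apply hl
        rw [hP1 l p (by omega)]
        exact _root_.sub_self _
    intro l _ l' _ h h'
    exact huniq p l l' (key l h).1 (key l h).2 (key l' h').1 (key l' h').2
  have hT2 : ∑ l ∈ Finset.Ico u v, x l i = ∑ l ∈ Finset.Ico u w, x l i := by
    rw [← Finset.sum_Ico_consecutive _ huw hwv, Finset.sum_eq_zero (s := Finset.Ico w v), add_zero]
    intro l hl
    rw [Finset.mem_Ico] at hl
    exact hvan l i hi1 (hi2.trans (S.d_mono hm1 (hw2 l hl.1 hl.2)))
  have hT3 : |∑ l ∈ Finset.Ico u v, (x l j - S.P m (x l) j)| ≤ D + g (v - w) := by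
    rw [← Finset.sum_Ico_consecutive _ huw hwv]
    refine (abs_add_le _ _).trans (add_le_add ?_ ?_)
    · apply sum_single_le hD (fun l _ => hDc l m j)
      have key : ∀ l ∈ Finset.Ico u w, x l j - S.P m (x l) j ≠ 0 → n l ≤ m ∧ m < n (l + 1) := by
        intro l hl h0
        rw [Finset.mem_Ico] at hl
        refine ⟨(hw1 l hl.1 hl.2).le, ?_⟩
        by_contra hc
        apply h0
        rw [hP1 l m (by omega)]
        exact _root_.sub_self _
      intro l hl l' hl' h h'
      exact huniq m l l' (key l hl h).1 (key l hl h).2 (key l' hl' h').1 (key l' hl' h').2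
    · rw [Finset.sum_congr rfl (g := fun l => x l j)]
      · exact ih j hjk hj1 w v
      · intro l hl
        rw [Finset.mem_Ico] at hl
        rw [hP0 l m hm1 (hw2 l hl.1 hl.2)]
        exact sub_zero _
  have hT2' := ih i hik hi1 u w
  have hsum : ∑ l ∈ Finset.Ico u v, x l k = ∑ l ∈ Finset.Ico u v, (x l k - S.P p (x l) k) +
      (S.a * s * ∑ l ∈ Finset.Ico u w, x l i +
        S.b * t * ∑ l ∈ Finset.Ico u v, (x l j - S.P m (x l) j)) := by
    rw [← hT2, Finset.mul_sum, Finset.mul_sum, ← Finset.sum_add_distrib, ← Finset.sum_add_distrib]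
    apply Finset.sum_congr rfl
    intro l _
    rw [← hrec]; ring
  have hfin := hg (w - u) (v - w) (by omega)
  rw [show w - u + (v - w) = v - u by omega] at hfin
  rw [hsum]
  refine (abs_add_le _ _).trans ?_
  have h1 : |S.a * s * ∑ l ∈ Finset.Ico u w, x l i| ≤ S.a * g (w - u) := by
    rw [abs_mul, abs_mul, hs, mul_one, abs_of_pos hapos]
    exact mul_le_mul_of_nonneg_left hT2' hapos.le
  have h2 : |S.b * t * ∑ l ∈ Finset.Ico u v, (x l j - S.P m (x l) j)| ≤
      S.b * (D + g (v - w)) := by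
    rw [abs_mul, abs_mul, ht, mul_one, abs_of_pos S.hb]
    exact mul_le_mul_of_nonneg_left hT3 S.hb.le
  have h3 := abs_add_le (S.a * s * ∑ l ∈ Finset.Ico u w, x l i)
    (S.b * t * ∑ l ∈ Finset.Ico u v, (x l j - S.P m (x l) j))
  linarith

/-- The sublinear growth function. -/
theorem exists_growth (C : ℝ) (hC : 0 ≤ C) : ∃ g : ℕ → ℝ, (∀ N, 0 ≤ g N) ∧
    (∀ s t, 1 ≤ s + t → S.a * g s + S.b * g t + C ≤ g (s + t)) ∧
    ∀ ε > 0, ∃ N : ℕ, g N < ε * N := by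
  have hapos : 0 < S.a := S.hb.trans S.hba
  obtain ⟨θ, hθ0, hθ1, hρ⟩ : ∃ θ : ℝ, 0 < θ ∧ θ < 1 ∧ S.a * (2 : ℝ) ^ (1 - θ) < 1 := by
    have hc : Continuous fun θ : ℝ => S.a * (2 : ℝ) ^ (1 - θ) := by
      have : Continuous fun θ : ℝ => (2 : ℝ) ^ (1 - θ) :=
        Continuous.rpow continuous_const (by fun_prop) (fun _ => Or.inl (by norm_num))
      fun_prop
    have h1 : S.a * (2 : ℝ) ^ (1 - (1 : ℝ)) < 1 := by simpa using S.ha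
    have hev : ∀ᶠ θ in nhds (1 : ℝ), S.a * (2 : ℝ) ^ (1 - θ) < 1 :=
      hc.continuousAt.eventually (gt_mem_nhds h1)
    have hev2 : ∀ᶠ θ in nhdsWithin (1 : ℝ) (Set.Iio 1), S.a * (2 : ℝ) ^ (1 - θ) < 1 ∧ 0 < θ :=
      nhdsWithin_le_nhds (hev.and (lt_mem_nhds one_pos))
    obtain ⟨θ, h, h'⟩ := (hev2.and self_mem_nhdsWithin).exists
    exact ⟨θ, h.2, h', h.1⟩
  set ρ := S.a * (2 : ℝ) ^ (1 - θ) with hρdef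
  have hA : 0 ≤ C / (1 - ρ) := div_nonneg hC (by linarith)
  refine ⟨fun N => C / (1 - ρ) * (N : ℝ) ^ θ, fun N => by positivity, ?_, ?_⟩
  · intro s t hst
    have hs0 : (0 : ℝ) ≤ (s : ℝ) := by positivity
    have ht0 : (0 : ℝ) ≤ (t : ℝ) := by positivity
    have hconc := (Real.concaveOn_rpow hθ0.le hθ1.le).2 (show (s : ℝ) ∈ Set.Ici 0 from hs0)
      (show (t : ℝ) ∈ Set.Ici 0 from ht0) (by norm_num : (0 : ℝ) ≤ 1 / 2)
      (by norm_num : (0 : ℝ) ≤ 1 / 2) (by norm_num)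
    simp only [_root_.smul_eq_mul] at hconc
    rw [← mul_add, ← mul_add, Real.mul_rpow (by norm_num) (by positivity)] at hconc
    have h2 : (2 : ℝ) * (1 / 2) ^ θ = 2 ^ (1 - θ) := by
      rw [Real.rpow_sub (by norm_num), Real.rpow_one, one_div, Real.inv_rpow (by norm_num)]
      rfl
    have h3 : (s : ℝ) ^ θ + (t : ℝ) ^ θ ≤ 2 ^ (1 - θ) * ((s : ℝ) + t) ^ θ := by
      rw [← h2]; linarith
    have h4 : S.a * (s : ℝ) ^ θ + S.b * (t : ℝ) ^ θ ≤ ρ * ((s : ℝ) + t) ^ θ := by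
      have h5 : S.b * (t : ℝ) ^ θ ≤ S.a * (t : ℝ) ^ θ :=
        mul_le_mul_of_nonneg_right S.hba.le (by positivity)
      have h6 := mul_le_mul_of_nonneg_left h3 hapos.le
      rw [hρdef]; linarith
    have h7 : (1 : ℝ) ≤ ((s : ℝ) + t) ^ θ := by
      apply Real.one_le_rpow _ hθ0.le
      exact_mod_cast hst
    have h8 : C / (1 - ρ) * (1 - ρ) = C := div_mul_cancel₀ _ (by linarith)
    have h9 := mul_le_mul_of_nonneg_left h4 hA
    have h10 := mul_le_mul_of_nonneg_left h7 hC
    push_cast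
    generalize hG : ((s : ℝ) + t) ^ θ = G at *
    have h11 : C / (1 - ρ) * G = C / (1 - ρ) * (ρ * G) + C * G := by
      nth_rewrite 3 [← h8]; ring
    rw [h11]
    linarith
  · intro ε hε
    have ht : Filter.Tendsto (fun N : ℕ => ε * (N : ℝ) ^ (1 - θ)) Filter.atTop Filter.atTop :=
      ((tendsto_rpow_atTop (by linarith : 0 < 1 - θ)).comp
        tendsto_natCast_atTop_atTop).const_mul_atTop hε
    obtain ⟨N, hN, hN1⟩ := ((ht.eventually_gt_atTop (C / (1 - ρ))).and
      (Filter.eventually_ge_atTop 1)).exists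
    refine ⟨N, ?_⟩
    have hNpos : (0 : ℝ) < N := by exact_mod_cast hN1
    have : (N : ℝ) = (N : ℝ) ^ (1 - θ) * (N : ℝ) ^ θ := by
      rw [← Real.rpow_add hNpos]; simp
    calc C / (1 - ρ) * (N : ℝ) ^ θ < ε * (N : ℝ) ^ (1 - θ) * (N : ℝ) ^ θ :=
          mul_lt_mul_of_pos_right hN (by positivity)
      _ = ε * N := by rw [mul_assoc, ← this]

theorem P_mem {m : ℕ} (hm : 1 ≤ m) (x : linf) : S.P m x ∈ Xsub S := by
  apply Submodule.le_topologicalClosure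
  apply Submodule.subset_span
  simp only [Set.mem_iUnion]
  exact ⟨m, hm, S.pi m x, S.pi_mem m x, S.P_pi hm x⟩

theorem span_fix {y : linf}
    (hy : y ∈ Submodule.span ℝ (⋃ m ∈ {m : ℕ | 1 ≤ m}, (S.P m) '' (Esub S.d m))) :
    ∃ n, 1 ≤ n ∧ S.P n y = y := by
  induction hy using Submodule.span_induction with
  | mem x hx =>
    simp only [Set.mem_iUnion] at hx
    obtain ⟨m, hm, z, -, rfl⟩ := hx
    exact ⟨m, hm, S.P_P_le hm le_rfl z⟩
  | zero => exact ⟨1, le_rfl, map_zero _⟩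
  | add x y _ _ hx hy =>
    obtain ⟨n, hn, hx⟩ := hx
    obtain ⟨m, hm, hy⟩ := hy
    refine ⟨max n m, by omega, ?_⟩
    rw [map_add, ← hx, ← hy, S.P_P_ge hn (le_max_left _ _), S.P_P_ge hm (le_max_right _ _)]
  | smul c x _ hx =>
    obtain ⟨n, hn, hx⟩ := hx
    exact ⟨n, hn, by rw [map_smul, hx]⟩

/-- `P m` as a map of `X`. -/
noncomputable def PX (m : ℕ) (hm : 1 ≤ m) : Xsub S →L[ℝ] Xsub S :=
  ((S.P m).comp (Xsub S).subtypeL).codRestrict (Xsub S) (fun x => S.P_mem hm x)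

theorem comp_PX_mem (f : Xsub S →L[ℝ] ℝ) (m : ℕ) (hm : 1 ≤ m) :
    f.comp (S.PX m hm) ∈ Submodule.span ℝ {f : (Xsub S) →L[ℝ] ℝ | ∃ k : ℕ, 1 ≤ k ∧ f = Qe S k} := by
  have : f.comp (S.PX m hm) =
      ∑ k ∈ Finset.Icc 1 (S.d m), f ⟨S.P m (ek k), S.P_mem hm _⟩ • Qe S k := by
    ext x
    have hx : S.PX m hm x = ∑ k ∈ Finset.Icc 1 (S.d m),
        ((x : linf) k) • (⟨S.P m (ek k), S.P_mem hm _⟩ : Xsub S) := by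
      apply Subtype.ext
      rw [Submodule.coe_sum]
      change S.P m (x : linf) = ∑ k ∈ Finset.Icc 1 (S.d m), ((x : linf) k) • S.P m (ek k)
      simp only [← map_smul]
      rw [← map_sum]
      apply S.P_congr hm
      intro k h1 h2
      rw [sum_ek_apply, if_pos (Finset.mem_Icc.2 ⟨h1, h2⟩)]
    rw [ContinuousLinearMap.comp_apply, hx, map_sum, _root_.sum_apply]
    apply Finset.sum_congr rfl
    intro k _
    rw [map_smul]
    exact mul_comm _ _
  rw [this]
  refine Submodule.sum_mem _ fun k hk => Submodule.smul_mem _ _ (Submodule.subset_span ?_)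
  exact ⟨k, (Finset.mem_Icc.1 hk).1, rfl⟩

theorem exists_block (f : Xsub S →L[ℝ] ℝ) (δ : ℝ) (hδ : 0 < δ)
    (hf : ∀ m (hm : 1 ≤ m), δ ≤ ‖f - f.comp (S.PX m hm)‖) (m : ℕ) (hm : 1 ≤ m) :
    ∃ n, m < n ∧ ∃ x : Xsub S, S.P m x = 0 ∧ S.P n x = x ∧ ‖x‖ ≤ 1 + S.lam ∧ δ / 2 ≤ f x := by
  have hl := S.hlam
  obtain ⟨y, hyspan, hy⟩ : ∃ y : Xsub S,
      (y : linf) ∈ Submodule.span ℝ (⋃ m ∈ {m : ℕ | 1 ≤ m}, (S.P m) '' (Esub S.d m)) ∧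
      δ / 2 * ‖y‖ < ‖(f - f.comp (S.PX m hm)) y‖ := by
    by_contra! hcon
    have hle : ‖f - f.comp (S.PX m hm)‖ ≤ δ / 2 := by
      apply ContinuousLinearMap.opNorm_le_bound _ (by positivity)
      rintro ⟨y, hy⟩
      have hcl : IsClosed {z : Xsub S | ‖(f - f.comp (S.PX m hm)) z‖ ≤ δ / 2 * ‖z‖} :=
        isClosed_le (f - f.comp (S.PX m hm)).continuous.norm (continuous_const.mul continuous_norm)
      have hy' : y ∈ closure ((Submodule.span ℝ
        (⋃ m ∈ {m : ℕ | 1 ≤ m}, (S.P m) '' (Esub S.d m)) : Submodule ℝ linf) : Set linf) := hy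
      obtain ⟨z, hz, hzl⟩ := mem_closure_iff_seq_limit.1 hy'
      have hzX : ∀ n, z n ∈ Xsub S := fun n => Submodule.le_topologicalClosure _ (hz n)
      have hlim : Filter.Tendsto (fun n => (⟨z n, hzX n⟩ : Xsub S)) Filter.atTop
          (nhds ⟨y, hy⟩) := tendsto_subtype_rng.2 hzl
      exact hcl.mem_of_tendsto hlim (Filter.Eventually.of_forall fun n => hcon ⟨z n, hzX n⟩ (hz n))
    have := hf m hm
    linarith
  obtain ⟨n0, hn0, hfix⟩ := S.span_fix hyspan
  have hynorm : 0 < ‖y‖ := by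
    rcases (norm_nonneg y).eq_or_lt with h | h
    · rw [norm_eq_zero.1 h.symm] at hy
      simp at hy
    · exact h
  set r := f y - f (S.PX m hm y) with hr
  have hy2 : δ / 2 * ‖y‖ < |r| := hy
  obtain ⟨σ, hσ, hσr⟩ : ∃ σ : ℝ, |σ| = 1 ∧ σ * r = |r| := by
    rcases le_total 0 r with h | h
    · exact ⟨1, by simp, by rw [abs_of_nonneg h, one_mul]⟩
    · exact ⟨-1, by simp, by rw [abs_of_nonpos h]; ring⟩
  have hPy : S.P m ((y : linf) - S.P m y) = 0 := by
    rw [map_sub, S.P_P_le hm le_rfl, _root_.sub_self]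
  refine ⟨max n0 (m + 1), by omega, (σ * ‖y‖⁻¹) • (y - S.PX m hm y), ?_, ?_, ?_, ?_⟩
  · change S.P m ((σ * ‖y‖⁻¹) • ((y : linf) - S.P m y)) = 0
    rw [map_smul, hPy, smul_zero]
  · change S.P _ ((σ * ‖y‖⁻¹) • ((y : linf) - S.P m y)) = (σ * ‖y‖⁻¹) • ((y : linf) - S.P m y)
    rw [map_smul, map_sub, S.P_P_ge hm (by omega)]
    congr 2
    rw [← hfix, S.P_P_ge hn0 (by omega)]
  · rw [norm_smul, norm_mul, Real.norm_eq_abs σ, hσ, one_mul, norm_inv, norm_norm]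
    have h1 : ‖y - S.PX m hm y‖ ≤ ‖y‖ + S.lam * ‖y‖ := by
      refine (norm_sub_le _ _).trans (add_le_add le_rfl ?_)
      exact (S.P m).le_of_opNorm_le (S.hPnorm m) (y : linf)
    rw [inv_mul_le_iff₀ hynorm]
    linarith
  · rw [map_smul, map_sub, ← hr, _root_.smul_eq_mul, mul_assoc, mul_left_comm, hσr,
      ← div_eq_inv_mul, le_div_iff₀ hynorm]
    exact hy2.le

theorem dense_span (f : Xsub S →L[ℝ] ℝ) :
    f ∈ closure ((Submodule.span ℝ {f : (Xsub S) →L[ℝ] ℝ | ∃ k : ℕ, 1 ≤ k ∧ f = Qe S k} :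
        Submodule ℝ ((Xsub S) →L[ℝ] ℝ)) : Set ((Xsub S) →L[ℝ] ℝ)) := by
  by_contra hcon
  obtain ⟨δ, hδ, hfar⟩ : ∃ δ > 0, ∀ h ∈ (Submodule.span ℝ
      {f : (Xsub S) →L[ℝ] ℝ | ∃ k : ℕ, 1 ≤ k ∧ f = Qe S k}), δ ≤ dist f h := by
    by_contra! h
    exact hcon (Metric.mem_closure_iff.2 h)
  have hf : ∀ m (hm : 1 ≤ m), δ ≤ ‖f - f.comp (S.PX m hm)‖ := by
    intro m hm
    have := hfar _ (S.comp_PX_mem f m hm)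
    exact this.trans_eq (dist_eq_norm f (f.comp (S.PX m hm)))
  have hb := S.exists_block f δ hδ hf
  have hb' : ∀ m : ℕ, ∃ n : ℕ, ∃ x : Xsub S, 1 ≤ m →
      m < n ∧ S.P m x = 0 ∧ S.P n x = x ∧ ‖x‖ ≤ 1 + S.lam ∧ δ / 2 ≤ f x := by
    intro m
    by_cases hm : 1 ≤ m
    · obtain ⟨n, h1, x, h2⟩ := hb m hm
      exact ⟨n, x, fun _ => ⟨h1, h2⟩⟩
    · exact ⟨0, 0, fun h => absurd h hm⟩
  choose nx xx hnx using hb'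
  let n : ℕ → ℕ := fun l => nx^[l] 2
  have hns : ∀ l, n (l + 1) = nx (n l) := fun l => Function.iterate_succ_apply' nx l 2
  have hn2 : ∀ l, 2 ≤ n l := by
    intro l
    induction l with
    | zero => exact le_rfl
    | succ l ih =>
      rw [hns]
      have := (hnx (n l) (by omega)).1
      omega
  have hspec := fun l => hnx (n l) (by have := hn2 l; omega)
  have hmono : StrictMono n := strictMono_nat_of_lt_succ fun l => by
    rw [hns]; exact (hspec l).1
  have hl := S.hlam
  set D := (1 + S.lam) * (1 + S.lam) with hDdef
  have hD : 0 ≤ D := by positivity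
  obtain ⟨g, hg0, hg, hgs⟩ := S.exists_growth (D + S.b * D) (add_nonneg hD (mul_nonneg S.hb.le hD))
  have hest := S.block_est n hmono (hn2 0) (fun l => (xx (n l) : linf)) D hD
    (fun l => (hspec l).2.1) (fun l => by rw [hns]; exact (hspec l).2.2.1)
    (by
      intro l m
      refine (norm_sub_le _ _).trans ?_
      have h1 := (S.P m).le_of_opNorm_le (S.hPnorm m) (xx (n l) : linf)
      have h2 : ‖(xx (n l) : linf)‖ ≤ 1 + S.lam := (hspec l).2.2.2.1
      have h3 : S.lam * ‖(xx (n l) : linf)‖ ≤ S.lam * (1 + S.lam) :=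
        mul_le_mul_of_nonneg_left h2 (by linarith)
      rw [hDdef]; linarith) g hg0 hg
  obtain ⟨N, hN⟩ := hgs (δ / 2 / (‖f‖ + 1)) (by positivity)
  have hnorm : ‖∑ l ∈ Finset.Ico 0 N, xx (n l)‖ ≤ g N := by
    change ‖((∑ l ∈ Finset.Ico 0 N, xx (n l) : Xsub S) : linf)‖ ≤ g N
    rw [Submodule.coe_sum]
    apply lp.norm_le_of_forall_le (hg0 N)
    intro k
    rw [sum_coord, Real.norm_eq_abs]
    rcases Nat.eq_zero_or_pos k with rfl | hk
    · rw [Finset.sum_eq_zero]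
      · simpa using hg0 N
      · intro l _
        rw [← (hspec l).2.2.1]
        exact S.P_zero (by have := (hspec l).1; omega) _
    · simpa using hest k hk 0 N
  have h1 : δ / 2 * N ≤ f (∑ l ∈ Finset.Ico 0 N, xx (n l)) := by
    rw [map_sum]
    have := Finset.card_nsmul_le_sum (Finset.Ico 0 N) (fun l => f (xx (n l))) (δ / 2)
      (fun l _ => (hspec l).2.2.2.2)
    rw [Nat.card_Ico, _root_.nsmul_eq_mul] at this
    simpa [mul_comm] using this
  have h2 : f (∑ l ∈ Finset.Ico 0 N, xx (n l)) ≤ (‖f‖ + 1) * g N := by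
    refine (le_abs_self _).trans ((f.le_opNorm _).trans ?_)
    exact mul_le_mul (by linarith) hnorm (norm_nonneg _) (by positivity)
  have h3 : (‖f‖ + 1) * g N < δ / 2 * N := by
    have h4 : 0 < ‖f‖ + 1 := by positivity
    calc (‖f‖ + 1) * g N < (‖f‖ + 1) * (δ / 2 / (‖f‖ + 1) * N) := mul_lt_mul_of_pos_left hN h4
      _ = δ / 2 * N := by field_simp
  linarith

theorem Qe_norm (k : ℕ) : ‖Qe S k‖ ≤ 1 := by
  apply ContinuousLinearMap.opNorm_le_bound _ zero_le_one
  intro x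
  rw [one_mul]
  exact linf_coord_le (x : linf) k

theorem upper (c : ℕ → ℝ) (s : Finset ℕ) : ‖∑ k ∈ s, c k • Qe S k‖ ≤ ∑ k ∈ s, |c k| := by
  apply ContinuousLinearMap.opNorm_le_bound _ (Finset.sum_nonneg fun k _ => abs_nonneg _)
  intro x
  rw [_root_.sum_apply, Finset.sum_mul]
  refine (Finset.abs_sum_le_sum_abs _ _).trans (Finset.sum_le_sum fun k _ => ?_)
  change |c k * (x : linf) k| ≤ _
  rw [abs_mul]
  exact mul_le_mul_of_nonneg_left (linf_coord_le (x : linf) k) (abs_nonneg _)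

theorem lower (c : ℕ → ℝ) (s : Finset ℕ) (hs : ∀ k ∈ s, 1 ≤ k) :
    S.lam⁻¹ * ∑ k ∈ s, |c k| ≤ ‖∑ k ∈ s, c k • Qe S k‖ := by
  have hl := S.hlam
  have hl0 : 0 < S.lam := by linarith
  set m := s.sup id + 1 with hmdef
  have hm : 1 ≤ m := by omega
  have hsm : ∀ k ∈ s, k ≤ S.d m := by
    intro k hk
    have h1 : k ≤ s.sup id := Finset.le_sup (f := id) hk
    have h2 := (S.d_lt m hm).1
    omega
  let x : linf := ∑ k ∈ s, (SignType.sign (c k) : ℝ) • ek k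
  have hx : ‖x‖ ≤ 1 := by
    apply lp.norm_le_of_forall_le zero_le_one
    intro k
    rw [sum_ek_apply]
    split_ifs
    · rcases lt_trichotomy (c k) 0 with h | h | h <;> simp [h]
    · simp
  have hPx : ‖(⟨S.P m x, S.P_mem hm x⟩ : Xsub S)‖ ≤ S.lam := by
    have := (S.P m).le_of_opNorm_le (S.hPnorm m) x
    exact this.trans (mul_le_of_le_one_right hl0.le hx)
  have hval : (∑ k ∈ s, c k • Qe S k) ⟨S.P m x, S.P_mem hm x⟩ = ∑ k ∈ s, |c k| := by
    rw [_root_.sum_apply]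
    apply Finset.sum_congr rfl
    intro k hk
    change c k * S.P m x k = _
    rw [S.P_apply hm x k (hs k hk) (hsm k hk), sum_ek_apply, if_pos hk, self_mul_sign]
  rw [inv_mul_le_iff₀ hl0, ← hval, mul_comm]
  have hop := ContinuousLinearMap.le_opNorm (∑ k ∈ s, c k • Qe S k) ⟨S.P m x, S.P_mem hm x⟩
  refine (le_abs_self _).trans (hop.trans ?_)
  exact mul_le_mul_of_nonneg_left hPx (ContinuousLinearMap.opNorm_nonneg _)

end BDSetup

/-- Proposition 2.1: `(Q e_n^*)` is equivalent to the unit vector basis of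
`ℓ₁` and its closed linear span is all of `X^*`. -/
theorem stmt_12 (S : BDSetup) :
    (∀ (c : ℕ → ℝ) (s : Finset ℕ), (∀ k ∈ s, 1 ≤ k) →
      S.lam⁻¹ * ∑ k ∈ s, |c k| ≤ ‖∑ k ∈ s, c k • Qe S k‖ ∧
        ‖∑ k ∈ s, c k • Qe S k‖ ≤ ∑ k ∈ s, |c k|) ∧
    closure ((Submodule.span ℝ {f : (Xsub S) →L[ℝ] ℝ | ∃ k : ℕ, 1 ≤ k ∧ f = Qe S k} :
        Submodule ℝ ((Xsub S) →L[ℝ] ℝ)) : Set ((Xsub S) →L[ℝ] ℝ)) = Set.univ := by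
  exact ⟨fun c s hs => ⟨S.lower c s hs, S.upper c s⟩, Set.eq_univ_of_forall S.dense_span⟩
end
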